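/- Let G be a finite non-abelian group. If the average degree of the non-linear irreducible complex characters of G is strictly less than 29/8, then G is solvable. -/

import Mathlib

open scoped BigOperators Classical
open CategoryTheory

/-- `χ : G → ℂ` is the character of an irreducible complex representation of `G`. -/
def IsIrrChar (G : Type) [Group G] (χ : G → ℂ) : Prop :=
  ∃ V : FDRep ℂ G, Simple V ∧ ∀ g, V.character g = χ g

/-- A character is rational-valued if all its values lie in `ℚ`. -/
def RatValued {G : Type} (χ : G → ℂ) : Prop := ∀ g, ∃ q : ℚ, χ g = (q : ℂ)

/-- A character is real-valued if all its values lie in `ℝ`. -/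
def RealValued {G : Type} (χ : G → ℂ) : Prop := ∀ g, (χ g).im = 0

/-- A character has even degree. -/
def EvenDeg {G : Type} [One G] (χ : G → ℂ) : Prop := ∃ k : ℕ, χ 1 = ((2 * k : ℕ) : ℂ)

/-- The kernel of the character `χ` contains the subgroup `N`. -/
def KerContains {G : Type} [Group G] (χ : G → ℂ) (N : Subgroup G) : Prop :=
  ∀ n ∈ N, χ n = χ 1

/-- The induced class function `f ^ G` of `f : N → ℂ`. -/
noncomputable def Ind {G : Type} [Group G] [Fintype G] (N : Subgroup G) (f : ↥N → ℂ) : G → ℂ :=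
  fun g => (Nat.card N : ℂ)⁻¹ *
    ∑ x : G, if h : x⁻¹ * g * x ∈ N then f ⟨x⁻¹ * g * x, h⟩ else 0

/-- The standard inner product of class functions on a finite group. -/
noncomputable def cInner {G : Type} [Fintype G] (f g : G → ℂ) : ℂ :=
  (Fintype.card G : ℂ)⁻¹ * ∑ x : G, f x * (starRingEnd ℂ) (g x)

/-- `χ` is an irreducible constituent of the class function `f`. -/
def IsConstituent {G : Type} [Group G] [Fintype G] (f χ : G → ℂ) : Prop :=
  IsIrrChar G χ ∧ cInner f χ ≠ 0

lemma lam_congr {G : Type} [Group G] {N : Subgroup G} (lam : ↥N → ℂ)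
    {x y : G} (px : x ∈ N) (py : y ∈ N) (h : x = y) : lam ⟨x, px⟩ = lam ⟨y, py⟩ := by
  subst h; rfl

/-- The inertia group `I_G(λ)` of a character `λ` of a normal subgroup `N` of `G`. -/
def inertia {G : Type} [Group G] (N : Subgroup G) [hN : N.Normal] (lam : ↥N → ℂ) :
    Subgroup G where
  carrier := {g | ∀ n : ↥N, lam ⟨g * n * g⁻¹, hN.conj_mem n n.2 g⟩ = lam n}
  one_mem' := by
    intro n
    exact lam_congr lam _ n.2 (by group)
  mul_mem' := by
    intro a b ha hb n
    have h1 := ha ⟨(b : G) * n * b⁻¹, hN.conj_mem _ n.2 b⟩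
    calc lam ⟨(a * b) * n * (a * b)⁻¹, _⟩
        = lam ⟨a * ((b : G) * n * b⁻¹) * a⁻¹, hN.conj_mem _ (hN.conj_mem _ n.2 b) a⟩ :=
          lam_congr lam _ _ (by group)
      _ = lam ⟨(b : G) * n * b⁻¹, hN.conj_mem _ n.2 b⟩ := h1
      _ = lam n := hb n
  inv_mem' := by
    intro a ha n
    have h1 := ha ⟨a⁻¹ * (n : G) * a⁻¹⁻¹, hN.conj_mem _ n.2 a⁻¹⟩
    have h2 : lam ⟨a * (a⁻¹ * (n : G) * a⁻¹⁻¹) * a⁻¹,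
        hN.conj_mem _ (hN.conj_mem _ n.2 a⁻¹) a⟩ = lam n :=
      lam_congr lam _ n.2 (by group)
    exact h1.symm.trans h2

/-!
Give an irreducible character `χ` the weight `8 χ(1) - 29`. The average degree is at least `29/8`
exactly when the weights of the nonlinear characters have nonnegative sum, and only the degrees `2`
and `3` have negative weight. Let `G` be non-solvable and let `N` be the last term of its derived
series, a nontrivial perfect normal subgroup.

Suppose first that some character of `G` that is nontrivial on `N` has degree `2` or `3`. Its
restriction to `N` is irreducible, since `N` has no nontrivial linear character. Products of
characters of `N` of degree `2` and `3` then produce enough characters of larger degree (adjoint,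
symmetric cube, traceless symmetric square, ...) to compensate the negative weights on `N`. They
extend to `G` when their factors do: each is the only constituent of its degree in a product of two
characters and has multiplicity one there, so the constituent of the extended product lying above it
restricts to it alone. Gallagher's theorem multiplies the extensions by the characters of `G/N`,
which compensates the negative weights on `G`.

Otherwise every character nontrivial on `N` has degree at least `4`, and the negative weights come
from `G/N`. Frattini's argument for a Sylow subgroup of a chief factor `N/L` of `G` gives a
subgroup `U` of index at least `10` with `UN = G`. The negative weight of a character `χ` of `G/N`
is discharged onto the constituents of `χ · 1_U^G` that are nontrivial on `N`.
-/

open Group (IsPerfect)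

/-! ### The bilinear pairing of functions on a finite group -/

/-- The contragredient function `g ↦ f g⁻¹`; on characters it is the character of the dual
representation. -/
def contragredient {G : Type*} [Group G] (f : G → ℂ) : G → ℂ := fun g => f g⁻¹

local postfix:max "ᵛ" => contragredient

/-- The bilinear form `|G|⁻¹ ∑ g, f g * h g⁻¹`. It agrees with the hermitian product on characters,
and multiplication by `f` is adjoint to multiplication by the contragredient of `f`. -/
noncomputable def charPairing {G : Type*} [Group G] [Finite G] : LinearMap.BilinForm ℂ (G → ℂ) :=
  letI := Fintype.ofFinite G
  LinearMap.mk₂ ℂ (fun f h => (Nat.card G : ℂ)⁻¹ * ∑ g, f g * h g⁻¹)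
    (fun f f' h => by simp only [Pi.add_apply, add_mul, Finset.sum_add_distrib, mul_add])
    (fun c f h => by
      simp only [Pi.smul_apply, smul_eq_mul, mul_assoc]
      rw [← Finset.mul_sum, mul_left_comm])
    (fun f h h' => by simp only [Pi.add_apply, Finset.sum_add_distrib, mul_add])
    (fun c f h => by
      simp only [Pi.smul_apply, smul_eq_mul, mul_left_comm _ c]
      rw [← Finset.mul_sum, mul_left_comm])

local notation "⟪" f "," h "⟫" => charPairing f h

section Pairing

variable {G : Type*} [Group G]

@[simp] lemma contragredient_apply (f : G → ℂ) (g : G) : fᵛ g = f g⁻¹ := rfl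

@[simp] lemma contragredient_contragredient (f : G → ℂ) : fᵛᵛ = f := by
  funext g
  simp

@[simp] lemma contragredient_one : (1 : G → ℂ)ᵛ = 1 := rfl

@[simp] lemma contragredient_mul (f h : G → ℂ) : (f * h)ᵛ = fᵛ * hᵛ := rfl

@[simp] lemma contragredient_add (f h : G → ℂ) : (f + h)ᵛ = fᵛ + hᵛ := rfl

@[simp] lemma contragredient_sub (f h : G → ℂ) : (f - h)ᵛ = fᵛ - hᵛ := rfl

lemma natCard_cast_ne_zero (G : Type*) [Group G] [Finite G] : (Nat.card G : ℂ) ≠ 0 :=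
  Nat.cast_ne_zero.2 Nat.card_pos.ne'

lemma charPairing_apply [Fintype G] (f h : G → ℂ) :
    ⟪f,h⟫ = (Nat.card G : ℂ)⁻¹ * ∑ g, f g * h g⁻¹ := by
  simp only [charPairing, LinearMap.mk₂_apply]
  congr!

variable [Finite G]

lemma charPairing_comm (f h : G → ℂ) : ⟪f,h⟫ = ⟪h,f⟫ := by
  have := Fintype.ofFinite G
  rw [charPairing_apply, charPairing_apply, ← Equiv.sum_comp (Equiv.inv G)]
  simp only [Equiv.inv_apply, inv_inv, mul_comm]

lemma charPairing_mul_left (f h k : G → ℂ) : ⟪f * h,k⟫ = ⟪f,hᵛ * k⟫ := by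
  have := Fintype.ofFinite G
  simp only [charPairing_apply, Pi.mul_apply, contragredient_apply, inv_inv, mul_assoc]

lemma charPairing_mul_right (f h k : G → ℂ) : ⟪f,h * k⟫ = ⟪f * hᵛ,k⟫ := by
  rw [charPairing_mul_left, contragredient_contragredient]

lemma charPairing_mul_mul (f h k l : G → ℂ) : ⟪f * h,k * l⟫ = ⟪f * kᵛ,hᵛ * l⟫ := by
  rw [charPairing_mul_right, mul_right_comm, charPairing_mul_left]

lemma charPairing_contragredient (f h : G → ℂ) : ⟪fᵛ,hᵛ⟫ = ⟪f,h⟫ := by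
  have := Fintype.ofFinite G
  rw [charPairing_comm, charPairing_apply, charPairing_apply]
  simp only [contragredient_apply, inv_inv, mul_comm]

end Pairing

/-! ### Characters -/

/-- Characters are sums of irreducible characters; `isChar_character` shows that these are the
characters of finite-dimensional complex representations. -/
def IsChar {G : Type} [Group G] (φ : G → ℂ) : Prop :=
  φ ∈ AddSubmonoid.closure {χ | IsIrrChar G χ}

section Characters

variable {G : Type} [Group G] {χ ψ φ : G → ℂ}

lemma IsChar.zero : IsChar (0 : G → ℂ) := zero_mem _

lemma IsIrrChar.isChar (hχ : IsIrrChar G χ) : IsChar χ := AddSubmonoid.subset_closure hχ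

lemma IsChar.add (hφ : IsChar φ) (hψ : IsChar ψ) : IsChar (φ + ψ) := add_mem hφ hψ

@[elab_as_elim]
lemma IsChar.induction_on {motive : (φ : G → ℂ) → IsChar φ → Prop} (hφ : IsChar φ)
    (zero : motive 0 .zero)
    (add : ∀ χ φ (hχ : IsIrrChar G χ) (hφ : IsChar φ), motive φ hφ →
      motive (χ + φ) (hχ.isChar.add hφ)) : motive φ hφ := by
  induction hφ using AddSubmonoid.closure_induction_left with
  | zero => exact zero
  | add_left χ hχ φ hφ ih => exact add χ φ hχ hφ ih

lemma IsChar.eq_zero_or_eq_add (hφ : IsChar φ) :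
    φ = 0 ∨ ∃ χ ψ, IsIrrChar G χ ∧ IsChar ψ ∧ φ = χ + ψ := by
  induction hφ using IsChar.induction_on with
  | zero => exact Or.inl rfl
  | add χ ψ hχ hψ => exact Or.inr ⟨χ, ψ, hχ, hψ, rfl⟩

lemma IsIrrChar.exists_fdRep (hχ : IsIrrChar G χ) :
    ∃ V : FDRep ℂ G, Simple V ∧ V.character = χ :=
  let ⟨V, hV, h⟩ := hχ
  ⟨V, hV, funext h⟩

variable [Finite G]

lemma isIrrChar_character_iff (V : FDRep ℂ G) :
    IsIrrChar G V.character ↔ ⟪V.character,V.character⟫ = 1 := by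
  have := Fintype.ofFinite G
  rw [charPairing_apply, inv_mul_eq_one₀ (natCard_cast_ne_zero G), eq_comm,
    ← FDRep.simple_iff_char_is_norm_one]
  constructor
  · rintro ⟨W, hW, h⟩
    rw [FDRep.simple_iff_char_is_norm_one] at hW ⊢
    simpa only [h] using hW
  · exact fun hV => ⟨V, hV, fun _ => rfl⟩

lemma IsIrrChar.charPairing_self (hχ : IsIrrChar G χ) : ⟪χ,χ⟫ = 1 := by
  obtain ⟨V, -, rfl⟩ := hχ.exists_fdRep
  exact (isIrrChar_character_iff V).1 hχ

lemma IsIrrChar.charPairing_of_ne (hχ : IsIrrChar G χ) (hψ : IsIrrChar G ψ) (hne : χ ≠ ψ) :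
    ⟪χ,ψ⟫ = 0 := by
  have := Fintype.ofFinite G
  have := invertibleOfNonzero (natCard_cast_ne_zero G)
  obtain ⟨V, hV, rfl⟩ := hχ.exists_fdRep
  obtain ⟨W, hW, rfl⟩ := hψ.exists_fdRep
  rw [charPairing_apply, FDRep.char_orthonormal V W,
    if_neg fun ⟨i⟩ => hne (FDRep.char_iso i)]

lemma IsIrrChar.charPairing_eq (hχ : IsIrrChar G χ) (hψ : IsIrrChar G ψ) :
    ⟪χ,ψ⟫ = if χ = ψ then 1 else 0 := by
  split_ifs with h
  · rw [h, hψ.charPairing_self]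
  · exact hχ.charPairing_of_ne hψ h

lemma IsIrrChar.eq_of_charPairing_ne_zero (hχ : IsIrrChar G χ) (hψ : IsIrrChar G ψ)
    (h : ⟪χ,ψ⟫ ≠ 0) : χ = ψ :=
  not_imp_comm.1 (hχ.charPairing_of_ne hψ) h

section Representation

variable {V : Type} [AddCommGroup V] [Module ℂ V] [FiniteDimensional ℂ V]
  (ρ : Representation ℂ G V)

lemma isIrrChar_character [ρ.IsIrreducible] : IsIrrChar G ρ.character := by
  have := Fintype.ofFinite G
  have := invertibleOfNonzero (natCard_cast_ne_zero G)
  refine (isIrrChar_character_iff (FDRep.of ρ)).2 ?_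
  refine (charPairing_apply _ _).trans ((ρ.card_inv_mul_sum_char_mul_char_eq_finrank ρ).trans ?_)
  simp

omit [Finite G] in
lemma character_eq_add_of_isCompl {σ τ : Subrepresentation ρ}
    (h : IsCompl σ.toSubmodule τ.toSubmodule) :
    ρ.character = σ.toRepresentation.character + τ.toRepresentation.character := by
  funext g
  let U : Bool → Submodule ℂ V := fun b => if b then σ.toSubmodule else τ.toSubmodule
  have hU : DirectSum.IsInternal U := by
    rw [DirectSum.isInternal_submodule_iff_isCompl U (i := true) (j := false) (by simp)
      (by ext b; cases b <;> simp)]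
    exact h
  have hmaps : ∀ b, Set.MapsTo (ρ g) (U b) (U b)
    | true => fun _ hv => σ.apply_mem_toSubmodule g hv
    | false => fun _ hv => τ.apply_mem_toSubmodule g hv
  exact (LinearMap.trace_eq_sum_trace_restrict hU hmaps).trans (Fintype.sum_bool _)

omit [FiniteDimensional ℂ V] in
lemma exists_isCompl_subrepresentation_of_not_isIrreducible [Nontrivial V]
    (h : ¬ ρ.IsIrreducible) : ∃ σ τ : Subrepresentation ρ,
      IsCompl σ.toSubmodule τ.toSubmodule ∧ σ.toSubmodule ≠ ⊥ ∧ τ.toSubmodule ≠ ⊥ := by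
  have hnt : Nontrivial (Subrepresentation ρ) :=
    ⟨⊥, ⊤, fun e => bot_ne_top (α := Submodule ℂ V) (congrArg Subrepresentation.toSubmodule e)⟩
  obtain ⟨σ, hbot, htop⟩ : ∃ σ : Subrepresentation ρ, σ ≠ ⊥ ∧ σ ≠ ⊤ := by
    by_contra! hall
    exact h ⟨fun σ => or_iff_not_imp_left.2 (hall σ)⟩
  have : NeZero (Nat.card G : ℂ) := ⟨natCard_cast_ne_zero G⟩
  obtain ⟨τ, hdisj, hcodisj⟩ := exists_isCompl σ
  refine ⟨σ, τ, ⟨disjoint_iff.2 ?_, codisjoint_iff.2 ?_⟩, fun e => hbot ?_, fun e => htop ?_⟩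
  · exact congrArg Subrepresentation.toSubmodule (disjoint_iff.1 hdisj)
  · exact congrArg Subrepresentation.toSubmodule (codisjoint_iff.1 hcodisj)
  · exact Subrepresentation.toSubmodule_injective e
  · have hτ : τ = ⊥ := Subrepresentation.toSubmodule_injective e
    rwa [hτ, codisjoint_bot] at hcodisj

lemma isChar_character : IsChar ρ.character := by
  induction hd : Module.finrank ℂ V using Nat.strong_induction_on generalizing V with
  | _ d ih =>
    subst hd
    rcases subsingleton_or_nontrivial V with hV | hV
    · have : ρ.character = 0 := by
        funext g
        rw [Representation.character, Subsingleton.elim (ρ g) 0, map_zero, Pi.zero_apply]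
      exact this ▸ IsChar.zero
    by_cases hρ : ρ.IsIrreducible
    · exact (isIrrChar_character ρ).isChar
    · obtain ⟨σ, τ, hcompl, hσ, hτ⟩ := exists_isCompl_subrepresentation_of_not_isIrreducible ρ hρ
      have hrank := Submodule.finrank_add_eq_of_isCompl hcompl
      have hσ' := Submodule.finrank_eq_zero.not.2 hσ
      have hτ' := Submodule.finrank_eq_zero.not.2 hτ
      rw [character_eq_add_of_isCompl ρ hcompl]
      exact (ih _ (by lia) _ rfl).add (ih _ (by lia) _ rfl)

end Representation

lemma isChar_trace {ι : Type} [Fintype ι] [DecidableEq ι] (ρ : G →* Matrix ι ι ℂ) :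
    IsChar fun g => (ρ g).trace := by
  let σ : Representation ℂ G (ι → ℂ) :=
    ((Matrix.toLinAlgEquiv' : Matrix ι ι ℂ ≃ₐ[ℂ] _) : Matrix ι ι ℂ →* _).comp ρ
  have hσ : σ.character = fun g => (ρ g).trace := funext fun g => Matrix.trace_toLin'_eq (ρ g)
  exact hσ ▸ isChar_character σ

lemma isIrrChar_one : IsIrrChar G 1 := by
  have := Fintype.ofFinite G
  have h : (FDRep.of (Representation.trivial ℂ G ℂ)).character = 1 := by
    funext g
    exact (LinearMap.trace_one ℂ ℂ).trans (by simp)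
  rw [← h, isIrrChar_character_iff, h, charPairing_apply]
  simp [← Nat.card_eq_fintype_card]

lemma IsIrrChar.isChar_mul (hχ : IsIrrChar G χ) (hψ : IsIrrChar G ψ) : IsChar (χ * ψ) := by
  obtain ⟨V, -, rfl⟩ := hχ.exists_fdRep
  obtain ⟨W, -, rfl⟩ := hψ.exists_fdRep
  exact FDRep.char_tensor V W ▸ isChar_character (MonoidalCategoryStruct.tensorObj V W).ρ

lemma IsChar.mul (hφ : IsChar φ) (hψ : IsChar ψ) : IsChar (φ * ψ) := by
  induction hφ using IsChar.induction_on with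
  | zero => exact (zero_mul ψ).symm ▸ IsChar.zero
  | add χ φ hχ _ ih =>
    refine add_mul χ φ ψ ▸ IsChar.add ?_ ih
    clear ih
    induction hψ using IsChar.induction_on with
    | zero => exact (mul_zero χ).symm ▸ IsChar.zero
    | add χ' ψ hχ' _ ih => exact mul_add χ χ' ψ ▸ (hχ.isChar_mul hχ').add ih

end Characters

/-! ### Degrees and constituents -/

section Constituents

variable {G : Type} [Group G] {χ ψ φ : G → ℂ}

lemma IsIrrChar.exists_degree_eq_natCast (hχ : IsIrrChar G χ) : ∃ n : ℕ, 0 < n ∧ χ 1 = n := by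
  obtain ⟨V, hV, rfl⟩ := hχ.exists_fdRep
  refine ⟨Module.finrank ℂ V, Nat.pos_of_ne_zero fun h => Simple.not_isZero V ?_, V.char_one⟩
  have := Module.finrank_zero_iff.1 h
  rw [CategoryTheory.Limits.IsZero.iff_id_eq_zero]
  ext v
  exact Subsingleton.elim (α := V) _ _

lemma IsIrrChar.degree_ne_zero (hχ : IsIrrChar G χ) : χ 1 ≠ 0 := by
  obtain ⟨n, hn, h⟩ := hχ.exists_degree_eq_natCast
  exact h ▸ Nat.cast_ne_zero.2 hn.ne'

lemma IsChar.exists_degree_eq_natCast (hφ : IsChar φ) : ∃ n : ℕ, φ 1 = n := by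
  induction hφ using IsChar.induction_on with
  | zero => exact ⟨0, by simp⟩
  | add χ φ hχ _ ih =>
    obtain ⟨m, -, hm⟩ := hχ.exists_degree_eq_natCast
    obtain ⟨n, hn⟩ := ih
    exact ⟨m + n, by rw [Pi.add_apply, hm, hn, Nat.cast_add]⟩

lemma IsChar.eq_zero_of_degree_eq_zero (hφ : IsChar φ) (h : φ 1 = 0) : φ = 0 := by
  obtain rfl | ⟨χ, ψ, hχ, hψ, rfl⟩ := hφ.eq_zero_or_eq_add
  · rfl
  · obtain ⟨m, hm, hm'⟩ := hχ.exists_degree_eq_natCast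
    obtain ⟨n, hn⟩ := hψ.exists_degree_eq_natCast
    rw [Pi.add_apply, hm', hn] at h
    norm_cast at h
    lia

lemma IsChar.isIrrChar_or_eq_add (hφ : IsChar φ) (h : φ ≠ 0) :
    IsIrrChar G φ ∨ ∃ (χ ψ : G → ℂ) (a b : ℕ), IsIrrChar G χ ∧ IsChar ψ ∧ φ = χ + ψ ∧
      χ 1 = a ∧ ψ 1 = b ∧ 0 < a ∧ a ≤ b := by
  obtain rfl | ⟨χ, ψ, hχ, hψ, rfl⟩ := hφ.eq_zero_or_eq_add
  · exact absurd rfl h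
  obtain rfl | ⟨χ', ψ', hχ', hψ', rfl⟩ := hψ.eq_zero_or_eq_add
  · exact Or.inl ((add_zero χ).symm ▸ hχ)
  right
  obtain ⟨a, ha0, ha⟩ := hχ.exists_degree_eq_natCast
  obtain ⟨b, hb0, hb⟩ := hχ'.exists_degree_eq_natCast
  obtain ⟨c, hc⟩ := hψ'.exists_degree_eq_natCast
  rcases le_total a b with hab | hab
  · exact ⟨χ, χ' + ψ', a, b + c, hχ, hψ, rfl, ha, by simp [hb, hc], ha0, by lia⟩
  · exact ⟨χ', χ + ψ', b, a + c, hχ', hχ.isChar.add hψ', add_left_comm _ _ _, hb,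
      by simp [ha, hc], hb0, by lia⟩

variable [Finite G]

lemma IsIrrChar.contragredient (hχ : IsIrrChar G χ) : IsIrrChar G χᵛ := by
  obtain ⟨V, -, rfl⟩ := hχ.exists_fdRep
  have hV : (FDRep.of (Representation.dual V.ρ)).character = V.characterᵛ :=
    funext fun g => FDRep.char_dual V g
  rw [← hV, isIrrChar_character_iff, hV, charPairing_contragredient, hχ.charPairing_self]

lemma IsChar.contragredient (hφ : IsChar φ) : IsChar φᵛ := by
  induction hφ using IsChar.induction_on with
  | zero => exact IsChar.zero
  | add χ φ hχ _ ih => exact hχ.contragredient.isChar.add ih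

lemma IsChar.exists_charPairing_eq_natCast (hφ : IsChar φ) (hψ : IsChar ψ) :
    ∃ n : ℕ, ⟪φ,ψ⟫ = n := by
  induction hφ using IsChar.induction_on with
  | zero => exact ⟨0, by simp⟩
  | add χ φ hχ _ ih =>
    have hχψ : ∃ m : ℕ, ⟪χ,ψ⟫ = m := by
      clear ih
      induction hψ using IsChar.induction_on with
      | zero => exact ⟨0, by simp⟩
      | add χ' ψ hχ' _ ih =>
        obtain ⟨n, hn⟩ := ih
        refine ⟨(if χ = χ' then 1 else 0) + n, ?_⟩
        rw [map_add, hn, hχ.charPairing_eq hχ']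
        split_ifs <;> simp
    obtain ⟨m, hm⟩ := hχψ
    obtain ⟨n, hn⟩ := ih
    exact ⟨m + n, by rw [map_add, LinearMap.add_apply, hm, hn, Nat.cast_add]⟩

lemma IsChar.isChar_sub_of_charPairing_ne_zero (hφ : IsChar φ) (hχ : IsIrrChar G χ)
    (h : ⟪φ,χ⟫ ≠ 0) : IsChar (φ - χ) := by
  induction hφ using IsChar.induction_on with
  | zero => simp at h
  | add ψ φ hψ hφ ih =>
    by_cases hψχ : ψ = χ
    · rwa [hψχ, add_sub_cancel_left]
    · rw [map_add, LinearMap.add_apply, hψ.charPairing_of_ne hχ hψχ, zero_add] at h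
      exact add_sub_assoc ψ φ χ ▸ hψ.isChar.add (ih h)

lemma IsIrrChar.charPairing_add_self_ne_zero (hχ : IsIrrChar G χ) (hφ : IsChar φ) :
    ⟪χ + φ,χ⟫ ≠ 0 := by
  obtain ⟨n, hn⟩ := hφ.exists_charPairing_eq_natCast hχ.isChar
  rw [map_add, LinearMap.add_apply, hn, hχ.charPairing_self]
  norm_cast
  lia

lemma IsChar.exists_charPairing_ne_zero (hφ : IsChar φ) (h : φ ≠ 0) :
    ∃ χ, IsIrrChar G χ ∧ ⟪φ,χ⟫ ≠ 0 := by
  obtain rfl | ⟨χ, ψ, hχ, hψ, rfl⟩ := hφ.eq_zero_or_eq_add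
  · exact absurd rfl h
  · exact ⟨χ, hχ, hχ.charPairing_add_self_ne_zero hψ⟩

lemma IsChar.charPairing_eq_zero_of_isChar_sub (hψ : IsChar ψ) (hsub : IsChar (φ - ψ))
    (hχ : IsChar χ) (h : ⟪φ,χ⟫ = 0) : ⟪ψ,χ⟫ = 0 := by
  obtain ⟨m, hm⟩ := hψ.exists_charPairing_eq_natCast hχ
  obtain ⟨n, hn⟩ := hsub.exists_charPairing_eq_natCast hχ
  rw [map_sub, LinearMap.sub_apply, h, hm, zero_sub, neg_eq_iff_add_eq_zero] at hn
  norm_cast at hn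
  rw [hm, (add_eq_zero.1 hn).1, Nat.cast_zero]

lemma IsChar.eq_zero_of_charPairing_self_eq_zero (hφ : IsChar φ) (h : ⟪φ,φ⟫ = 0) : φ = 0 := by
  obtain rfl | ⟨χ, ψ, hχ, hψ, rfl⟩ := hφ.eq_zero_or_eq_add
  · rfl
  · have hself := hχ.isChar.charPairing_eq_zero_of_isChar_sub
      ((add_sub_cancel_left χ ψ).symm ▸ hψ) hφ h
    exact absurd ((charPairing_comm _ _).trans hself) (hχ.charPairing_add_self_ne_zero hψ)

lemma IsChar.isIrrChar_of_charPairing_self_eq_one (hφ : IsChar φ) (h : ⟪φ,φ⟫ = 1) :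
    IsIrrChar G φ := by
  obtain rfl | ⟨χ, ψ, hχ, hψ, rfl⟩ := hφ.eq_zero_or_eq_add
  · simp at h
  · obtain ⟨m, hm⟩ := hχ.isChar.exists_charPairing_eq_natCast hψ
    obtain ⟨n, hn⟩ := hψ.exists_charPairing_eq_natCast hψ
    have hψ0 : ⟪ψ,ψ⟫ = 0 := by
      simp only [map_add, LinearMap.add_apply, charPairing_comm ψ χ, hχ.charPairing_self, hm,
        hn] at h
      norm_cast at h
      rw [hn, Nat.cast_eq_zero]
      lia
    rwa [hψ.eq_zero_of_charPairing_self_eq_zero hψ0, add_zero]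

lemma IsChar.isIrrChar_of_charPairing_eq_zero {d : ℕ} (hφ : IsChar φ) (hd : φ 1 = d) (hd0 : 0 < d)
    (h : ∀ χ (k : ℕ), IsIrrChar G χ → χ 1 = k → 2 * k ≤ d → ⟪φ,χ⟫ = 0) : IsIrrChar G φ := by
  have hφ0 : φ ≠ 0 := by
    rintro rfl
    exact hd0.ne' (Nat.cast_eq_zero.1 hd.symm)
  obtain hirr | ⟨χ, ψ, a, b, hχ, hψ, rfl, ha, hb, -, hab⟩ := hφ.isIrrChar_or_eq_add hφ0
  · exact hirr
  · rw [Pi.add_apply, ha, hb] at hd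
    norm_cast at hd
    exact absurd (h χ a hχ ha (by lia)) (hχ.charPairing_add_self_ne_zero hψ)

end Constituents

/-! ### Class functions -/

/-- The algebra of class functions on `G`. -/
def classFunctions (G : Type*) [Group G] : Subalgebra ℂ (G → ℂ) where
  carrier := {f | ∀ g h, f (g * h) = f (h * g)}
  mul_mem' hf hf' g h := congrArg₂ (· * ·) (hf g h) (hf' g h)
  add_mem' hf hf' g h := congrArg₂ (· + ·) (hf g h) (hf' g h)
  algebraMap_mem' _ _ _ := rfl

/-- The convolution `x ↦ ∑ g, f g * h (g⁻¹ * x)` of functions on a finite group. -/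
noncomputable def convolution {G : Type*} [Group G] [Finite G] (f h : G → ℂ) : G → ℂ :=
  letI := Fintype.ofFinite G
  fun x => ∑ g, f g * h (g⁻¹ * x)

section Convolution

variable {G : Type*} [Group G] [Finite G] {f h : G → ℂ}

lemma convolution_apply [Fintype G] (f h : G → ℂ) (x : G) :
    convolution f h x = ∑ g, f g * h (g⁻¹ * x) := by
  simp only [convolution]
  congr!

lemma convolution_add (f h k : G → ℂ) :
    convolution f (h + k) = convolution f h + convolution f k := by
  have := Fintype.ofFinite G
  funext x
  simp only [convolution_apply, Pi.add_apply, mul_add, Finset.sum_add_distrib]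

lemma convolution_smul (c : ℂ) (f h : G → ℂ) : convolution f (c • h) = c • convolution f h := by
  have := Fintype.ofFinite G
  funext x
  simp only [convolution_apply, Pi.smul_apply, smul_eq_mul, mul_left_comm _ c, Finset.mul_sum]

lemma smul_convolution (c : ℂ) (f h : G → ℂ) : convolution (c • f) h = c • convolution f h := by
  have := Fintype.ofFinite G
  funext x
  simp only [convolution_apply, Pi.smul_apply, smul_eq_mul, mul_assoc, Finset.mul_sum]

lemma convolution_assoc (f h k : G → ℂ) :
    convolution (convolution f h) k = convolution f (convolution h k) := by
  have := Fintype.ofFinite G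
  funext x
  simp only [convolution_apply, Finset.sum_mul, Finset.mul_sum]
  rw [Finset.sum_comm]
  refine Finset.sum_congr rfl fun g _ => ?_
  rw [← Equiv.sum_comp (Equiv.mulLeft g)]
  refine Finset.sum_congr rfl fun y _ => ?_
  rw [Equiv.coe_mulLeft, inv_mul_cancel_left, mul_inv_rev, mul_assoc, mul_assoc]

lemma convolution_single_one (f : G → ℂ) (c : ℂ) : convolution f (Pi.single 1 c) = c • f := by
  have := Fintype.ofFinite G
  funext x
  simp [convolution_apply, Pi.single_apply, inv_mul_eq_one, mul_comm c]

end Convolution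

section ClassFunctions

variable {G : Type} [Group G] {χ φ f f' : G → ℂ}

lemma IsChar.mem_classFunctions (hφ : IsChar φ) : φ ∈ classFunctions G := by
  induction hφ using IsChar.induction_on with
  | zero => exact zero_mem _
  | add χ φ hχ _ ih =>
    obtain ⟨V, -, rfl⟩ := hχ.exists_fdRep
    exact add_mem (fun g h => V.char_mul_comm h g) ih

variable [Finite G]

lemma IsIrrChar.exists_eq_smul_one_of_commute {V : Type} [AddCommGroup V] [Module ℂ V]
    [FiniteDimensional ℂ V] {ρ : Representation ℂ G V} (hρ : IsIrrChar G ρ.character)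
    {A : Module.End ℂ V} (hA : ∀ g, Commute A (ρ g)) : ∃ c : ℂ, A = c • 1 := by
  have := Fintype.ofFinite G
  have := invertibleOfNonzero (natCard_cast_ne_zero G)
  have hrank : Module.finrank ℂ (Representation.IntertwiningMap ρ ρ) = 1 := by
    have h := hρ.charPairing_self
    rw [charPairing_apply] at h
    exact Nat.cast_injective (R := ℂ)
      ((ρ.card_inv_mul_sum_char_mul_char_eq_finrank ρ).symm.trans (by simpa using h))
  have : Nontrivial V := Module.nontrivial_of_finrank_pos (R := ℂ)
    (Nat.pos_of_ne_zero fun h => hρ.degree_ne_zero (by rw [ρ.char_one, h, Nat.cast_zero]))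
  have hid : Representation.IntertwiningMap.id ρ ≠ 0 := fun h =>
    one_ne_zero (α := Module.End ℂ V) (congrArg Representation.IntertwiningMap.toLinearMap h)
  obtain ⟨c, hc⟩ := (finrank_eq_one_iff_of_nonzero' _ hid).1 hrank ⟨A, hA⟩
  exact ⟨c, (congrArg Representation.IntertwiningMap.toLinearMap hc).symm⟩

lemma IsIrrChar.convolution_eq_smul (hχ : IsIrrChar G χ) (hf : f ∈ classFunctions G) :
    convolution f χ = (Nat.card G * ⟪f,χ⟫ / χ 1) • χ := by
  have := Fintype.ofFinite G
  have hχ1 := hχ.degree_ne_zero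
  obtain ⟨V, -, rfl⟩ := hχ.exists_fdRep
  let A : Module.End ℂ V := ∑ g, f g • V.ρ g⁻¹
  have hA : ∀ x, Commute A (V.ρ x) := fun x => by
    rw [commute_iff_eq, Finset.sum_mul, Finset.mul_sum,
      ← Equiv.sum_comp (MulAut.conj x).toEquiv]
    refine Finset.sum_congr rfl fun g _ => ?_
    have hfg : f (MulAut.conj x g) = f g := by
      rw [MulAut.conj_apply, hf, inv_mul_cancel_left]
    have hρ : (MulAut.conj x g)⁻¹ * x = x * g⁻¹ := by simp [mul_assoc]
    simp only [smul_mul_assoc, mul_smul_comm, ← map_mul]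
    exact congrArg₂ (· • V.ρ ·) hfg hρ
  have htrace : ∀ x, LinearMap.trace ℂ V (A * V.ρ x) = convolution f V.character x := fun x => by
    simp only [A, Finset.sum_mul, smul_mul_assoc, ← map_mul, map_sum, map_smul, smul_eq_mul,
      convolution_apply]
    rfl
  obtain ⟨c, hc⟩ := hχ.exists_eq_smul_one_of_commute (ρ := V.ρ) hA
  have hconv : convolution f V.character = c • V.character := by
    funext x
    rw [← htrace, hc, smul_mul_assoc, one_mul, map_smul]
    rfl
  have hone : Nat.card G * ⟪f,V.character⟫ = c * V.character 1 := by
    rw [charPairing_apply, mul_inv_cancel_left₀ (natCard_cast_ne_zero G)]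
    simpa [convolution_apply] using congrFun hconv 1
  rw [hconv, hone, mul_div_cancel_right₀ _ hχ1]

lemma isChar_single_one : IsChar (Pi.single 1 (Nat.card G : ℂ) : G → ℂ) := by
  have := Fintype.ofFinite G
  let ρ : G →* Matrix G G ℂ :=
    { toFun g := Matrix.of fun x y => if x = g * y then 1 else 0
      map_one' := by
        ext x y
        simp [Matrix.one_apply]
      map_mul' a b := by
        ext x y
        simp [Matrix.mul_apply, mul_assoc] }
  have hρ : (fun g => (ρ g).trace) = Pi.single 1 (Nat.card G : ℂ) := by
    funext g
    by_cases hg : g = 1 <;> simp [Matrix.trace, ρ, hg]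
  exact hρ ▸ isChar_trace ρ

lemma eq_zero_of_charPairing_eq_zero (hf : f ∈ classFunctions G)
    (h : ∀ χ, IsIrrChar G χ → ⟪f,χ⟫ = 0) : f = 0 := by
  have hconv : ∀ φ, IsChar φ → convolution f φ = 0 := fun φ hφ => by
    induction hφ using IsChar.induction_on with
    | zero => simpa using convolution_smul 0 f 0
    | add χ φ hχ _ ih => rw [convolution_add, ih, hχ.convolution_eq_smul hf, h χ hχ]; simp
  have hreg := hconv _ isChar_single_one
  rw [convolution_single_one] at hreg
  exact (smul_eq_zero.1 hreg).resolve_left (natCard_cast_ne_zero G)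

lemma eq_of_charPairing_eq (hf : f ∈ classFunctions G) (hf' : f' ∈ classFunctions G)
    (h : ∀ χ, IsIrrChar G χ → ⟪f,χ⟫ = ⟪f',χ⟫) : f = f' := by
  refine sub_eq_zero.1 (eq_zero_of_charPairing_eq_zero (sub_mem hf hf') fun χ hχ => ?_)
  rw [map_sub, LinearMap.sub_apply, h χ hχ, sub_self]

variable (G) in
lemma finite_setOf_isIrrChar : {χ : G → ℂ | IsIrrChar G χ}.Finite := by
  have hli : LinearIndependent ℂ (fun χ : {χ : G → ℂ | IsIrrChar G χ} => (χ : G → ℂ)) := by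
    rw [linearIndependent_iff']
    intro s c hs χ hχ
    have h := congrArg (fun f => ⟪f,(χ : G → ℂ)⟫) hs
    simpa [LinearMap.sum_apply,
      IsIrrChar.charPairing_eq (Subtype.prop _) χ.2, Subtype.coe_inj, hχ] using h
  exact hli.set_finite_of_isNoetherian

variable (G) in
/-- The set of irreducible characters of `G`. -/
noncomputable def irrChars : Finset (G → ℂ) := (finite_setOf_isIrrChar G).toFinset

@[simp] lemma mem_irrChars : χ ∈ irrChars G ↔ IsIrrChar G χ := by simp [irrChars]

lemma charPairing_sum_of_subset {s : Finset (G → ℂ)} (hs : s ⊆ irrChars G) (a : (G → ℂ) → ℂ)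
    (hχ : IsIrrChar G χ) : ⟪∑ ψ ∈ s,a ψ • ψ,χ⟫ = if χ ∈ s then a χ else 0 := by
  simp only [map_sum, map_smul, LinearMap.sum_apply, LinearMap.smul_apply, smul_eq_mul]
  rw [← Finset.sum_ite_eq' s χ a]
  refine Finset.sum_congr rfl fun ψ hψ => ?_
  simp [IsIrrChar.charPairing_eq (mem_irrChars.1 (hs hψ)) hχ]

lemma eq_sum_charPairing_smul (hf : f ∈ classFunctions G) :
    f = ∑ χ ∈ irrChars G, ⟪f,χ⟫ • χ := by
  refine eq_of_charPairing_eq hf (sum_mem fun χ hχ => Subalgebra.smul_mem _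
    (mem_irrChars.1 hχ).isChar.mem_classFunctions _) fun χ hχ => ?_
  rw [charPairing_sum_of_subset subset_rfl _ hχ, if_pos (mem_irrChars.2 hχ)]

lemma isChar_of_charPairing_eq_natCast (hf : f ∈ classFunctions G)
    (h : ∀ χ, IsIrrChar G χ → ∃ n : ℕ, ⟪f,χ⟫ = n) : IsChar f := by
  rw [eq_sum_charPairing_smul hf]
  refine sum_mem fun χ hχ => ?_
  obtain ⟨n, hn⟩ := h χ (mem_irrChars.1 hχ)
  rw [hn, Nat.cast_smul_eq_nsmul]
  exact nsmul_mem (mem_irrChars.1 hχ).isChar n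

end ClassFunctions

/-! ### Restriction to subgroups -/

section Restriction

variable {G : Type*} [Group G]

/-- Restriction of functions to a subgroup. -/
def res (N : Subgroup G) : (G → ℂ) →ₐ[ℂ] (N → ℂ) where
  toFun f n := f n
  map_one' := rfl
  map_mul' _ _ := rfl
  map_zero' := rfl
  map_add' _ _ := rfl
  commutes' _ := rfl

/-- Extension of a function on a subgroup by zero. -/
noncomputable def extendByZero {N : Subgroup G} (f : N → ℂ) : G → ℂ :=
  Function.extend Subtype.val f 0

@[simp] lemma res_apply (N : Subgroup G) (f : G → ℂ) (n : N) : res N f n = f n := rfl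

@[simp] lemma res_contragredient (N : Subgroup G) (f : G → ℂ) : res N fᵛ = (res N f)ᵛ := rfl

lemma res_mem_classFunctions (N : Subgroup G) {f : G → ℂ} (hf : f ∈ classFunctions G) :
    res N f ∈ classFunctions N := fun a b => hf a b

@[simp] lemma extendByZero_coe {N : Subgroup G} (f : N → ℂ) (n : N) : extendByZero f n = f n :=
  Subtype.val_injective.extend_apply f (0 : G → ℂ) n

lemma extendByZero_of_notMem {N : Subgroup G} (f : N → ℂ) {g : G} (hg : g ∉ N) :
    extendByZero f g = 0 :=
  Function.extend_apply' f (0 : G → ℂ) g fun ⟨n, hn⟩ => hg (hn ▸ n.2)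

lemma sum_subgroup_eq_sum_ite [Fintype G] (N : Subgroup G) (f : G → ℂ) :
    ∑ n : N, f n = ∑ g : G, if g ∈ N then f g else 0 := by
  rw [← Finset.sum_filter]
  exact (Finset.sum_subtype (p := fun g => g ∈ N) _ (by simp) f).symm

lemma sum_extendByZero_mul [Fintype G] {N : Subgroup G} (f : N → ℂ) (h : G → ℂ) :
    ∑ g, extendByZero f g * h g = ∑ n : N, f n * h n := by
  have hsum := sum_subgroup_eq_sum_ite N fun g => extendByZero f g * h g
  simp only [extendByZero_coe] at hsum
  rw [hsum]
  refine Finset.sum_congr rfl fun g _ => ?_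
  split_ifs with hg
  · rfl
  · rw [extendByZero_of_notMem f hg, zero_mul]

variable [Finite G]

lemma charPairing_res_one [Fintype G] (N : Subgroup G) (f : G → ℂ) :
    ⟪res N f,1⟫ = (Nat.card N : ℂ)⁻¹ * ∑ n : N, f n := by
  simp [charPairing_apply]

lemma natCard_mul_charPairing_extendByZero {N : Subgroup G} (f : N → ℂ) (h : G → ℂ) :
    Nat.card G * ⟪extendByZero f,h⟫ = Nat.card N * ⟪f,res N h⟫ := by
  have := Fintype.ofFinite G
  rw [charPairing_apply, charPairing_apply, mul_inv_cancel_left₀ (natCard_cast_ne_zero G),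
    mul_inv_cancel_left₀ (natCard_cast_ne_zero N)]
  exact sum_extendByZero_mul f fun g => h g⁻¹

lemma convolution_extendByZero_apply [Fintype G] {N : Subgroup G} (f : N → ℂ) (h : G → ℂ)
    (x : G) : convolution (extendByZero f) h x = ∑ n : N, f n * h ((n : G)⁻¹ * x) := by
  rw [convolution_apply]
  exact sum_extendByZero_mul f fun g => h (g⁻¹ * x)

lemma res_convolution_extendByZero {N : Subgroup G} (f : N → ℂ) (h : G → ℂ) :
    res N (convolution (extendByZero f) h) = convolution f (res N h) := by
  have := Fintype.ofFinite G
  funext x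
  rw [res_apply, convolution_extendByZero_apply, convolution_apply]
  rfl

omit [Finite G] in
lemma extendByZero_mem_classFunctions {N : Subgroup G} [hN : N.Normal] {f : N → ℂ}
    (hf : ∀ g : G, f ∘ MulAut.conjNormal g = f) : extendByZero f ∈ classFunctions G := by
  intro a b
  by_cases hab : a * b ∈ N
  · have hba : (MulAut.conjNormal b ⟨a * b, hab⟩ : G) = b * a := by
      rw [MulAut.conjNormal_apply]
      group
    rw [← hba, extendByZero_coe]
    exact (extendByZero_coe f ⟨a * b, hab⟩).trans (congrFun (hf b) _).symm
  · rw [extendByZero_of_notMem f hab, extendByZero_of_notMem f fun h => hab (hN.mem_comm h)]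

end Restriction

section Normal

variable {G : Type} [Group G] {χ ψ φ : G → ℂ}

lemma IsChar.comp_monoidHom {H : Type} [Group H] [Finite H] (hφ : IsChar φ) (f : H →* G) :
    IsChar (φ ∘ f) := by
  induction hφ using IsChar.induction_on with
  | zero => exact IsChar.zero
  | add χ φ hχ _ ih =>
    obtain ⟨V, -, rfl⟩ := hχ.exists_fdRep
    exact IsChar.add (isChar_character (V.ρ.comp f)) ih

variable [Finite G]

lemma IsChar.restrict (hφ : IsChar φ) (N : Subgroup G) : IsChar (res N φ) :=
  hφ.comp_monoidHom N.subtype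

lemma IsIrrChar.comp_mulEquiv {H : Type} [Group H] [Finite H] (hχ : IsIrrChar G χ) (e : H ≃* G) :
    IsIrrChar H (χ ∘ e) := by
  have := Fintype.ofFinite G
  have := Fintype.ofFinite H
  refine (hχ.isChar.comp_monoidHom e.toMonoidHom).isIrrChar_of_charPairing_self_eq_one ?_
  rw [← hχ.charPairing_self, charPairing_apply, charPairing_apply, Nat.card_congr e.toEquiv,
    ← Equiv.sum_comp e.toEquiv]
  simp

lemma KerContains.charPairing_res_one_eq_degree {N : Subgroup G} (h : KerContains φ N) :
    ⟪res N φ,1⟫ = φ 1 := by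
  have := Fintype.ofFinite G
  rw [charPairing_res_one, Finset.sum_congr rfl fun (n : N) _ => h n n.2, Finset.sum_const,
    Finset.card_univ, ← Nat.card_eq_fintype_card, nsmul_eq_mul,
    inv_mul_cancel_left₀ (natCard_cast_ne_zero N)]

variable (N : Subgroup G) [hN : N.Normal]

lemma IsIrrChar.apply_mul_of_charPairing_res_one_ne_zero (hχ : IsIrrChar G χ)
    (h : ⟪res N χ,1⟫ ≠ 0) {n : G} (hn : n ∈ N) (g : G) : χ (n * g) = χ g := by
  have := Fintype.ofFinite G
  have hconv := hχ.convolution_eq_smul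
    (extendByZero_mem_classFunctions (N := N) (f := 1) fun _ => rfl)
  rw [natCard_mul_charPairing_extendByZero, charPairing_comm] at hconv
  have hne : Nat.card N * ⟪res N χ,1⟫ / χ 1 ≠ 0 :=
    div_ne_zero (mul_ne_zero (natCard_cast_ne_zero N) h) hχ.degree_ne_zero
  have happly : ∀ x, ∑ m : N, (1 : N → ℂ) m * χ ((m : G)⁻¹ * x) =
      Nat.card N * ⟪res N χ,1⟫ / χ 1 * χ x := fun x =>
    (convolution_extendByZero_apply _ _ x).symm.trans (congrFun hconv x)
  apply mul_left_cancel₀ hne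
  rw [← happly, ← happly, ← Equiv.sum_comp (Equiv.mulLeft (⟨n, hn⟩ : N))]
  simp [mul_assoc]

lemma IsIrrChar.charPairing_res_one_of_not_kerContains (hχ : IsIrrChar G χ)
    (h : ¬ KerContains χ N) : ⟪res N χ,1⟫ = 0 := by
  by_contra hne
  exact h fun n hn => by
    rw [← hχ.apply_mul_of_charPairing_res_one_ne_zero N hne hn 1, mul_one]

lemma IsIrrChar.apply_mul_of_kerContains (hχ : IsIrrChar G χ) (h : KerContains χ N) {n : G}
    (hn : n ∈ N) (g : G) : χ (n * g) = χ g :=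
  hχ.apply_mul_of_charPairing_res_one_ne_zero N
    (h.charPairing_res_one_eq_degree ▸ hχ.degree_ne_zero) hn g

omit hN in
/-- The irreducible characters with `N` in their kernel; for normal `N` these are the inflations of
the irreducible characters of `G ⧸ N`. -/
noncomputable def inflatedIrrChars : Finset (G → ℂ) := {χ ∈ irrChars G | KerContains χ N}

variable {N} in
omit hN in
@[simp] lemma mem_inflatedIrrChars :
    χ ∈ inflatedIrrChars N ↔ IsIrrChar G χ ∧ KerContains χ N := by
  simp [inflatedIrrChars]

lemma sum_degree_mul_charPairing (φ : G → ℂ) :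
    ∑ β ∈ inflatedIrrChars N, β 1 * ⟪φ,β⟫ = ⟪res N φ,1⟫ := by
  have hG := natCard_cast_ne_zero G
  have hpair : ∀ f : G → ℂ, ⟪extendByZero (1 : N → ℂ),f⟫ =
      (Nat.card G : ℂ)⁻¹ * Nat.card N * ⟪res N f,1⟫ := fun f => by
    rw [mul_assoc, charPairing_comm _ 1, ← natCard_mul_charPairing_extendByZero,
      inv_mul_cancel_left₀ hG]
  have hexp := congrArg (fun f => ⟪f,φ⟫)
    (eq_sum_charPairing_smul (extendByZero_mem_classFunctions (N := N) (f := 1) fun _ => rfl))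
  simp only [map_sum, LinearMap.sum_apply, map_smul, LinearMap.smul_apply, smul_eq_mul, hpair,
    mul_assoc, ← Finset.mul_sum] at hexp
  have hN' := natCard_cast_ne_zero N
  rw [mul_right_inj' (inv_ne_zero hG), mul_right_inj' hN'] at hexp
  rw [hexp, inflatedIrrChars, Finset.sum_filter]
  refine Finset.sum_congr rfl fun χ hχ => ?_
  split_ifs with h
  · rw [h.charPairing_res_one_eq_degree, charPairing_comm]
  · rw [(mem_irrChars.1 hχ).charPairing_res_one_of_not_kerContains N h, zero_mul]

end Normal

/-! ### Clifford's theorem on degrees and extendibility -/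

section Clifford

variable {G : Type} [Group G] [Finite G] {χ φ f : G → ℂ}

lemma eq_of_convolution_eq_smul {c : ℂ} (hf : f ∈ classFunctions G) (hφ : φ ∈ classFunctions G)
    (h : convolution f φ = c • φ) (hχ : IsIrrChar G χ) (hne : ⟪φ,χ⟫ ≠ 0) :
    c = Nat.card G * ⟪f,χ⟫ / χ 1 := by
  have hχ1 := hχ.degree_ne_zero
  have hassoc := congrFun (convolution_assoc f φ χ) 1
  rw [h, smul_convolution, hχ.convolution_eq_smul hφ, convolution_smul,
    hχ.convolution_eq_smul hf] at hassoc
  have hne' : Nat.card G * ⟪φ,χ⟫ / χ 1 * χ 1 ≠ 0 :=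
    mul_ne_zero (div_ne_zero (mul_ne_zero (natCard_cast_ne_zero G) hne) hχ1) hχ1
  apply mul_right_cancel₀ hne'
  simp only [Pi.smul_apply, smul_eq_mul] at hassoc
  rw [hassoc, mul_left_comm]

variable {N : Subgroup G} [N.Normal] {θ θ' : N → ℂ}

lemma IsIrrChar.charPairing_div_degree_eq (hχ : IsIrrChar G χ) {α : N → ℂ}
    (hα : ∀ g : G, α ∘ MulAut.conjNormal g = α) (hθ : IsIrrChar N θ) (hθ' : IsIrrChar N θ')
    (h : ⟪res N χ,θ⟫ ≠ 0) (h' : ⟪res N χ,θ'⟫ ≠ 0) : ⟪α,θ⟫ / θ 1 = ⟪α,θ'⟫ / θ' 1 := by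
  have hext := extendByZero_mem_classFunctions hα
  have hαN : α ∈ classFunctions N := by
    have hres : res N (extendByZero α) = α := funext fun n => extendByZero_coe α n
    exact hres ▸ res_mem_classFunctions N hext
  have hconv := congrArg (res N) (hχ.convolution_eq_smul hext)
  rw [res_convolution_extendByZero, map_smul] at hconv
  have hχN := res_mem_classFunctions N hχ.isChar.mem_classFunctions
  have heq := (eq_of_convolution_eq_smul hαN hχN hconv hθ h).symm.trans
    (eq_of_convolution_eq_smul hαN hχN hconv hθ' h')
  rwa [mul_div_assoc, mul_div_assoc, mul_right_inj' (natCard_cast_ne_zero N)] at heq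

variable (N) in
lemma sum_irrChars_comp_conjNormal (d : ℂ) (g : G) :
    (∑ η ∈ irrChars N with η 1 = d, η) ∘ MulAut.conjNormal g =
      ∑ η ∈ irrChars N with η 1 = d, η := by
  have hmem : ∀ (x : G), ∀ η ∈ (irrChars N).filter (fun η => η 1 = d),
      η ∘ MulAut.conjNormal x ∈ (irrChars N).filter (fun η => η 1 = d) := fun x η hη => by
    simp only [Finset.mem_filter, mem_irrChars, Function.comp_apply, map_one] at hη ⊢
    exact ⟨hη.1.comp_mulEquiv _, hη.2⟩
  have hcomp : ∀ x y : G, y * x = 1 → ∀ η : N → ℂ,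
      (η ∘ MulAut.conjNormal y) ∘ MulAut.conjNormal x = η := fun x y hxy η => by
    funext n
    simp only [Function.comp_apply, ← MulAut.mul_apply, ← map_mul, hxy, map_one, MulAut.one_apply]
  have hsum : (∑ η ∈ irrChars N with η 1 = d, η) ∘ MulAut.conjNormal g =
      ∑ η ∈ irrChars N with η 1 = d, η ∘ MulAut.conjNormal g := by
    funext n
    simp
  rw [hsum]
  exact Finset.sum_bij' (fun η _ => η ∘ MulAut.conjNormal g)
    (fun η _ => η ∘ MulAut.conjNormal g⁻¹) (hmem g) (hmem g⁻¹)
    (fun η _ => hcomp _ _ (mul_inv_cancel g) η) (fun η _ => hcomp _ _ (inv_mul_cancel g) η)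
    fun _ _ => rfl

lemma IsIrrChar.degree_eq_of_charPairing_res_ne_zero (hχ : IsIrrChar G χ) (hθ : IsIrrChar N θ)
    (hθ' : IsIrrChar N θ') (h : ⟪res N χ,θ⟫ ≠ 0) (h' : ⟪res N χ,θ'⟫ ≠ 0) : θ' 1 = θ 1 := by
  have hpair : ∀ η, IsIrrChar N η →
      ⟪∑ η ∈ irrChars N with η 1 = θ 1,η,η⟫ = if η 1 = θ 1 then 1 else 0 := fun η hη => by
    simpa [hη] using charPairing_sum_of_subset (s := {η ∈ irrChars N | η 1 = θ 1})
      (Finset.filter_subset _ _) 1 hη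
  have heq := hχ.charPairing_div_degree_eq (sum_irrChars_comp_conjNormal N (θ 1)) hθ hθ' h h'
  rw [hpair θ hθ, hpair θ' hθ', if_pos rfl] at heq
  by_contra hne
  rw [if_neg hne, zero_div] at heq
  exact div_ne_zero one_ne_zero hθ.degree_ne_zero heq

variable (N) in
omit [N.Normal] in
lemma IsChar.exists_isIrrChar_charPairing_res_ne_zero (hφ : IsChar φ) (h : ⟪res N φ,θ⟫ ≠ 0) :
    ∃ χ, IsIrrChar G χ ∧ IsChar (φ - χ) ∧ ⟪res N χ,θ⟫ ≠ 0 := by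
  induction hφ using IsChar.induction_on with
  | zero => simp at h
  | add χ φ hχ hφ ih =>
    by_cases h0 : ⟪res N χ,θ⟫ = 0
    · rw [map_add, map_add, LinearMap.add_apply, h0, zero_add] at h
      obtain ⟨ψ, hψ, hsub, hne⟩ := ih h
      exact ⟨ψ, hψ, add_sub_assoc χ φ ψ ▸ hχ.isChar.add hsub, hne⟩
    · exact ⟨χ, hχ, (add_sub_cancel_left χ φ).symm ▸ hφ, h0⟩

lemma IsChar.exists_isIrrChar_res_eq (hφ : IsChar φ) (hθ : IsIrrChar N θ) (h : ⟪res N φ,θ⟫ = 1)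
    (h' : ∀ η, IsIrrChar N η → η 1 = θ 1 → η ≠ θ → ⟪res N φ,η⟫ = 0) :
    ∃ χ, IsIrrChar G χ ∧ res N χ = θ := by
  obtain ⟨χ, hχ, hsub, hne⟩ := hφ.exists_isIrrChar_charPairing_res_ne_zero N
    (by rw [h]; exact one_ne_zero)
  refine ⟨χ, hχ, ?_⟩
  have hχθ : IsChar (res N χ - θ) :=
    (hχ.isChar.restrict N).isChar_sub_of_charPairing_ne_zero hθ hne
  by_contra hχne
  obtain ⟨η, hη, hηne⟩ := hχθ.exists_charPairing_ne_zero (sub_ne_zero.2 hχne)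
  have hηχ : ⟪res N χ,η⟫ ≠ 0 := fun h0 => hηne (hχθ.charPairing_eq_zero_of_isChar_sub
    (φ := res N χ) (by rw [sub_sub_cancel]; exact hθ.isChar) hη.isChar h0)
  have hdeg := hχ.degree_eq_of_charPairing_res_ne_zero hθ hη hne hηχ
  have hzero : ⟪res N φ - θ,η⟫ = 0 := by
    rw [map_sub, LinearMap.sub_apply, hθ.charPairing_eq hη]
    split_ifs with hθη
    · rw [← hθη, h, sub_self]
    · rw [h' η hη hdeg (Ne.symm hθη), sub_zero]
  refine hηne (hχθ.charPairing_eq_zero_of_isChar_sub (φ := res N φ - θ) ?_ hη.isChar hzero)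
  rw [sub_sub_sub_cancel_right, ← map_sub]
  exact hsub.restrict N

end Clifford

/-! ### Complex conjugation -/

section Conjugation

variable {G : Type} [Group G] {χ ψ : G → ℂ}

lemma IsIrrChar.exists_matrixRep (hχ : IsIrrChar G χ) :
    ∃ (n : ℕ) (ρ : G →* Matrix (Fin n) (Fin n) ℂ), χ = (fun g => (ρ g).trace) ∧ χ 1 = n := by
  obtain ⟨V, -, rfl⟩ := hχ.exists_fdRep
  let b := Module.finBasis ℂ V
  exact ⟨_, (LinearMap.toMatrixAlgEquiv b).toRingEquiv.toMulEquiv.toMonoidHom.comp V.ρ,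
    funext fun g => LinearMap.trace_eq_matrix_trace ℂ b (V.ρ g), V.char_one⟩

variable [Finite G]

-- The conjugate of `χ` is irreducible, and its pairing with `χᵛ` is the average of the `|χ g|²`.
lemma IsIrrChar.apply_inv (hχ : IsIrrChar G χ) (g : G) : χ g⁻¹ = starRingEnd ℂ (χ g) := by
  have := Fintype.ofFinite G
  let χ' : G → ℂ := fun g => starRingEnd ℂ (χ g)
  have hχ' : IsIrrChar G χ' := by
    refine IsChar.isIrrChar_of_charPairing_self_eq_one ?_ ?_
    · obtain ⟨n, ρ, rfl, -⟩ := hχ.exists_matrixRep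
      convert isChar_trace ((starRingEnd ℂ).mapMatrix.toMonoidHom.comp ρ) using 2 with g
      exact AddMonoidHom.map_trace (starRingEnd ℂ : ℂ →+ ℂ) (ρ g)
    · have h := congrArg (starRingEnd ℂ) hχ.charPairing_self
      simpa [charPairing_apply, χ'] using h
  have hne : ⟪χᵛ,χ'⟫ ≠ 0 := by
    rw [charPairing_apply]
    refine mul_ne_zero (inv_ne_zero (natCard_cast_ne_zero G)) fun h => ?_
    have hsum : ∑ g, Complex.normSq (χ g⁻¹) = 0 := by
      simp only [contragredient_apply, χ', Complex.mul_conj] at h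
      exact_mod_cast h
    have h1 := (Finset.sum_eq_zero_iff_of_nonneg fun g _ => Complex.normSq_nonneg (χ g⁻¹)).1 hsum 1
      (Finset.mem_univ _)
    exact hχ.degree_ne_zero (by simpa using h1)
  exact congrFun (hχ.contragredient.eq_of_charPairing_ne_zero hχ' hne) g

end Conjugation

/-! ### The adjoint character -/

/-- The character `χ χᵛ - 1` of the traceless endomorphisms of a representation with character
`χ`. -/
noncomputable def adjointChar {G : Type*} [Group G] (χ : G → ℂ) : G → ℂ := χ * χᵛ - 1

section Adjoint

variable {G : Type} [Group G] {χ ψ : G → ℂ}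

@[simp] lemma contragredient_adjointChar (χ : G → ℂ) : (adjointChar χ)ᵛ = adjointChar χ := by
  simp [adjointChar, mul_comm]

lemma mul_contragredient_eq (χ : G → ℂ) : χ * χᵛ = adjointChar χ + 1 := by
  simp [adjointChar]

lemma adjointChar_apply_one (χ : G → ℂ) : adjointChar χ 1 = χ 1 ^ 2 - 1 := by
  simp [adjointChar, sq]

variable [Finite G]

lemma IsIrrChar.charPairing_eq_zero_of_degree_ne (hχ : IsIrrChar G χ) (hψ : IsIrrChar G ψ)
    (h : χ 1 ≠ ψ 1) : ⟪χ,ψ⟫ = 0 :=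
  hχ.charPairing_of_ne hψ (ne_of_apply_ne (· 1) h)

lemma IsIrrChar.charPairing_one_of_degree_ne (hχ : IsIrrChar G χ) (h : χ 1 ≠ 1) : ⟪χ,1⟫ = 0 :=
  hχ.charPairing_eq_zero_of_degree_ne isIrrChar_one h

lemma IsIrrChar.charPairing_mul_contragredient_one (hχ : IsIrrChar G χ) : ⟪χ * χᵛ,1⟫ = 1 := by
  rw [charPairing_mul_left, contragredient_contragredient, mul_one, hχ.charPairing_self]

lemma IsIrrChar.isChar_adjointChar (hχ : IsIrrChar G χ) : IsChar (adjointChar χ) :=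
  (hχ.isChar.mul hχ.contragredient.isChar).isChar_sub_of_charPairing_ne_zero isIrrChar_one
    (hχ.charPairing_mul_contragredient_one ▸ one_ne_zero)

lemma IsIrrChar.charPairing_adjointChar_one (hχ : IsIrrChar G χ) : ⟪adjointChar χ,1⟫ = 0 := by
  rw [adjointChar, map_sub, LinearMap.sub_apply, hχ.charPairing_mul_contragredient_one,
    isIrrChar_one.charPairing_self, sub_self]

lemma IsIrrChar.charPairing_mul_self (hχ : IsIrrChar G χ) (hψ : IsIrrChar G ψ) :
    ⟪χ * ψ,χ * ψ⟫ = 1 + ⟪adjointChar χ,adjointChar ψ⟫ := by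
  rw [charPairing_mul_mul, mul_comm ψᵛ, mul_contragredient_eq, mul_contragredient_eq]
  simp only [map_add, LinearMap.add_apply, hχ.charPairing_adjointChar_one,
    charPairing_comm 1 (adjointChar ψ), hψ.charPairing_adjointChar_one,
    isIrrChar_one.charPairing_self]
  ring

lemma IsIrrChar.isIrrChar_mul (hχ : IsIrrChar G χ) (hψ : IsIrrChar G ψ)
    (h : ⟪adjointChar χ,adjointChar ψ⟫ = 0) : IsIrrChar G (χ * ψ) :=
  (hχ.isChar_mul hψ).isIrrChar_of_charPairing_self_eq_one (by
    rw [hχ.charPairing_mul_self hψ, h, add_zero])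

lemma charPairing_trace_one_ne_zero {ι : Type} [Fintype ι] [DecidableEq ι]
    (ρ : G →* Matrix ι ι ℂ) {w : ι → ℂ} (hw : w ≠ 0) (h : ∀ g, (ρ g).mulVec w = w) :
    ⟪fun g => (ρ g).trace,1⟫ ≠ 0 := by
  have := Fintype.ofFinite G
  let σ : Representation ℂ G (ι → ℂ) :=
    ((Matrix.toLinAlgEquiv' : Matrix ι ι ℂ ≃ₐ[ℂ] _) : Matrix ι ι ℂ →* _).comp ρ
  have hσ : σ.character = fun g => (ρ g).trace := funext fun g => Matrix.trace_toLin'_eq (ρ g)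
  have := invertibleOfNonzero (natCard_cast_ne_zero G)
  have hrank : ⟪fun g => (ρ g).trace,1⟫ = (Module.finrank ℂ σ.invariants : ℂ) := by
    rw [← σ.card_inv_mul_sum_char_eq_finrank, hσ, charPairing_apply]
    simp
  rw [hrank, Nat.cast_ne_zero]
  intro h0
  have hmem : w ∈ σ.invariants := fun g => h g
  rw [Submodule.finrank_eq_zero.1 h0] at hmem
  exact hw ((Submodule.mem_bot ℂ).1 hmem)

end Adjoint

/-! ### Perfect groups and their characters of degree two and three -/

lemma monoidHom_eq_one_of_isPerfect {G M : Type*} [Group G] [IsPerfect G] [CommMonoid M]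
    (f : G →* M) (g : G) : f g = 1 := by
  have h : g ∈ f.toHomUnits.ker :=
    Abelianization.commutator_subset_ker _ (IsPerfect.mem_commutator (g := g))
  exact congrArg Units.val h

section Perfect

variable {G : Type} [Group G] {χ φ τ τ' θ : G → ℂ}

lemma IsIrrChar.exists_matrixRep_of_degree_eq {n : ℕ} (hχ : IsIrrChar G χ) (h : χ 1 = n) :
    ∃ ρ : G →* Matrix (Fin n) (Fin n) ℂ, χ = fun g => (ρ g).trace := by
  obtain ⟨m, ρ, hρ, hm⟩ := hχ.exists_matrixRep
  obtain rfl : m = n := by exact_mod_cast hm.symm.trans h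
  exact ⟨ρ, hρ⟩

variable [IsPerfect G]

lemma det_eq_one_of_isPerfect {ι : Type*} [Fintype ι] [DecidableEq ι] (ρ : G →* Matrix ι ι ℂ)
    (g : G) : (ρ g).det = 1 :=
  monoidHom_eq_one_of_isPerfect (Matrix.detMonoidHom.comp ρ) g

lemma map_inv_eq_adjugate {ι : Type*} [Fintype ι] [DecidableEq ι] (ρ : G →* Matrix ι ι ℂ)
    (g : G) : ρ g⁻¹ = (ρ g).adjugate := by
  have h : (ρ g).adjugate * ρ g = 1 := by
    rw [Matrix.adjugate_mul, det_eq_one_of_isPerfect, one_smul]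
  rw [← one_mul (ρ g⁻¹), ← h, mul_assoc, ← map_mul, mul_inv_cancel, map_one, mul_one]

lemma IsIrrChar.eq_one_of_degree_eq_one (hχ : IsIrrChar G χ) (h : χ 1 = 1) : χ = 1 := by
  obtain ⟨ρ, rfl⟩ := hχ.exists_matrixRep_of_degree_eq (n := 1) (by rw [h, Nat.cast_one])
  funext g
  exact (Matrix.trace_fin_one (ρ g)).trans
    ((Matrix.det_fin_one (ρ g)).symm.trans (det_eq_one_of_isPerfect ρ g))

lemma IsIrrChar.contragredient_eq_of_degree_eq_two (hτ : IsIrrChar G τ) (hτ2 : τ 1 = 2) :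
    τᵛ = τ := by
  obtain ⟨ρ, rfl⟩ := hτ.exists_matrixRep_of_degree_eq (n := 2) (by exact_mod_cast hτ2)
  funext g
  rw [contragredient_apply, map_inv_eq_adjugate, Matrix.adjugate_fin_two]
  simp [Matrix.trace_fin_two, add_comm]

lemma IsIrrChar.apply_mul_self_of_degree_eq_two (hτ : IsIrrChar G τ) (hτ2 : τ 1 = 2) (g : G) :
    τ (g * g) = τ g ^ 2 - 2 := by
  obtain ⟨ρ, rfl⟩ := hτ.exists_matrixRep_of_degree_eq (n := 2) (by exact_mod_cast hτ2)
  have hdet := det_eq_one_of_isPerfect ρ g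
  rw [Matrix.det_fin_two] at hdet
  simp only [map_mul, Matrix.trace_fin_two, Matrix.mul_apply, Fin.sum_univ_two]
  linear_combination -2 * hdet

lemma IsIrrChar.apply_mul_self_of_degree_eq_three (hθ : IsIrrChar G θ) (hθ3 : θ 1 = 3) (g : G) :
    θ (g * g) = θ g ^ 2 - 2 * θ g⁻¹ := by
  obtain ⟨ρ, rfl⟩ := hθ.exists_matrixRep_of_degree_eq (n := 3) (by exact_mod_cast hθ3)
  simp only [map_mul, map_inv_eq_adjugate, Matrix.adjugate_fin_three, Matrix.trace_fin_three,
    Matrix.mul_apply, Fin.sum_univ_three, Matrix.of_apply, Matrix.cons_val]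
  ring

/-- The alternating tensor on a three-dimensional space: the sign of `(i, j, k)` as a permutation of
`(0, 1, 2)`, or zero if two indices coincide, written as a Vandermonde product. -/
noncomputable def alternatingTensor (p : Fin 3 × Fin 3 × Fin 3) : ℂ :=
  ((p.2.1 : ℕ) - (p.1 : ℕ)) * ((p.2.2 : ℕ) - (p.1 : ℕ)) * ((p.2.2 : ℕ) - (p.2.1 : ℕ)) / 2

lemma alternatingTensor_ne_zero : alternatingTensor ≠ 0 := fun h => by
  have := congrFun h (0, 1, 2)
  norm_num [alternatingTensor] at this

open scoped Kronecker in
lemma kronecker_mulVec_alternatingTensor {A : Matrix (Fin 3) (Fin 3) ℂ} (hA : A.det = 1) :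
    (A ⊗ₖ (A ⊗ₖ A)).mulVec alternatingTensor = alternatingTensor := by
  rw [Matrix.det_fin_three] at hA
  funext ⟨i, j, k⟩
  simp only [Matrix.mulVec, dotProduct, Fintype.sum_prod_type, Fin.sum_univ_three,
    Matrix.kroneckerMap_apply, alternatingTensor]
  have h2 : ∀ p, (⟨2, p⟩ : Fin 3) = 2 := fun _ => rfl
  fin_cases i <;> fin_cases j <;> fin_cases k <;> norm_num [h2] <;>
    first
      | ring1
      | linear_combination hA
      | linear_combination -hA

variable [Finite G]

open scoped Kronecker in
lemma IsIrrChar.charPairing_mul_self_contragredient_ne_zero (hθ : IsIrrChar G θ)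
    (hθ3 : θ 1 = 3) : ⟪θ * θ,θᵛ⟫ ≠ 0 := by
  obtain ⟨ρ, rfl⟩ := hθ.exists_matrixRep_of_degree_eq (n := 3) (by exact_mod_cast hθ3)
  let ρ₃ : G →* Matrix (Fin 3 × Fin 3 × Fin 3) (Fin 3 × Fin 3 × Fin 3) ℂ :=
    { toFun := fun g => ρ g ⊗ₖ (ρ g ⊗ₖ ρ g)
      map_one' := by rw [map_one, Matrix.one_kronecker_one, Matrix.one_kronecker_one]
      map_mul' := fun g h => by rw [map_mul, Matrix.mul_kronecker_mul, Matrix.mul_kronecker_mul] }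
  have hfix := charPairing_trace_one_ne_zero ρ₃ alternatingTensor_ne_zero fun g =>
    kronecker_mulVec_alternatingTensor (det_eq_one_of_isPerfect ρ g)
  have htr : (fun g => (ρ₃ g).trace) =
      (fun g => (ρ g).trace) * ((fun g => (ρ g).trace) * fun g => (ρ g).trace) :=
    funext fun g => (Matrix.trace_kronecker _ _).trans (by rw [Matrix.trace_kronecker]; rfl)
  rwa [htr, mul_comm, charPairing_mul_left, mul_one] at hfix

lemma IsChar.isIrrChar_of_degree_lt_eight {d : ℕ} (hφ : IsChar φ) (hd : φ 1 = d) (hd0 : 0 < d)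
    (hd8 : d < 8) (h1 : 2 ≤ d → ⟪φ,1⟫ = 0)
    (h2 : 4 ≤ d → ∀ χ, IsIrrChar G χ → χ 1 = 2 → ⟪φ,χ⟫ = 0)
    (h3 : 6 ≤ d → ∀ χ, IsIrrChar G χ → χ 1 = 3 → ⟪φ,χ⟫ = 0) : IsIrrChar G φ := by
  refine hφ.isIrrChar_of_charPairing_eq_zero hd hd0 fun χ k hχ hk hkd => ?_
  have hk0 : k ≠ 0 := by
    rintro rfl
    exact hχ.degree_ne_zero (by rw [hk, Nat.cast_zero])
  obtain rfl | rfl | rfl : k = 1 ∨ k = 2 ∨ k = 3 := by lia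
  · rw [hχ.eq_one_of_degree_eq_one (by exact_mod_cast hk)]
    exact h1 (by lia)
  · exact h2 (by lia) χ hχ (by exact_mod_cast hk)
  · exact h3 (by lia) χ hχ (by exact_mod_cast hk)

lemma IsChar.isIrrChar_of_degree_eq_two (hφ : IsChar φ) (hd : φ 1 = 2) (h1 : ⟪φ,1⟫ = 0) :
    IsIrrChar G φ :=
  hφ.isIrrChar_of_degree_lt_eight (d := 2) (by exact_mod_cast hd) (by lia) (by lia) (fun _ => h1)
    (by lia) (by lia)

lemma IsChar.isIrrChar_of_degree_eq_three (hφ : IsChar φ) (hd : φ 1 = 3) (h1 : ⟪φ,1⟫ = 0) :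
    IsIrrChar G φ :=
  hφ.isIrrChar_of_degree_lt_eight (d := 3) (by exact_mod_cast hd) (by lia) (by lia) (fun _ => h1)
    (by lia) (by lia)

lemma IsChar.exists_eq_add_of_degree_eq_four (hφ : IsChar φ) (hd : φ 1 = 4) (h1 : ⟪φ,1⟫ = 0)
    (hirr : ¬ IsIrrChar G φ) :
    ∃ χ ψ, IsIrrChar G χ ∧ IsIrrChar G ψ ∧ χ 1 = 2 ∧ ψ 1 = 2 ∧ φ = χ + ψ := by
  have hφ0 : φ ≠ 0 := by
    rintro rfl
    norm_num at hd
  obtain h | ⟨χ, ψ, a, b, hχ, hψ, rfl, ha, hb, ha0, hab⟩ := hφ.isIrrChar_or_eq_add hφ0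
  · exact absurd h hirr
  have hsum : a + b = 4 := by
    rw [Pi.add_apply, ha, hb] at hd
    exact_mod_cast hd
  have hχ1 : ⟪χ,1⟫ = 0 := hχ.isChar.charPairing_eq_zero_of_isChar_sub
    ((add_sub_cancel_left χ ψ).symm ▸ hψ) isIrrChar_one.isChar h1
  have hψ1 : ⟪ψ,1⟫ = 0 := hψ.charPairing_eq_zero_of_isChar_sub
    ((add_sub_cancel_right χ ψ).symm ▸ hχ.isChar) isIrrChar_one.isChar h1
  have ha1 : a ≠ 1 := by
    rintro rfl
    rw [hχ.eq_one_of_degree_eq_one (by exact_mod_cast ha), isIrrChar_one.charPairing_self] at hχ1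
    exact one_ne_zero hχ1
  obtain ⟨rfl, rfl⟩ : a = 2 ∧ b = 2 := by lia
  norm_cast at ha hb
  exact ⟨χ, ψ, hχ, hψ.isIrrChar_of_degree_eq_two hb hψ1, ha, hb, rfl⟩

end Perfect

/-! ### Symmetric powers of characters of degree two -/

section DegreeTwo

variable {G : Type} [Group G] {τ τ' α : G → ℂ}

/-- The character of `Sym³ V`, where `τ` is the character of a two-dimensional representation `V` of
determinant one. -/
noncomputable def symPowThree (τ : G → ℂ) : G → ℂ := τ * adjointChar τ - τ

lemma symPowThree_apply_one (hτ2 : τ 1 = 2) : symPowThree τ 1 = 4 := by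
  norm_num [symPowThree, adjointChar_apply_one, hτ2]

lemma adjointChar_apply_one_of_degree_eq_two (hτ2 : τ 1 = 2) : adjointChar τ 1 = 3 := by
  rw [adjointChar_apply_one, hτ2]
  norm_num

variable [IsPerfect G]

lemma IsIrrChar.mul_self_eq_of_degree_eq_two (hτ : IsIrrChar G τ) (hτ2 : τ 1 = 2) :
    τ * τ = adjointChar τ + 1 := by
  rw [← mul_contragredient_eq, hτ.contragredient_eq_of_degree_eq_two hτ2]

variable [Finite G]

lemma IsIrrChar.isIrrChar_adjointChar (hτ : IsIrrChar G τ) (hτ2 : τ 1 = 2) :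
    IsIrrChar G (adjointChar τ) :=
  hτ.isChar_adjointChar.isIrrChar_of_degree_eq_three (adjointChar_apply_one_of_degree_eq_two hτ2)
    hτ.charPairing_adjointChar_one

lemma IsIrrChar.adjointChar_eq_of_charPairing_mul_ne_zero (hτ : IsIrrChar G τ) (hτ2 : τ 1 = 2)
    (hτ' : IsIrrChar G τ') (hτ'2 : τ' 1 = 2) (hα : IsIrrChar G α) (hα2 : α 1 = 2)
    (h : ⟪τ * τ',α⟫ ≠ 0) : adjointChar α = adjointChar τ := by
  by_contra hne
  have hirr : IsIrrChar G (τ * α) := hτ.isIrrChar_mul hα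
    ((hτ.isIrrChar_adjointChar hτ2).charPairing_of_ne (hα.isIrrChar_adjointChar hα2) (Ne.symm hne))
  refine h ?_
  rw [mul_comm, charPairing_mul_left, hτ.contragredient_eq_of_degree_eq_two hτ2]
  exact hτ'.charPairing_eq_zero_of_degree_ne hirr (by norm_num [hτ2, hτ'2, hα2])

lemma mul_self_mul_self_eq {x y a b : ℂ} (h : x * y = a + b) (ha : a * a = x * x)
    (hb : b * b = x * x) (hy : y * y = x * x) : x * x * (x * x) = 4 * (x * x) := by
  have hsq : x * x * (x * x) = (a + b) ^ 2 := by
    rw [← h]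
    linear_combination - x * x * hy
  have hab : (a - b) * (a + b) = 0 := by linear_combination ha - hb
  obtain h0 | h0 := mul_eq_zero.1 hab
  · obtain rfl : a = b := sub_eq_zero.1 h0
    linear_combination hsq + 4 * ha
  · have hx : x * x = 0 := mul_self_eq_zero.1 (by rw [hsq, h0, sq, zero_mul])
    rw [hx, zero_mul, mul_zero]

-- If `τ ≠ τ'`, then `τ τ'` is a sum of two characters whose squares are again `τ ^ 2`. Pointwise
-- this forces `τ ^ 4 = 4 τ ^ 2`, but `1` occurs twice in `τ ^ 4` and once in `τ ^ 2`.
lemma IsIrrChar.eq_of_adjointChar_eq (hτ : IsIrrChar G τ) (hτ2 : τ 1 = 2) (hτ' : IsIrrChar G τ')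
    (hτ'2 : τ' 1 = 2) (h : adjointChar τ = adjointChar τ') : τ = τ' := by
  by_contra hne
  have hnorm : ⟪adjointChar τ,adjointChar τ⟫ = 1 := (hτ.isIrrChar_adjointChar hτ2).charPairing_self
  have hone : ⟪τ * τ',1⟫ = 0 := by
    rw [charPairing_mul_left, mul_one, hτ'.contragredient_eq_of_degree_eq_two hτ'2,
      hτ.charPairing_of_ne hτ' hne]
  have hred : ¬ IsIrrChar G (τ * τ') := fun hirr => by
    have := hτ.charPairing_mul_self hτ'
    rw [hirr.charPairing_self, ← h, hnorm] at this
    norm_num at this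
  obtain ⟨α, β, hα, hβ, hα2, hβ2, hsum⟩ := (hτ.isChar_mul hτ').exists_eq_add_of_degree_eq_four
    (by norm_num [hτ2, hτ'2]) hone hred
  have hαα : adjointChar α = adjointChar τ :=
    hτ.adjointChar_eq_of_charPairing_mul_ne_zero hτ2 hτ' hτ'2 hα hα2
      (hsum ▸ hα.charPairing_add_self_ne_zero hβ.isChar)
  have hββ : adjointChar β = adjointChar τ :=
    hτ.adjointChar_eq_of_charPairing_mul_ne_zero hτ2 hτ' hτ'2 hβ hβ2
      (hsum ▸ add_comm β α ▸ hβ.charPairing_add_self_ne_zero hα.isChar)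
  have hfour : (τ * τ) * (τ * τ) = (4 : ℂ) • (τ * τ) := by
    have eα := (hα.mul_self_eq_of_degree_eq_two hα2).trans (congrArg (· + 1) hαα)
    have eβ := (hβ.mul_self_eq_of_degree_eq_two hβ2).trans (congrArg (· + 1) hββ)
    have eτ' := (hτ'.mul_self_eq_of_degree_eq_two hτ'2).trans (congrArg (· + 1) h.symm)
    rw [← hτ.mul_self_eq_of_degree_eq_two hτ2] at eα eβ eτ'
    funext g
    exact mul_self_mul_self_eq (congrFun hsum g) (congrFun eα g) (congrFun eβ g) (congrFun eτ' g)
  have hpair := congrArg (⟪·,1⟫) hfour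
  simp only [map_smul, LinearMap.smul_apply, charPairing_mul_left, mul_one, contragredient_mul,
    hτ.contragredient_eq_of_degree_eq_two hτ2, hτ.charPairing_self, hτ.charPairing_mul_self hτ,
    hnorm] at hpair
  norm_num at hpair

lemma IsIrrChar.isIrrChar_mul_of_degree_eq_two (hτ : IsIrrChar G τ) (hτ2 : τ 1 = 2)
    (hτ' : IsIrrChar G τ') (hτ'2 : τ' 1 = 2) (hne : τ ≠ τ') : IsIrrChar G (τ * τ') :=
  hτ.isIrrChar_mul hτ' ((hτ.isIrrChar_adjointChar hτ2).charPairing_of_ne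
    (hτ'.isIrrChar_adjointChar hτ'2) fun h => hne (hτ.eq_of_adjointChar_eq hτ2 hτ' hτ'2 h))

lemma IsIrrChar.isIrrChar_symPowThree (hτ : IsIrrChar G τ) (hτ2 : τ 1 = 2) :
    IsIrrChar G (symPowThree τ) := by
  have hdual := hτ.contragredient_eq_of_degree_eq_two hτ2
  have hσ := hτ.isIrrChar_adjointChar hτ2
  have hσ3 := adjointChar_apply_one_of_degree_eq_two hτ2
  have hself : ⟪τ * adjointChar τ,τ⟫ = 1 := by
    rw [mul_comm, charPairing_mul_left, hdual, hτ.mul_self_eq_of_degree_eq_two hτ2, map_add,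
      hσ.charPairing_self, hτ.charPairing_adjointChar_one, add_zero]
  refine ((hτ.isChar_mul hσ).isChar_sub_of_charPairing_ne_zero hτ
    (hself ▸ one_ne_zero)).isIrrChar_of_degree_lt_eight (d := 4)
    (by exact_mod_cast symPowThree_apply_one hτ2) (by lia) (by lia) (fun _ => ?_)
    (fun _ τ' hτ' hτ'2 => ?_) (by lia)
  · rw [symPowThree, map_sub, LinearMap.sub_apply, charPairing_mul_left, mul_one,
      contragredient_adjointChar,
      hτ.charPairing_eq_zero_of_degree_ne hσ (by norm_num [hτ2, hσ3]),
      hτ.charPairing_one_of_degree_ne (by norm_num [hτ2]), sub_self]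
  · rw [symPowThree, map_sub, LinearMap.sub_apply]
    obtain rfl | hne := eq_or_ne τ τ'
    · rw [hself, hτ.charPairing_self, sub_self]
    · rw [hτ.charPairing_of_ne hτ' hne, mul_comm, charPairing_mul_left, hdual,
        hσ.charPairing_eq_zero_of_degree_ne (hτ.isIrrChar_mul_of_degree_eq_two hτ2 hτ' hτ'2 hne)
          (by norm_num [hσ3, hτ2, hτ'2]), sub_self]

end DegreeTwo

/-! ### Characters of degree two in `θ θᵛ` for `θ` of degree three -/

section DegreeThree

variable {G : Type} [Group G] {θ τ κ κ' : G → ℂ}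

lemma adjointChar_apply_one_of_degree_eq_three (hθ3 : θ 1 = 3) : adjointChar θ 1 = 8 := by
  rw [adjointChar_apply_one, hθ3]
  norm_num

variable [Finite G] [IsPerfect G]

lemma IsIrrChar.charPairing_mul_eq_charPairing_adjointChar (hτ : IsIrrChar G τ) (hτ2 : τ 1 = 2)
    (θ : G → ℂ) : ⟪θ * τ,θ⟫ = ⟪adjointChar θ,τ⟫ := by
  rw [adjointChar, map_sub, LinearMap.sub_apply, charPairing_comm 1,
    hτ.charPairing_one_of_degree_ne (by norm_num [hτ2]), sub_zero, charPairing_mul_left,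
    charPairing_mul_left, hτ.contragredient_eq_of_degree_eq_two hτ2, contragredient_contragredient,
    mul_comm]

lemma IsIrrChar.isIrrChar_mul_sub_self (hθ : IsIrrChar G θ) (hθ3 : θ 1 = 3) (hτ : IsIrrChar G τ)
    (hτ2 : τ 1 = 2) (h : ⟪adjointChar θ,τ⟫ ≠ 0) : IsIrrChar G (θ * τ - θ) := by
  rw [← hτ.charPairing_mul_eq_charPairing_adjointChar hτ2] at h
  refine ((hθ.isChar_mul hτ).isChar_sub_of_charPairing_ne_zero hθ h).isIrrChar_of_degree_eq_three
    (by norm_num [hθ3, hτ2]) ?_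
  rw [map_sub, LinearMap.sub_apply, charPairing_mul_left, mul_one,
    hτ.contragredient_eq_of_degree_eq_two hτ2,
    hθ.charPairing_eq_zero_of_degree_ne hτ (by norm_num [hθ3, hτ2]),
    hθ.charPairing_one_of_degree_ne (by norm_num [hθ3]), sub_self]

lemma IsIrrChar.charPairing_adjointChar_adjointChar_ne_zero (hθ : IsIrrChar G θ)
    (hθ3 : θ 1 = 3) (hτ : IsIrrChar G τ) (hτ2 : τ 1 = 2) (h : ⟪adjointChar θ,τ⟫ ≠ 0) :
    ⟪adjointChar θ,adjointChar τ⟫ ≠ 0 := fun h0 => by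
  rw [← hτ.charPairing_mul_eq_charPairing_adjointChar hτ2] at h
  exact h ((hθ.isIrrChar_mul hτ h0).charPairing_eq_zero_of_degree_ne hθ
    (by norm_num [hθ3, hτ2]))

lemma IsIrrChar.exists_adjointChar_eq_add (hθ : IsIrrChar G θ) (hθ3 : θ 1 = 3)
    (hτ : IsIrrChar G τ) (hτ2 : τ 1 = 2) (h : ⟪adjointChar θ,τ⟫ ≠ 0) :
    ∃ κ, IsIrrChar G κ ∧ κ 1 = 3 ∧ κᵛ = κ ∧ adjointChar θ = τ + adjointChar τ + κ := by
  have hσ := hτ.isIrrChar_adjointChar hτ2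
  have hσ3 := adjointChar_apply_one_of_degree_eq_two hτ2
  have hτσ : ⟪τ,adjointChar τ⟫ = 0 :=
    hτ.charPairing_eq_zero_of_degree_ne hσ (by norm_num [hτ2, hσ3])
  have hsub := (hθ.isChar_adjointChar.isChar_sub_of_charPairing_ne_zero hτ
    h).isChar_sub_of_charPairing_ne_zero hσ (by
      rw [map_sub, LinearMap.sub_apply, hτσ, sub_zero]
      exact hθ.charPairing_adjointChar_adjointChar_ne_zero hθ3 hτ hτ2 h)
  have hdeg : (adjointChar θ - τ - adjointChar τ) 1 = 3 := by
    norm_num [adjointChar_apply_one, hθ3, hτ2]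
  refine ⟨_, hsub.isIrrChar_of_degree_eq_three hdeg ?_, hdeg, ?_, by abel⟩
  · simp only [map_sub, LinearMap.sub_apply, hθ.charPairing_adjointChar_one,
      hτ.charPairing_adjointChar_one, hτ.charPairing_one_of_degree_ne (by norm_num [hτ2]), sub_zero]
  · simp [hτ.contragredient_eq_of_degree_eq_two hτ2]

lemma IsIrrChar.ne_adjointChar_of_eq_add (hθ : IsIrrChar G θ) (hθ3 : θ 1 = 3)
    (hτ : IsIrrChar G τ) (hτ2 : τ 1 = 2) (h : ⟪adjointChar θ,τ⟫ ≠ 0)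
    (hdec : adjointChar θ = τ + adjointChar τ + κ) : κ ≠ adjointChar τ := by
  rintro rfl
  have hlam := hθ.isIrrChar_mul_sub_self hθ3 hτ hτ2 h
  have hσ := hτ.isIrrChar_adjointChar hτ2
  have hthree : ⟪θ * τ,θ * τ⟫ = 3 := by
    rw [hθ.charPairing_mul_self hτ, hdec]
    simp only [map_add, LinearMap.add_apply, hσ.charPairing_self,
      hτ.charPairing_eq_zero_of_degree_ne hσ (by
        norm_num [hτ2, adjointChar_apply_one_of_degree_eq_two hτ2])]
    norm_num
  have hsum : ⟪θ * τ,θ * τ⟫ = 2 + 2 * ⟪θ,θ * τ - θ⟫ := by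
    rw [← add_sub_cancel θ (θ * τ)]
    generalize θ * τ - θ = lam at hlam
    simp only [map_add, LinearMap.add_apply, hθ.charPairing_self, hlam.charPairing_self,
      charPairing_comm lam θ, add_sub_cancel_left]
    ring
  rw [hthree, hθ.charPairing_eq hlam] at hsum
  split_ifs at hsum <;> norm_num at hsum

lemma IsIrrChar.charPairing_mul_self_ne_zero_of_eq_add (hθ : IsIrrChar G θ) (hθ3 : θ 1 = 3)
    (hτ : IsIrrChar G τ) (hτ2 : τ 1 = 2) (h : ⟪adjointChar θ,τ⟫ ≠ 0) (hκ : IsIrrChar G κ)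
    (hκ3 : κ 1 = 3) (hne : κ ≠ adjointChar τ)
    (hdec : adjointChar θ = τ + adjointChar τ + κ) : ⟪τ * κ,κ⟫ ≠ 0 := by
  have hσ := hτ.isIrrChar_adjointChar hτ2
  have hθθ : θ * θᵛ = τ + adjointChar τ + κ + 1 := by rw [mul_contragredient_eq, hdec]
  have hleft : τ * (θ * θᵛ) =
      κ + (1 + τ + adjointChar τ + (θ * τ - θ) * θᵛ) := by
    linear_combination hθθ
  have hright : τ * (θ * θᵛ) = τ * κ + (2 • τ + adjointChar τ + 1 + symPowThree τ) := by
    rw [hθθ, symPowThree]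
    linear_combination hτ.mul_self_eq_of_degree_eq_two hτ2
  have hchar : IsChar (1 + τ + adjointChar τ + (θ * τ - θ) * θᵛ) :=
    ((isIrrChar_one.isChar.add hτ.isChar).add hσ.isChar).add
      ((hθ.isIrrChar_mul_sub_self hθ3 hτ hτ2 h).isChar_mul hθ.contragredient)
  have hpair : ⟪τ * (θ * θᵛ),κ⟫ = ⟪τ * κ,κ⟫ := by
    rw [hright]
    simp only [map_add, LinearMap.add_apply, map_nsmul, LinearMap.smul_apply,
      hτ.charPairing_eq_zero_of_degree_ne hκ (by norm_num [hτ2, hκ3]),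
      hσ.charPairing_of_ne hκ hne.symm,
      isIrrChar_one.charPairing_eq_zero_of_degree_ne hκ (by norm_num [hκ3]),
      (hτ.isIrrChar_symPowThree hτ2).charPairing_eq_zero_of_degree_ne hκ
        (by norm_num [symPowThree_apply_one hτ2, hκ3]), smul_zero, add_zero]
  rw [← hpair, hleft]
  exact hκ.charPairing_add_self_ne_zero hchar

-- The relation at `g` and at `g * g` combine to `(τ ^ 2 + τ - 1) (τ + 1 - κ) = 0`; the trivial
-- character occurs exactly once in the expansion of the left-hand side.
lemma IsIrrChar.adjointChar_ne_add_self (hκ : IsIrrChar G κ) (hκ3 : κ 1 = 3) (hdual : κᵛ = κ)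
    (hτ : IsIrrChar G τ) (hτ2 : τ 1 = 2) (hne : κ ≠ adjointChar τ) :
    adjointChar κ ≠ τ + adjointChar τ + κ := fun hdec => by
  have hττ := hτ.mul_self_eq_of_degree_eq_two hτ2
  have hσ := hτ.isIrrChar_adjointChar hτ2
  have hσ3 := adjointChar_apply_one_of_degree_eq_two hτ2
  have hκκ : κ * κ = τ + τ * τ + κ := by
    rw [hττ]
    linear_combination hdec + (congrArg (κ * ·) hdual).symm.trans (mul_contragredient_eq κ)
  have hzero : adjointChar τ * τ + 2 • adjointChar τ + 1 + τ = adjointChar τ * κ + τ * κ := by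
    have hprod : (τ * τ - 1 + τ) * (τ + 1 - κ) = 0 := by
      funext g
      have h1 := congrFun hκκ g
      have h2 := congrFun hκκ (g * g)
      have hinv : κ g⁻¹ = κ g := congrFun hdual g
      simp only [Pi.mul_apply, Pi.add_apply, hτ.apply_mul_self_of_degree_eq_two hτ2,
        hκ.apply_mul_self_of_degree_eq_three hκ3, hinv] at h1 h2
      simp only [Pi.mul_apply, Pi.add_apply, Pi.sub_apply, Pi.one_apply, Pi.zero_apply]
      linear_combination (1 / 2 : ℂ) * h2 - (1 / 2 : ℂ) * (κ g ^ 2 - 3 * κ g + τ g + τ g ^ 2) * h1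
    linear_combination hprod - (τ + 2 - κ) * hττ
  have hpair := congrArg (⟪·,1⟫) hzero
  simp only [map_add, LinearMap.add_apply, map_nsmul, LinearMap.smul_apply, charPairing_mul_left,
    mul_one, hdual, hτ.contragredient_eq_of_degree_eq_two hτ2, hτ.charPairing_adjointChar_one,
    hσ.charPairing_eq_zero_of_degree_ne hτ (by norm_num [hσ3, hτ2]),
    hσ.charPairing_of_ne hκ hne.symm, isIrrChar_one.charPairing_self,
    hτ.charPairing_one_of_degree_ne (by norm_num [hτ2]),
    hτ.charPairing_eq_zero_of_degree_ne hκ (by norm_num [hτ2, hκ3])] at hpair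
  norm_num at hpair

-- A character `τ` occurring in `θ θᵛ` would make `θ θᵛ = 1 + τ + adjointChar τ + κ` with `κ`
-- self-dual of degree three, and the same would hold with `κ` in place of `θ`.
lemma IsIrrChar.charPairing_adjointChar_eq_zero (hθ : IsIrrChar G θ) (hθ3 : θ 1 = 3)
    (hτ : IsIrrChar G τ) (hτ2 : τ 1 = 2) : ⟪adjointChar θ,τ⟫ = 0 := by
  by_contra h
  obtain ⟨κ, hκ, hκ3, hdual, hdec⟩ := hθ.exists_adjointChar_eq_add hθ3 hτ hτ2 h
  have hne := hθ.ne_adjointChar_of_eq_add hθ3 hτ hτ2 h hdec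
  have hκτ : ⟪adjointChar κ,τ⟫ ≠ 0 := by
    rw [← hτ.charPairing_mul_eq_charPairing_adjointChar hτ2, mul_comm]
    exact hθ.charPairing_mul_self_ne_zero_of_eq_add hθ3 hτ hτ2 h hκ hκ3 hne hdec
  obtain ⟨κ', hκ', -, -, hdec'⟩ := hκ.exists_adjointChar_eq_add hκ3 hτ hτ2 hκτ
  have hκκ : ⟪adjointChar κ,κ⟫ ≠ 0 := by
    have := hκ.charPairing_mul_self_contragredient_ne_zero hκ3
    rwa [← hdual, contragredient_contragredient, hdual, ← congrArg (κ * ·) hdual,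
      mul_contragredient_eq, map_add, LinearMap.add_apply,
      isIrrChar_one.charPairing_eq_zero_of_degree_ne hκ (by norm_num [hκ3]), add_zero] at this
  have hκκ' : ⟪κ',κ⟫ ≠ 0 := by
    simpa only [hdec', map_add, LinearMap.add_apply, zero_add,
      hτ.charPairing_eq_zero_of_degree_ne hκ (by norm_num [hτ2, hκ3]),
      (hτ.isIrrChar_adjointChar hτ2).charPairing_of_ne hκ hne.symm] using hκκ
  obtain rfl := hκ'.eq_of_charPairing_ne_zero hκ hκκ'
  exact hκ'.adjointChar_ne_add_self hκ3 hdual hτ hτ2 hne hdec'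

end DegreeThree

section Symmetric

variable {G : Type} [Group G] {σ τ : G → ℂ}

/-- For a self-dual character `σ` of degree three, the character of the traceless part of `Sym²`. -/
noncomputable def tracelessSymSq (σ : G → ℂ) : G → ℂ := adjointChar σ - σ

/-- The character of `Sym⁵ V`, where `τ` is the character of a two-dimensional representation `V` of
determinant one; `Sym² V` has character `adjointChar τ`, and its traceless symmetric square is
`Sym⁴ V`. -/
noncomputable def symPowFive (τ : G → ℂ) : G → ℂ :=
  τ * tracelessSymSq (adjointChar τ) - symPowThree τ

lemma tracelessSymSq_apply_one (hσ3 : σ 1 = 3) : tracelessSymSq σ 1 = 5 := by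
  norm_num [tracelessSymSq, adjointChar_apply_one, hσ3]

lemma symPowFive_apply_one (hτ2 : τ 1 = 2) : symPowFive τ 1 = 6 := by
  rw [symPowFive, Pi.sub_apply, Pi.mul_apply, symPowThree_apply_one hτ2, hτ2,
    tracelessSymSq_apply_one (adjointChar_apply_one_of_degree_eq_two hτ2)]
  norm_num

lemma mul_self_eq_of_contragredient_eq (hdual : σᵛ = σ) : σ * σ = tracelessSymSq σ + σ + 1 := by
  rw [tracelessSymSq, sub_add_cancel, ← mul_contragredient_eq, hdual]

variable [IsPerfect G]

lemma IsIrrChar.mul_symPowThree_eq (hτ : IsIrrChar G τ) (hτ2 : τ 1 = 2) :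
    τ * symPowThree τ = adjointChar τ + tracelessSymSq (adjointChar τ) := by
  rw [symPowThree]
  linear_combination mul_self_eq_of_contragredient_eq (contragredient_adjointChar τ) +
    (adjointChar τ - 1) * hτ.mul_self_eq_of_degree_eq_two hτ2

variable [Finite G]

lemma IsIrrChar.isIrrChar_tracelessSymSq (hσ : IsIrrChar G σ) (hσ3 : σ 1 = 3) (hdual : σᵛ = σ) :
    IsIrrChar G (tracelessSymSq σ) := by
  have hσ1 : ⟪σ,1⟫ = 0 := hσ.charPairing_one_of_degree_ne (by norm_num [hσ3])
  have hne : ⟪adjointChar σ,σ⟫ ≠ 0 := by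
    have h := hσ.charPairing_mul_self_contragredient_ne_zero hσ3
    rwa [hdual, mul_self_eq_of_contragredient_eq hdual, tracelessSymSq, sub_add_cancel, map_add,
      LinearMap.add_apply, charPairing_comm 1, hσ1, add_zero] at h
  refine (hσ.isChar_adjointChar.isChar_sub_of_charPairing_ne_zero hσ
    hne).isIrrChar_of_degree_lt_eight (d := 5) (by exact_mod_cast tracelessSymSq_apply_one hσ3)
    (by lia) (by lia) (fun _ => ?_) (fun _ τ hτ hτ2 => ?_) (by lia)
  · rw [tracelessSymSq, map_sub, LinearMap.sub_apply, hσ.charPairing_adjointChar_one, hσ1, sub_zero]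
  · rw [tracelessSymSq, map_sub, LinearMap.sub_apply, hσ.charPairing_adjointChar_eq_zero hσ3 hτ hτ2,
      hσ.charPairing_eq_zero_of_degree_ne hτ (by norm_num [hσ3, hτ2]), sub_zero]

lemma IsChar.charPairing_one_ne_zero_of_degree_eq_one {φ : G → ℂ} (hφ : IsChar φ)
    (h : φ 1 = 1) : ⟪φ,1⟫ ≠ 0 := by
  have hirr : IsIrrChar G φ := hφ.isIrrChar_of_degree_lt_eight (d := 1) (by exact_mod_cast h)
    (by lia) (by lia) (by lia) (by lia) (by lia)
  rw [hirr.eq_one_of_degree_eq_one h, isIrrChar_one.charPairing_self]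
  exact one_ne_zero

lemma IsIrrChar.charPairing_mul_degree_three_degree_five {κ η : G → ℂ} (hτ : IsIrrChar G τ)
    (hτ2 : τ 1 = 2) (hκ : IsIrrChar G κ) (hκ3 : κ 1 = 3) (hη : IsIrrChar G η) (hη5 : η 1 = 5) :
    ⟪τ * κ,η⟫ = 0 := by
  by_contra hne
  refine ((hτ.isChar_mul hκ).isChar_sub_of_charPairing_ne_zero hη
    hne).charPairing_one_ne_zero_of_degree_eq_one (by norm_num [hτ2, hκ3, hη5]) ?_
  rw [map_sub, LinearMap.sub_apply, hη.charPairing_one_of_degree_ne (by norm_num [hη5]),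
    charPairing_mul_left, mul_one, hτ.charPairing_eq_zero_of_degree_ne hκ.contragredient
      (by norm_num [hτ2, hκ3]), sub_zero]

lemma IsIrrChar.isIrrChar_symPowFive (hτ : IsIrrChar G τ) (hτ2 : τ 1 = 2) :
    IsIrrChar G (symPowFive τ) := by
  have hdual := hτ.contragredient_eq_of_degree_eq_two hτ2
  have hττ := hτ.mul_self_eq_of_degree_eq_two hτ2
  have hσ := hτ.isIrrChar_adjointChar hτ2
  have hσ3 := adjointChar_apply_one_of_degree_eq_two hτ2
  have hσdual := contragredient_adjointChar τ
  have hχ := hτ.isIrrChar_symPowThree hτ2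
  have hχ4 := symPowThree_apply_one hτ2
  have hη := hσ.isIrrChar_tracelessSymSq hσ3 hσdual
  have hη5 := tracelessSymSq_apply_one hσ3
  have hησ : ⟪tracelessSymSq (adjointChar τ),adjointChar τ⟫ = 0 :=
    hη.charPairing_eq_zero_of_degree_ne hσ (by norm_num [hη5, hσ3])
  have hητ (α : G → ℂ) : ⟪τ * tracelessSymSq (adjointChar τ),α⟫ =
      ⟪tracelessSymSq (adjointChar τ),τ * α⟫ := by
    rw [mul_comm, charPairing_mul_left, hdual]
  have hself : ⟪τ * tracelessSymSq (adjointChar τ),symPowThree τ⟫ = 1 := by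
    rw [hητ, hτ.mul_symPowThree_eq hτ2, map_add, hη.charPairing_self, hησ, zero_add]
  refine ((hτ.isChar_mul hη).isChar_sub_of_charPairing_ne_zero hχ
    (hself ▸ one_ne_zero)).isIrrChar_of_degree_lt_eight (d := 6)
    (by exact_mod_cast symPowFive_apply_one hτ2) (by lia) (by lia) (fun _ => ?_)
    (fun _ τ' hτ' hτ'2 => ?_) (fun _ κ hκ hκ3 => ?_) <;>
    rw [symPowFive, map_sub, LinearMap.sub_apply, hητ]
  · rw [mul_one, hη.charPairing_eq_zero_of_degree_ne hτ (by norm_num [hη5, hτ2]),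
      hχ.charPairing_one_of_degree_ne (by norm_num [hχ4]), sub_zero]
  · rw [hχ.charPairing_eq_zero_of_degree_ne hτ' (by norm_num [hχ4, hτ'2]), sub_zero]
    obtain rfl | hne := eq_or_ne τ τ'
    · rw [hττ, map_add, hησ, hη.charPairing_one_of_degree_ne (by norm_num [hη5]), zero_add]
    · exact hη.charPairing_eq_zero_of_degree_ne
        (hτ.isIrrChar_mul_of_degree_eq_two hτ2 hτ' hτ'2 hne) (by norm_num [hη5, hτ2, hτ'2])
  · rw [charPairing_comm, hτ.charPairing_mul_degree_three_degree_five hτ2 hκ hκ3 hη hη5,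
      hχ.charPairing_eq_zero_of_degree_ne hκ (by norm_num [hχ4, hκ3]), sub_zero]

end Symmetric

/-! ### Characters of degree three that are not self-dual -/

section NotSelfDual

variable {G : Type} [Group G] [Finite G] {θ τ σ X φ ψ : G → ℂ}

lemma IsChar.isChar_sub_of_isChar_two_nsmul (hφ : IsChar φ) (hψ : IsChar ψ)
    (h : IsChar (2 • (φ - ψ))) : IsChar (φ - ψ) := by
  refine isChar_of_charPairing_eq_natCast (sub_mem hφ.mem_classFunctions hψ.mem_classFunctions)
    fun χ hχ => ?_
  obtain ⟨a, ha⟩ := hφ.exists_charPairing_eq_natCast hχ.isChar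
  obtain ⟨b, hb⟩ := hψ.exists_charPairing_eq_natCast hχ.isChar
  obtain ⟨m, hm⟩ := h.exists_charPairing_eq_natCast hχ.isChar
  rw [map_nsmul, LinearMap.smul_apply, map_sub, LinearMap.sub_apply, ha, hb] at hm
  have hab : 2 * a = 2 * b + m := by
    have : ((2 * a : ℕ) : ℂ) = (2 * b + m : ℕ) := by
      push_cast
      linear_combination hm
    exact_mod_cast this
  refine ⟨a - b, ?_⟩
  rw [map_sub, LinearMap.sub_apply, ha, hb, Nat.cast_sub (by lia)]

lemma charPairing_eq_zero_of_mul_eq_zero {f h : G → ℂ}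
    (hh : ∀ g, h g⁻¹ = starRingEnd ℂ (h g)) (hmul : f * h = 0) : ⟪f,h⟫ = 0 := by
  have := Fintype.ofFinite G
  rw [charPairing_apply, Finset.sum_eq_zero, mul_zero]
  intro g _
  obtain h0 | h0 := mul_eq_zero.1 (congrFun hmul g)
  · rw [h0, zero_mul]
  · rw [hh, h0, map_zero, mul_zero]

lemma IsIrrChar.charPairing_mul_self_one_of_contragredient_ne (hθ : IsIrrChar G θ)
    (hns : θᵛ ≠ θ) : ⟪θ * θ,1⟫ = 0 := by
  rw [charPairing_mul_left, mul_one, hθ.charPairing_of_ne hθ.contragredient hns.symm]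

variable [IsPerfect G]

lemma IsChar.isIrrChar_or_eq_add_of_degree_le_eight {d : ℕ} (hφ : IsChar φ) (hd : φ 1 = d)
    (hd0 : 0 < d) (hd8 : d ≤ 8) (h1 : ⟪φ,1⟫ = 0)
    (h2 : ∀ τ, IsIrrChar G τ → τ 1 = 2 → ⟪φ,τ⟫ = 0) :
    IsIrrChar G φ ∨ ∃ (χ ψ : G → ℂ) (a b : ℕ), IsIrrChar G χ ∧ IsIrrChar G ψ ∧ φ = χ + ψ ∧
      χ 1 = a ∧ ψ 1 = b ∧ 3 ≤ a ∧ a ≤ b ∧ a + b = d := by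
  have hφ0 : φ ≠ 0 := by
    rintro rfl
    rw [Pi.zero_apply] at hd
    exact hd0.ne (by exact_mod_cast hd)
  obtain h | ⟨χ, ψ, a, b, hχ, hψ, rfl, ha, hb, ha0, hab⟩ := hφ.isIrrChar_or_eq_add hφ0
  · exact Or.inl h
  have hsum : a + b = d := by
    rw [Pi.add_apply, ha, hb] at hd
    exact_mod_cast hd
  have hχ0 {α : G → ℂ} (hα : IsChar α) (h : ⟪χ + ψ,α⟫ = 0) : ⟪χ,α⟫ = 0 :=
    hχ.isChar.charPairing_eq_zero_of_isChar_sub ((add_sub_cancel_left χ ψ).symm ▸ hψ) hα h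
  have hψ0 {α : G → ℂ} (hα : IsChar α) (h : ⟪χ + ψ,α⟫ = 0) : ⟪ψ,α⟫ = 0 :=
    hψ.charPairing_eq_zero_of_isChar_sub ((add_sub_cancel_right χ ψ).symm ▸ hχ.isChar) hα h
  have ha1 : a ≠ 1 := by
    rintro rfl
    exact hχ.isChar.charPairing_one_ne_zero_of_degree_eq_one (by exact_mod_cast ha)
      (hχ0 isIrrChar_one.isChar h1)
  have ha2 : a ≠ 2 := by
    rintro rfl
    exact hχ.charPairing_add_self_ne_zero hψ (h2 χ hχ (by exact_mod_cast ha))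
  have hψirr : IsIrrChar G ψ := hψ.isIrrChar_of_degree_lt_eight hb (by lia) (by lia)
    (fun _ => hψ0 isIrrChar_one.isChar h1) (fun _ τ hτ hτ2 => hψ0 hτ.isChar (h2 τ hτ hτ2)) (by lia)
  exact Or.inr ⟨χ, ψ, a, b, hχ, hψirr, rfl, ha, hb, by lia, hab, hsum⟩

lemma IsIrrChar.isIrrChar_adjointChar_or (hθ : IsIrrChar G θ) (hθ3 : θ 1 = 3) :
    IsIrrChar G (adjointChar θ) ∨ ⟪adjointChar θ,adjointChar θ⟫ = 2 ∨
      ∃ X, IsIrrChar G X ∧ X 1 = 4 ∧ Xᵛ = X ∧ adjointChar θ = X + X := by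
  obtain h | ⟨χ, ψ, a, b, hχ, hψ, hsum, ha, hb, -, -, hab⟩ :=
    hθ.isChar_adjointChar.isIrrChar_or_eq_add_of_degree_le_eight (d := 8)
      (by exact_mod_cast adjointChar_apply_one_of_degree_eq_three hθ3) (by lia) le_rfl
      hθ.charPairing_adjointChar_one fun τ => hθ.charPairing_adjointChar_eq_zero hθ3
  · exact Or.inl h
  obtain rfl | hne := eq_or_ne χ ψ
  · obtain rfl : a = b := by exact_mod_cast ha.symm.trans hb
    obtain rfl : a = 4 := by lia
    refine Or.inr (Or.inr ⟨χ, hχ, by exact_mod_cast ha, ?_, hsum⟩)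
    have hdual := contragredient_adjointChar θ
    rw [hsum, contragredient_add, ← two_nsmul, ← two_nsmul] at hdual
    exact smul_right_injective _ two_ne_zero hdual
  · refine Or.inr (Or.inl ?_)
    simp only [hsum, map_add, LinearMap.add_apply, hχ.charPairing_self, hψ.charPairing_self,
      hχ.charPairing_of_ne hψ hne, hψ.charPairing_of_ne hχ hne.symm]
    norm_num

lemma IsIrrChar.charPairing_mul_contragredient_eq (hτ : IsIrrChar G τ) (hτ2 : τ 1 = 2)
    (θ : G → ℂ) : ⟪τ * θ,θᵛ⟫ = ⟪θ * θ,τ⟫ := by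
  rw [charPairing_comm (θ * θ), charPairing_mul_left, ← contragredient_mul,
    ← hτ.contragredient_eq_of_degree_eq_two hτ2, charPairing_contragredient,
    hτ.contragredient_eq_of_degree_eq_two hτ2]

lemma IsIrrChar.isIrrChar_mul_sub_contragredient (hθ : IsIrrChar G θ) (hθ3 : θ 1 = 3)
    (hτ : IsIrrChar G τ) (hτ2 : τ 1 = 2) (h : ⟪θ * θ,τ⟫ ≠ 0) : IsIrrChar G (τ * θ - θᵛ) := by
  refine ((hτ.isChar_mul hθ).isChar_sub_of_charPairing_ne_zero hθ.contragredient
    (by rwa [hτ.charPairing_mul_contragredient_eq hτ2])).isIrrChar_of_degree_eq_three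
    (by norm_num [hθ3, hτ2]) ?_
  rw [map_sub, LinearMap.sub_apply, charPairing_mul_left, mul_one,
    hτ.charPairing_eq_zero_of_degree_ne hθ.contragredient (by norm_num [hθ3, hτ2]),
    hθ.contragredient.charPairing_one_of_degree_ne (by norm_num [hθ3]), sub_self]

lemma IsIrrChar.mul_sub_eq_zero_of_charPairing_ne_zero (hθ : IsIrrChar G θ) (hθ3 : θ 1 = 3)
    (hτ : IsIrrChar G τ) (hτ2 : τ 1 = 2) (h : ⟪θ * θ,τ⟫ ≠ 0) :
    (adjointChar τ - 1 - τ) * (θ * θᵛ - θ * θ) = 0 := by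
  have hlam := hθ.isIrrChar_mul_sub_contragredient hθ3 hτ hτ2 h
  have hlam3 : (τ * θ - θᵛ) 1 = 3 := by norm_num [hτ2, hθ3]
  have hinv (g : G) : τ g⁻¹ = τ g := congrFun (hτ.contragredient_eq_of_degree_eq_two hτ2) g
  have key (g : G) : τ g ^ 2 * θ g⁻¹ + θ g ^ 2 - 2 * θ g⁻¹ + θ g⁻¹ ^ 2 - τ g * θ g * θ g⁻¹
      - τ g * θ g⁻¹ = 0 := by
    have hsq := hlam.apply_mul_self_of_degree_eq_three hlam3 g
    have hθinv := hθ.apply_mul_self_of_degree_eq_three hθ3 g⁻¹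
    simp only [Pi.sub_apply, Pi.mul_apply, contragredient_apply, mul_inv_rev, inv_inv] at hsq hθinv
    rw [hθ.apply_mul_self_of_degree_eq_three hθ3, hθinv, hτ.apply_mul_self_of_degree_eq_two hτ2,
      hinv] at hsq
    linear_combination -hsq / 2
  funext g
  have hg := key g
  have hg' := key g⁻¹
  have hττ := congrFun (hτ.mul_self_eq_of_degree_eq_two hτ2) g
  simp only [inv_inv, hinv] at hg'
  simp only [Pi.mul_apply, Pi.add_apply, Pi.sub_apply, Pi.one_apply, Pi.zero_apply,
    contragredient_apply] at hττ ⊢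
  linear_combination θ g * (hg - hg') - θ g * (θ g⁻¹ - θ g) * hττ

lemma IsIrrChar.charPairing_adjointChar_add_eq (hθ : IsIrrChar G θ) (hθ3 : θ 1 = 3)
    (hns : θᵛ ≠ θ) (hτ : IsIrrChar G τ) (hτ2 : τ 1 = 2) (h : ⟪θ * θ,τ⟫ ≠ 0) :
    ⟪adjointChar θ,adjointChar τ⟫ + ⟪θ * θ,τ⟫ = ⟪θ * θ,adjointChar τ⟫ + 1 := by
  have hzero : adjointChar θ * adjointChar τ + adjointChar τ + θ * θ + θ * θ * τ =
      θ * θ * adjointChar τ + adjointChar θ + 1 + adjointChar θ * τ + τ := by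
    linear_combination hθ.mul_sub_eq_zero_of_charPairing_ne_zero hθ3 hτ hτ2 h -
      (adjointChar τ - 1 - τ) * mul_contragredient_eq θ
  have hpair := congrArg (⟪·,1⟫) hzero
  simp only [map_add, LinearMap.add_apply, charPairing_mul_left _ (adjointChar τ),
    charPairing_mul_left _ τ, mul_one, contragredient_adjointChar,
    hτ.contragredient_eq_of_degree_eq_two hτ2,
    hθ.charPairing_mul_self_one_of_contragredient_ne hns,
    hτ.charPairing_adjointChar_one, hθ.charPairing_adjointChar_one,
    isIrrChar_one.charPairing_self, hθ.charPairing_adjointChar_eq_zero hθ3 hτ hτ2,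
    hτ.charPairing_one_of_degree_ne (by norm_num [hτ2])] at hpair
  linear_combination hpair

lemma IsIrrChar.charPairing_mul_self_adjointChar_ne_zero (hθ : IsIrrChar G θ) (hθ3 : θ 1 = 3)
    (hns : θᵛ ≠ θ) (hτ : IsIrrChar G τ) (hτ2 : τ 1 = 2) (h : ⟪θ * θ,τ⟫ ≠ 0) :
    ⟪θ * θ,adjointChar τ⟫ ≠ 0 := by
  have hσ := (hτ.isIrrChar_adjointChar hτ2).isChar
  have hr0 : ⟪adjointChar θ,adjointChar τ⟫ ≠ 0 := fun h0 => by
    have hirr := hτ.isIrrChar_mul hθ (charPairing_comm (adjointChar θ) _ ▸ h0)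
    rw [← hτ.charPairing_mul_contragredient_eq hτ2] at h
    exact h (hirr.charPairing_eq_zero_of_degree_ne hθ.contragredient (by norm_num [hτ2, hθ3]))
  have hcount := hθ.charPairing_adjointChar_add_eq hθ3 hns hτ hτ2 h
  obtain ⟨r, hr⟩ := hθ.isChar_adjointChar.exists_charPairing_eq_natCast hσ
  obtain ⟨m, hm⟩ := (hθ.isChar_mul hθ).exists_charPairing_eq_natCast hτ.isChar
  rw [hr, Nat.cast_ne_zero] at hr0
  rw [hm, Nat.cast_ne_zero] at h
  intro h0
  rw [hr, hm, h0, zero_add] at hcount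
  have : r + m = 1 := by exact_mod_cast hcount
  lia

-- Otherwise `θ * θ` contains `θᵛ`, `τ` and `adjointChar τ`, which leaves a linear character.
lemma IsIrrChar.charPairing_mul_self_eq_zero_of_contragredient_ne (hθ : IsIrrChar G θ)
    (hθ3 : θ 1 = 3) (hns : θᵛ ≠ θ) (hτ : IsIrrChar G τ) (hτ2 : τ 1 = 2) : ⟪θ * θ,τ⟫ = 0 := by
  by_contra hne
  have hσ := hτ.isIrrChar_adjointChar hτ2
  have hσ3 := adjointChar_apply_one_of_degree_eq_two hτ2
  have hdual : θᵛ ≠ adjointChar τ := fun h => hns <| by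
    rw [h, ← contragredient_adjointChar, ← h, contragredient_contragredient]
  have hrest := ((hθ.isChar_mul hθ).isChar_sub_of_charPairing_ne_zero hθ.contragredient
    (hθ.charPairing_mul_self_contragredient_ne_zero hθ3)).isChar_sub_of_charPairing_ne_zero hτ (by
      rwa [map_sub, LinearMap.sub_apply, hθ.contragredient.charPairing_eq_zero_of_degree_ne hτ
        (by norm_num [hθ3, hτ2]), sub_zero])
  refine (hrest.isChar_sub_of_charPairing_ne_zero hσ
    ?_).charPairing_one_ne_zero_of_degree_eq_one ?_ ?_
  · simpa only [map_sub, LinearMap.sub_apply, hθ.contragredient.charPairing_of_ne hσ hdual,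
      hτ.charPairing_eq_zero_of_degree_ne hσ (by norm_num [hτ2, hσ3]), sub_zero] using
      hθ.charPairing_mul_self_adjointChar_ne_zero hθ3 hns hτ hτ2 hne
  · norm_num [adjointChar_apply_one, hθ3, hτ2]
  · simp only [map_sub, LinearMap.sub_apply, hτ.charPairing_adjointChar_one,
      hθ.charPairing_mul_self_one_of_contragredient_ne hns,
      hθ.contragredient.charPairing_one_of_degree_ne (by norm_num [hθ3]),
      hτ.charPairing_one_of_degree_ne (by norm_num [hτ2]), sub_zero]

lemma IsIrrChar.isIrrChar_mul_sub_of_mul_self_eq (hθ : IsIrrChar G θ) (hθ3 : θ 1 = 3)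
    (hσ : IsIrrChar G σ) (hσ3 : σ 1 = 3) (hne : σ ≠ θᵛ) (hX : IsIrrChar G X) (hX4 : X 1 = 4)
    (hsq : θ * θ = θᵛ + (θᵛ + σ)) (had : adjointChar θ = X + X) :
    IsIrrChar G (θ * X - (θ + (θ + σᵛ))) := by
  have hdouble : 2 • (θ * X - (θ + (θ + σᵛ))) = θᵛ * σ - θ := by
    have hsq' := congrArg (·ᵛ) hsq
    simp only [contragredient_mul, contragredient_add, contragredient_contragredient] at hsq'
    linear_combination θᵛ * hsq + 2 * hsq' - θ * mul_contragredient_eq θ - θ * had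
  have hpair : ⟪θᵛ * σ,θ⟫ = 1 := by
    rw [mul_comm, charPairing_mul_left, contragredient_contragredient, hsq, map_add, map_add,
      hσ.charPairing_of_ne hθ.contragredient hne, hσ.charPairing_self, zero_add, zero_add]
  refine ((hθ.isChar_mul hX).isChar_sub_of_isChar_two_nsmul
    (hθ.isChar.add (hθ.isChar.add hσ.contragredient.isChar)) ?_).isIrrChar_of_degree_eq_three ?_ ?_
  · rw [hdouble]
    exact (hθ.contragredient.isChar_mul hσ).isChar_sub_of_charPairing_ne_zero hθ
      (hpair ▸ one_ne_zero)
  · norm_num [hθ3, hX4, hσ3]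
  · simp only [map_sub, map_add, LinearMap.sub_apply, LinearMap.add_apply,
      hθ.charPairing_one_of_degree_ne (by norm_num [hθ3]), charPairing_mul_left, mul_one,
      hσ.contragredient.charPairing_one_of_degree_ne (by norm_num [hσ3]),
      hθ.charPairing_eq_zero_of_degree_ne hX.contragredient (by norm_num [hθ3, hX4])]
    norm_num

-- Parity of the norm of `θ * X`: it is odd because `θ * θᵛ = 1 + 2X`, and even because it is the
-- norm of `θ + θ + σᵛ + Φ`, where `Φ` is the irreducible character of the previous lemma.
lemma IsIrrChar.adjointChar_ne_add_self_of_mul_self_eq (hθ : IsIrrChar G θ) (hθ3 : θ 1 = 3)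
    (hσ : IsIrrChar G σ) (hσ3 : σ 1 = 3) (hne : σ ≠ θᵛ) (hX : IsIrrChar G X) (hX4 : X 1 = 4)
    (hXdual : Xᵛ = X) (hsq : θ * θ = θᵛ + (θᵛ + σ)) : adjointChar θ ≠ X + X := by
  intro had
  have hΦ := hθ.isIrrChar_mul_sub_of_mul_self_eq hθ3 hσ hσ3 hne hX hX4 hsq had
  obtain ⟨Φ, hΦdef⟩ : ∃ Φ, Φ = θ * X - (θ + (θ + σᵛ)) := ⟨_, rfl⟩
  rw [← hΦdef] at hΦ
  obtain ⟨q, hq⟩ := (hX.isChar_mul hX).exists_charPairing_eq_natCast hX.isChar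
  have hodd : ⟪θ * X,θ * X⟫ = 1 + 2 * q := by
    rw [charPairing_mul_mul, hXdual, mul_contragredient_eq, had, ← hq, map_add, map_add,
      LinearMap.add_apply, LinearMap.add_apply, charPairing_comm X, charPairing_comm 1,
      charPairing_mul_left X X 1, mul_one, hXdual, hX.charPairing_self]
    ring
  obtain ⟨a, ha⟩ := hθ.isChar.exists_charPairing_eq_natCast hσ.contragredient.isChar
  obtain ⟨b, hb⟩ := hθ.isChar.exists_charPairing_eq_natCast hΦ.isChar
  obtain ⟨c, hc⟩ := hσ.contragredient.isChar.exists_charPairing_eq_natCast hΦ.isChar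
  rw [show θ * X = θ + (θ + σᵛ) + Φ by rw [hΦdef, add_sub_cancel]] at hodd
  simp only [map_add, LinearMap.add_apply, charPairing_comm σᵛ θ, charPairing_comm Φ θ,
    charPairing_comm Φ σᵛ, ha, hb, hc, hθ.charPairing_self, hσ.contragredient.charPairing_self,
    hΦ.charPairing_self] at hodd
  have : 6 + 4 * a + 4 * b + 2 * c = 1 + 2 * q := by
    have : ((6 + 4 * a + 4 * b + 2 * c : ℕ) : ℂ) = (1 + 2 * q : ℕ) := by
      push_cast
      linear_combination hodd
    exact_mod_cast this
  lia

lemma IsIrrChar.mul_self_ne_contragredient_add (hθ : IsIrrChar G θ) (hθ3 : θ 1 = 3)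
    (hσ : IsIrrChar G σ) (hσ3 : σ 1 = 3) : θ * θ ≠ θᵛ + (θᵛ + σ) := by
  intro hsq
  have hnorm := hθ.charPairing_mul_self hθ
  obtain rfl | hne := eq_or_ne σ θᵛ
  · simp only [hsq, map_add, LinearMap.add_apply, hσ.charPairing_self] at hnorm
    obtain h | h | ⟨X, hX, -, -, h⟩ := hθ.isIrrChar_adjointChar_or hθ3
    · norm_num [h.charPairing_self] at hnorm
    · norm_num [h] at hnorm
    · norm_num [h, hX.charPairing_self] at hnorm
  · simp only [hsq, map_add, LinearMap.add_apply, hσ.charPairing_self,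
      hθ.contragredient.charPairing_self, hσ.charPairing_of_ne hθ.contragredient hne,
      hθ.contragredient.charPairing_of_ne hσ hne.symm] at hnorm
    obtain h | h | ⟨X, hX, hX4, hXdual, h⟩ := hθ.isIrrChar_adjointChar_or hθ3
    · norm_num [h.charPairing_self] at hnorm
    · norm_num [h] at hnorm
    · exact hθ.adjointChar_ne_add_self_of_mul_self_eq hθ3 hσ hσ3 hne hX hX4 hXdual hsq h

lemma IsIrrChar.eq_contragredient_or_of_mul_self_eq (hθ : IsIrrChar G θ) (hθ3 : θ 1 = 3)
    (hφ : IsIrrChar G φ) (hφ3 : φ 1 = 3) (hψ : IsIrrChar G ψ) (hψ3 : ψ 1 = 3)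
    (hsq : θ * θ = θᵛ + (φ + ψ)) : φ = θᵛ ∨ ψ = θᵛ := by
  have hmul : (φ - θᵛ) * (ψ - θᵛ) = 0 := by
    funext g
    have h := congrFun hsq g
    have hgg := congrFun hsq (g * g)
    have hinv := congrFun hsq g⁻¹
    have hθinv := hθ.apply_mul_self_of_degree_eq_three hθ3 g⁻¹
    simp only [Pi.mul_apply, Pi.add_apply, Pi.sub_apply, Pi.zero_apply, contragredient_apply,
      mul_inv_rev, inv_inv] at h hgg hinv hθinv ⊢
    rw [hθ.apply_mul_self_of_degree_eq_three hθ3, hφ.apply_mul_self_of_degree_eq_three hφ3,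
      hψ.apply_mul_self_of_degree_eq_three hψ3, hθinv] at hgg
    linear_combination hgg / 2 -
      (1 / 2 : ℂ) * (θ g ^ 2 - 3 * θ g⁻¹ + φ g + ψ g) * h + hinv
  by_contra! hne
  have hpair := charPairing_eq_zero_of_mul_eq_zero (fun g => by
    simp only [Pi.sub_apply, map_sub, hψ.apply_inv, hθ.contragredient.apply_inv]) hmul
  obtain ⟨n, hn⟩ := hφ.isChar.exists_charPairing_eq_natCast hψ.isChar
  simp only [map_sub, LinearMap.sub_apply, hθ.contragredient.charPairing_self, hn,
    hθ.contragredient.charPairing_of_ne hψ hne.2.symm,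
    hφ.charPairing_of_ne hθ.contragredient hne.1] at hpair
  have : ((n + 1 : ℕ) : ℂ) = 0 := by
    push_cast
    linear_combination hpair
  exact Nat.cast_ne_zero.2 n.succ_ne_zero this

lemma IsIrrChar.isIrrChar_adjointChar_of_contragredient_ne (hθ : IsIrrChar G θ) (hθ3 : θ 1 = 3)
    (hns : θᵛ ≠ θ) : IsIrrChar G (adjointChar θ) := by
  have hS := (hθ.isChar_mul hθ).isChar_sub_of_charPairing_ne_zero hθ.contragredient
    (hθ.charPairing_mul_self_contragredient_ne_zero hθ3)
  have hS6 : (θ * θ - θᵛ) 1 = 6 := by norm_num [hθ3]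
  obtain h | ⟨φ, ψ, a, b, hφ, hψ, hsum, ha, hb, ha3, hab, hab6⟩ :=
    hS.isIrrChar_or_eq_add_of_degree_le_eight (d := 6) (by exact_mod_cast hS6) (by lia) (by lia)
      (by rw [map_sub, LinearMap.sub_apply, hθ.charPairing_mul_self_one_of_contragredient_ne hns,
        hθ.contragredient.charPairing_one_of_degree_ne (by norm_num [hθ3]), sub_zero])
      (fun τ hτ hτ2 => by
        rw [map_sub, LinearMap.sub_apply,
          hθ.charPairing_mul_self_eq_zero_of_contragredient_ne hθ3 hns hτ hτ2,
          hθ.contragredient.charPairing_eq_zero_of_degree_ne hτ (by norm_num [hθ3, hτ2]), sub_zero])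
  · refine hθ.isChar_adjointChar.isIrrChar_of_charPairing_self_eq_one ?_
    have hnorm := hθ.charPairing_mul_self hθ
    have hzero : ⟪θ * θ - θᵛ,θᵛ⟫ = 0 :=
      h.charPairing_eq_zero_of_degree_ne hθ.contragredient (by norm_num [hθ3])
    rw [← sub_add_cancel (θ * θ) θᵛ] at hnorm
    simp only [map_add _ (θ * θ - θᵛ) θᵛ, LinearMap.add_apply, charPairing_comm θᵛ, hzero,
      h.charPairing_self, hθ.contragredient.charPairing_self] at hnorm
    linear_combination -hnorm
  · obtain rfl : a = 3 := by lia
    obtain rfl : b = 3 := by lia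
    have hφ3 : φ 1 = 3 := by exact_mod_cast ha
    have hψ3 : ψ 1 = 3 := by exact_mod_cast hb
    have hsq : θ * θ = θᵛ + (φ + ψ) := by rw [← hsum, add_sub_cancel]
    obtain rfl | rfl := hθ.eq_contragredient_or_of_mul_self_eq hθ3 hφ hφ3 hψ hψ3 hsq
    · exact absurd hsq (hθ.mul_self_ne_contragredient_add hθ3 hψ hψ3)
    · exact absurd (hsq.trans (by rw [add_comm φ])) (hθ.mul_self_ne_contragredient_add hθ3 hφ hφ3)

end NotSelfDual

/-! ### Isolated constituents of products with a character of degree three -/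

section Isolated

variable {G : Type} [Group G] [Finite G] {θ φ ψ χ ρ : G → ℂ}

/-- `χ` is an irreducible constituent of `φ` of multiplicity one and the only constituent of its
degree. Such a `χ` inherits from `φ` every invariance under operations preserving degrees. -/
structure IsIsolatedConstituent (φ χ : G → ℂ) : Prop where
  isIrrChar : IsIrrChar G χ
  charPairing_eq_one : ⟪φ,χ⟫ = 1
  charPairing_eq_zero : ∀ ψ, IsIrrChar G ψ → ψ 1 = χ 1 → ψ ≠ χ → ⟪φ,ψ⟫ = 0

lemma IsIrrChar.isIsolatedConstituent_add (hχ : IsIrrChar G χ)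
    (hρ : ∀ ψ, IsIrrChar G ψ → ψ 1 = χ 1 → ⟪ρ,ψ⟫ = 0) : IsIsolatedConstituent (χ + ρ) χ where
  isIrrChar := hχ
  charPairing_eq_one := by
    rw [map_add, LinearMap.add_apply, hχ.charPairing_self, hρ χ hχ rfl, add_zero]
  charPairing_eq_zero ψ hψ hdeg hne := by
    rw [map_add, LinearMap.add_apply, hχ.charPairing_of_ne hψ hne.symm, hρ ψ hψ hdeg, add_zero]

lemma IsIrrChar.isIsolatedConstituent_self (hχ : IsIrrChar G χ) : IsIsolatedConstituent χ χ := by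
  simpa only [add_zero] using hχ.isIsolatedConstituent_add (ρ := 0) fun ψ _ _ => by
    rw [map_zero, LinearMap.zero_apply]

lemma IsChar.charPairing_ne_zero_of_common_constituent (hφ : IsChar φ) (hψ : IsChar ψ)
    (hχ : IsIrrChar G χ) (hφχ : ⟪φ,χ⟫ ≠ 0) (hψχ : ⟪ψ,χ⟫ ≠ 0) : ⟪φ,ψ⟫ ≠ 0 := fun h =>
  hψχ <| by
    rw [charPairing_comm]
    exact hχ.isChar.charPairing_eq_zero_of_isChar_sub
      (hφ.isChar_sub_of_charPairing_ne_zero hχ hφχ) hψ h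

lemma IsIrrChar.adjointChar_eq_of_charPairing_ne_zero (hδ : IsIrrChar G (adjointChar θ))
    (hφ : IsIrrChar G φ) (hdeg : φ 1 = θ 1) (h : ⟪adjointChar φ,adjointChar θ⟫ ≠ 0) :
    adjointChar φ = adjointChar θ :=
  sub_eq_zero.1 <| (hφ.isChar_adjointChar.isChar_sub_of_charPairing_ne_zero hδ
    h).eq_zero_of_degree_eq_zero (by
      rw [Pi.sub_apply, adjointChar_apply_one, adjointChar_apply_one, hdeg, sub_self])

-- The norm of `θ * φ` is at most two, so its constituents have distinct degrees, one at least `5`.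
lemma IsIrrChar.exists_isIsolatedConstituent_mul (hθ : IsIrrChar G θ)
    (hδ : IsIrrChar G (adjointChar θ)) (hθ3 : θ 1 = 3) (hφ : IsIrrChar G φ) (hφ3 : φ 1 = 3) :
    ∃ (χ : G → ℂ) (n : ℕ), IsIsolatedConstituent (θ * φ) χ ∧ χ 1 = n ∧ 5 ≤ n := by
  have hdeg : (θ * φ) 1 = 9 := by norm_num [hθ3, hφ3]
  obtain hirr | ⟨ψ, χ, a, b, hψ, hχ, hsum, ha, hb, -, hab⟩ :=
    (hθ.isChar_mul hφ).isIrrChar_or_eq_add fun h0 => by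
      rw [h0] at hdeg
      norm_num at hdeg
  · exact ⟨_, 9, hirr.isIsolatedConstituent_self, by exact_mod_cast hdeg, by lia⟩
  by_cases h0 : ⟪adjointChar φ,adjointChar θ⟫ = 0
  · exact ⟨_, 9, (hθ.isIrrChar_mul hφ (charPairing_comm (adjointChar φ) _ ▸
      h0)).isIsolatedConstituent_self, by exact_mod_cast hdeg, by lia⟩
  have hsum9 : a + b = 9 := by
    rw [hsum, Pi.add_apply, ha, hb] at hdeg
    exact_mod_cast hdeg
  have hnorm := hθ.charPairing_mul_self hφ
  obtain ⟨x, hx⟩ := hχ.exists_charPairing_eq_natCast hψ.isChar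
  obtain ⟨y, hy⟩ := hχ.exists_charPairing_eq_natCast hχ
  simp only [hδ.adjointChar_eq_of_charPairing_ne_zero hφ (hφ3.trans hθ3.symm) h0,
    hδ.charPairing_self, hsum, map_add, LinearMap.add_apply, charPairing_comm ψ χ, hx, hy,
    hψ.charPairing_self] at hnorm
  have hxy : 2 * x + y = 1 := by
    have : ((2 * x + y : ℕ) : ℂ) = (1 : ℕ) := by
      push_cast
      linear_combination hnorm
    exact_mod_cast this
  have hχirr : IsIrrChar G χ := hχ.isIrrChar_of_charPairing_self_eq_one (by
    rw [hy, show y = 1 by lia, Nat.cast_one])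
  refine ⟨χ, b, ?_, hb, by lia⟩
  rw [hsum, add_comm]
  refine hχirr.isIsolatedConstituent_add fun ξ hξ hξdeg => hψ.charPairing_eq_zero_of_degree_ne hξ ?_
  rw [hξdeg, ha, hb]
  exact_mod_cast (by lia : a ≠ b)

variable [IsPerfect G]

lemma IsIrrChar.charPairing_mul_mul_eq_zero (hδ : IsIrrChar G (adjointChar θ)) (hθ3 : θ 1 = 3)
    (hφ : IsIrrChar G φ) (hψ : IsIrrChar G ψ) {m n : ℕ} (hm : φ 1 = m) (hn : ψ 1 = n)
    (hm3 : m ≤ 3) (hn3 : n ≤ 3) (hne : φ ≠ ψ) : ⟪θ * φ,θ * ψ⟫ = 0 := by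
  have hδ8 := adjointChar_apply_one_of_degree_eq_three hθ3
  have hone : ⟪φᵛ * ψ,1⟫ = 0 := by
    rw [charPairing_mul_left, mul_one, charPairing_contragredient, hφ.charPairing_of_ne hψ hne]
  rw [charPairing_mul_mul, mul_contragredient_eq, map_add, LinearMap.add_apply,
    charPairing_comm 1, hone, add_zero, charPairing_comm]
  by_contra h0
  have hsub := (hφ.contragredient.isChar_mul hψ).isChar_sub_of_charPairing_ne_zero hδ h0
  obtain ⟨k, hk⟩ := hsub.exists_degree_eq_natCast
  have hmn : m * n = k + 8 := by
    rw [Pi.sub_apply, Pi.mul_apply, contragredient_apply, inv_one, hm, hn, hδ8,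
      sub_eq_iff_eq_add] at hk
    exact_mod_cast hk
  obtain rfl : k = 1 := by
    have : m * n ≤ 9 := Nat.mul_le_mul hm3 hn3
    have : m * n ≠ 8 := by interval_cases m <;> lia
    lia
  refine hsub.charPairing_one_ne_zero_of_degree_eq_one (by exact_mod_cast hk) ?_
  rw [map_sub, LinearMap.sub_apply, hone, hδ.charPairing_one_of_degree_ne (by norm_num [hδ8]),
    sub_zero]

lemma IsIrrChar.isIrrChar_mul_of_isIrrChar_adjointChar (hθ : IsIrrChar G θ)
    (hδ : IsIrrChar G (adjointChar θ)) (hθ3 : θ 1 = 3) (hφ : IsIrrChar G φ) (hφ2 : φ 1 = 2) :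
    IsIrrChar G (θ * φ) :=
  hθ.isIrrChar_mul hφ <| hδ.charPairing_eq_zero_of_degree_ne (hφ.isIrrChar_adjointChar hφ2) <| by
    norm_num [adjointChar_apply_one, hθ3, hφ2]

end Isolated

/-! ### Self-dual characters of degree three -/

section SelfDual

variable {G : Type} [Group G] {σ ρ υ : G → ℂ}

/-- `σ` is a self-dual irreducible character of degree three. -/
structure IsSelfDualCubic (σ : G → ℂ) : Prop where
  isIrrChar : IsIrrChar G σ
  degree : σ 1 = 3
  contragredient : σᵛ = σ

lemma IsIrrChar.isSelfDualCubic_adjointChar [Finite G] [IsPerfect G] {τ : G → ℂ}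
    (hτ : IsIrrChar G τ) (hτ2 : τ 1 = 2) : IsSelfDualCubic (adjointChar τ) :=
  ⟨hτ.isIrrChar_adjointChar hτ2, adjointChar_apply_one_of_degree_eq_two hτ2,
    contragredient_adjointChar τ⟩

namespace IsSelfDualCubic

lemma mul_self_eq (hσ : IsSelfDualCubic σ) : σ * σ = tracelessSymSq σ + σ + 1 :=
  mul_self_eq_of_contragredient_eq hσ.contragredient

lemma tracelessSymSq_apply_one (hσ : IsSelfDualCubic σ) : tracelessSymSq σ 1 = 5 :=
  _root_.tracelessSymSq_apply_one hσ.degree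

lemma mul_sub_apply_one (hσ : IsSelfDualCubic σ) (hρ : IsSelfDualCubic ρ) :
    (σ * ρ - tracelessSymSq σ) 1 = 4 := by
  norm_num [hσ.degree, hρ.degree, hσ.tracelessSymSq_apply_one]

variable [IsPerfect G]

lemma tracelessSymSq_mul_eq (hσ : IsSelfDualCubic σ) (hρ : IsSelfDualCubic ρ)
    (h : tracelessSymSq σ = tracelessSymSq ρ) : tracelessSymSq σ * σ = tracelessSymSq σ * ρ := by
  have hsq : σ * σ - σ = ρ * ρ - ρ := by linear_combination h + hσ.mul_self_eq - hρ.mul_self_eq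
  funext g
  have hg := congrFun hsq g
  have hgg := congrFun hsq (g * g)
  have hσinv : σ g⁻¹ = σ g := congrFun hσ.contragredient g
  have hρinv : ρ g⁻¹ = ρ g := congrFun hρ.contragredient g
  have hσg := congrFun hσ.mul_self_eq g
  simp only [Pi.mul_apply, Pi.sub_apply, Pi.add_apply, Pi.one_apply] at hg hgg hσg ⊢
  rw [hσ.isIrrChar.apply_mul_self_of_degree_eq_three hσ.degree,
    hρ.isIrrChar.apply_mul_self_of_degree_eq_three hρ.degree, hσinv, hρinv] at hgg
  obtain h0 | h0 := mul_eq_zero.1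
    (show (σ g - ρ g) * (σ g + ρ g - 1) = 0 by linear_combination hg)
  · rw [sub_eq_zero.1 h0]
  · have hρg : ρ g = 1 - σ g := by linear_combination h0
    rw [hρg] at hgg ⊢
    linear_combination -hgg / 2 - (2 * σ g - 1) * hσg

variable [Finite G]

lemma isIrrChar_tracelessSymSq (hσ : IsSelfDualCubic σ) : IsIrrChar G (tracelessSymSq σ) :=
  hσ.isIrrChar.isIrrChar_tracelessSymSq hσ.degree hσ.contragredient

lemma charPairing_tracelessSymSq_one (hσ : IsSelfDualCubic σ) : ⟪tracelessSymSq σ,1⟫ = 0 :=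
  hσ.isIrrChar_tracelessSymSq.charPairing_one_of_degree_ne
    (by norm_num [hσ.tracelessSymSq_apply_one])

lemma charPairing_tracelessSymSq (hσ : IsSelfDualCubic σ) (hρ : IsSelfDualCubic ρ) :
    ⟪tracelessSymSq σ,ρ⟫ = 0 :=
  hσ.isIrrChar_tracelessSymSq.charPairing_eq_zero_of_degree_ne hρ.isIrrChar
    (by norm_num [hσ.tracelessSymSq_apply_one, hρ.degree])

lemma charPairing_mul_self_tracelessSymSq (hσ : IsSelfDualCubic σ) :
    ⟪σ * σ,tracelessSymSq σ⟫ = 1 := by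
  simp only [hσ.mul_self_eq, map_add, LinearMap.add_apply, charPairing_comm σ, charPairing_comm 1,
    hσ.isIrrChar_tracelessSymSq.charPairing_self, hσ.charPairing_tracelessSymSq hσ,
    hσ.charPairing_tracelessSymSq_one, add_zero]

lemma charPairing_adjointChar (hσ : IsSelfDualCubic σ) (hρ : IsSelfDualCubic ρ) (hne : σ ≠ ρ) :
    ⟪adjointChar σ,adjointChar ρ⟫ = ⟪tracelessSymSq σ,tracelessSymSq ρ⟫ := by
  rw [← sub_add_cancel (adjointChar σ) σ, ← sub_add_cancel (adjointChar ρ) ρ, ← tracelessSymSq,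
    ← tracelessSymSq]
  simp only [map_add, LinearMap.add_apply, hσ.charPairing_tracelessSymSq hρ,
    charPairing_comm σ (tracelessSymSq ρ), hρ.charPairing_tracelessSymSq hσ,
    hσ.isIrrChar.charPairing_of_ne hρ.isIrrChar hne, add_zero]

lemma isIrrChar_mul (hσ : IsSelfDualCubic σ) (hρ : IsSelfDualCubic ρ)
    (hne : tracelessSymSq σ ≠ tracelessSymSq ρ) : IsIrrChar G (σ * ρ) :=
  hσ.isIrrChar.isIrrChar_mul hρ.isIrrChar <| by
    rw [hσ.charPairing_adjointChar hρ (mt (congrArg _) hne),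
      hσ.isIrrChar_tracelessSymSq.charPairing_of_ne hρ.isIrrChar_tracelessSymSq hne]

lemma charPairing_mul_tracelessSymSq (hσ : IsSelfDualCubic σ) (hρ : IsSelfDualCubic ρ)
    (h : tracelessSymSq σ = tracelessSymSq ρ) : ⟪σ * ρ,tracelessSymSq σ⟫ = 1 := by
  rw [charPairing_mul_left, hρ.contragredient, mul_comm, ← hσ.tracelessSymSq_mul_eq hρ h, mul_comm,
    charPairing_mul_right, hσ.contragredient, hσ.charPairing_mul_self_tracelessSymSq]

lemma isIrrChar_mul_sub (hσ : IsSelfDualCubic σ) (hρ : IsSelfDualCubic ρ) (hne : σ ≠ ρ)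
    (h : tracelessSymSq σ = tracelessSymSq ρ) : IsIrrChar G (σ * ρ - tracelessSymSq σ) := by
  have hη := hσ.isIrrChar_tracelessSymSq
  have hpair := hσ.charPairing_mul_tracelessSymSq hρ h
  have hnorm := hσ.isIrrChar.charPairing_mul_self hρ.isIrrChar
  rw [hσ.charPairing_adjointChar hρ hne, ← h, hη.charPairing_self] at hnorm
  refine ((hσ.isIrrChar.isChar_mul hρ.isIrrChar).isChar_sub_of_charPairing_ne_zero hη
    (hpair ▸ one_ne_zero)).isIrrChar_of_charPairing_self_eq_one ?_
  simp only [map_sub, LinearMap.sub_apply, charPairing_comm (tracelessSymSq σ) (σ * ρ), hpair,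
    hη.charPairing_self, hnorm]
  norm_num

lemma charPairing_mul_eq_zero (hσ : IsSelfDualCubic σ) (hρ : IsSelfDualCubic ρ)
    (hυ : IsSelfDualCubic υ) (hne : σ ≠ ρ) (h : tracelessSymSq σ = tracelessSymSq ρ) :
    ⟪σ * ρ,υ⟫ = 0 := by
  rw [← sub_add_cancel (σ * ρ) (tracelessSymSq σ), map_add, LinearMap.add_apply,
    hσ.charPairing_tracelessSymSq hυ, (hσ.isIrrChar_mul_sub hρ hne
      h).charPairing_eq_zero_of_degree_ne hυ.isIrrChar
      (by norm_num [hσ.mul_sub_apply_one hρ, hυ.degree]), add_zero]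

lemma charPairing_tracelessSymSq_mul (hσ : IsSelfDualCubic σ) (hρ : IsSelfDualCubic ρ)
    (h : tracelessSymSq σ = tracelessSymSq ρ) : ⟪tracelessSymSq σ * σ,ρ⟫ = 1 := by
  rw [hσ.tracelessSymSq_mul_eq hρ h, charPairing_mul_left, hρ.contragredient, h, charPairing_comm,
    hρ.charPairing_mul_self_tracelessSymSq]

lemma charPairing_tracelessSymSq_mul_sub (hσ : IsSelfDualCubic σ) (hρ : IsSelfDualCubic ρ)
    (h : tracelessSymSq σ = tracelessSymSq ρ) :
    ⟪tracelessSymSq σ * σ,σ * ρ - tracelessSymSq σ⟫ = 1 := by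
  have hmul := hσ.tracelessSymSq_mul_eq hρ h
  have hswap : ⟪tracelessSymSq σ * σ,σ * ρ⟫ = ⟪tracelessSymSq σ * σ,ρ * ρ⟫ := by
    rw [charPairing_mul_right, charPairing_mul_right _ ρ, hσ.contragredient, hρ.contragredient,
      hmul, mul_right_comm, hmul]
  rw [map_sub, hswap, hρ.mul_self_eq, ← h, map_add, map_add,
    hσ.charPairing_tracelessSymSq_mul hρ h, charPairing_mul_left, charPairing_mul_left _ σ 1,
    mul_one, hσ.contragredient, hσ.charPairing_tracelessSymSq hσ]
  ring

lemma charPairing_mul_sub_mul_sub (hσ : IsSelfDualCubic σ) (hρ : IsSelfDualCubic ρ)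
    (hυ : IsSelfDualCubic υ) (hρυ : ρ ≠ υ) (hρeq : tracelessSymSq σ = tracelessSymSq ρ)
    (hυeq : tracelessSymSq σ = tracelessSymSq υ) :
    ⟪σ * ρ - tracelessSymSq σ,σ * υ - tracelessSymSq σ⟫ = 0 := by
  have hη := hσ.isIrrChar_tracelessSymSq
  have hone : ⟪ρ * υ,1⟫ = 0 := by
    rw [charPairing_mul_left, mul_one, hυ.contragredient,
      hρ.isIrrChar.charPairing_of_ne hυ.isIrrChar hρυ]
  have hηρυ : ⟪ρ * υ,tracelessSymSq σ⟫ = 1 := by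
    rw [hρeq, hρ.charPairing_mul_tracelessSymSq hυ (hρeq.symm.trans hυeq)]
  have hmul : ⟪σ * ρ,σ * υ⟫ = 1 := by
    rw [charPairing_mul_mul, hσ.contragredient, hρ.contragredient, hσ.mul_self_eq, map_add, map_add,
      LinearMap.add_apply, LinearMap.add_apply, charPairing_comm _ (ρ * υ), hηρυ,
      charPairing_comm σ, hρ.charPairing_mul_eq_zero hυ hσ hρυ (hρeq.symm.trans hυeq),
      charPairing_comm 1, hone, add_zero, add_zero]
  simp only [map_sub, LinearMap.sub_apply, hmul, charPairing_comm (tracelessSymSq σ) (σ * υ),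
    hσ.charPairing_mul_tracelessSymSq hρ hρeq, hσ.charPairing_mul_tracelessSymSq hυ hυeq,
    hη.charPairing_self, sub_self]

-- Otherwise `tracelessSymSq σ * σ`, of degree 15, would have five distinct irreducible constituents
-- of degrees 3, 3, 3, 4 and 4.
lemma tracelessSymSq_ne_of_ne (hσ : IsSelfDualCubic σ) (hρ : IsSelfDualCubic ρ)
    (hυ : IsSelfDualCubic υ) (hσρ : σ ≠ ρ) (hσυ : σ ≠ υ) (hρυ : ρ ≠ υ)
    (hρeq : tracelessSymSq σ = tracelessSymSq ρ) : tracelessSymSq σ ≠ tracelessSymSq υ := by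
  intro hυeq
  have hX := hσ.isIrrChar_mul_sub hρ hσρ hρeq
  have hY := hσ.isIrrChar_mul_sub hυ hσυ hυeq
  have hX4 := hσ.mul_sub_apply_one hρ
  have hY4 := hσ.mul_sub_apply_one hυ
  have hXpair := hσ.charPairing_tracelessSymSq_mul_sub hρ hρeq
  have hYpair := hσ.charPairing_tracelessSymSq_mul_sub hυ hυeq
  have hXY := hσ.charPairing_mul_sub_mul_sub hρ hυ hρυ hρeq hυeq
  generalize σ * ρ - tracelessSymSq σ = X at *
  generalize σ * υ - tracelessSymSq σ = Y at *
  have hcubic {κ Z : G → ℂ} (hκ : IsSelfDualCubic κ) (hZ : IsIrrChar G Z) (hZ4 : Z 1 = 4) :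
      ⟪κ,Z⟫ = 0 :=
    hκ.isIrrChar.charPairing_eq_zero_of_degree_ne hZ (by norm_num [hκ.degree, hZ4])
  have h1 := (hσ.isIrrChar_tracelessSymSq.isChar_mul hσ.isIrrChar).isChar_sub_of_charPairing_ne_zero
    hσ.isIrrChar (by rw [hσ.charPairing_tracelessSymSq_mul hσ rfl]; exact one_ne_zero)
  have h2 := h1.isChar_sub_of_charPairing_ne_zero hρ.isIrrChar (by
    simp [hσ.charPairing_tracelessSymSq_mul hρ hρeq,
      hσ.isIrrChar.charPairing_of_ne hρ.isIrrChar hσρ])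
  have h3 := h2.isChar_sub_of_charPairing_ne_zero hυ.isIrrChar (by
    simp [hσ.charPairing_tracelessSymSq_mul hυ hυeq,
      hσ.isIrrChar.charPairing_of_ne hυ.isIrrChar hσυ,
      hρ.isIrrChar.charPairing_of_ne hυ.isIrrChar hρυ])
  have h4 := h3.isChar_sub_of_charPairing_ne_zero hX (by
    simp [hXpair, hcubic hσ hX hX4, hcubic hρ hX hX4, hcubic hυ hX hX4])
  have h5 := h4.isChar_sub_of_charPairing_ne_zero hY (by
    simp [hYpair, hcubic hσ hY hY4, hcubic hρ hY hY4, hcubic hυ hY hY4, hXY])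
  obtain ⟨k, hk⟩ := h5.exists_degree_eq_natCast
  simp only [Pi.sub_apply, Pi.mul_apply, hσ.tracelessSymSq_apply_one, hσ.degree, hρ.degree,
    hυ.degree, hX4, hY4] at hk
  have : ((k + 2 : ℕ) : ℂ) = 0 := by
    push_cast
    linear_combination -hk
  exact Nat.cast_ne_zero.2 (k + 1).succ_ne_zero this

lemma mul_injective_of_tracelessSymSq_ne (hσ : IsSelfDualCubic σ) (hρ : IsSelfDualCubic ρ)
    (hυ : IsSelfDualCubic υ) (hσρ : tracelessSymSq σ ≠ tracelessSymSq ρ)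
    (hσυ : tracelessSymSq σ ≠ tracelessSymSq υ) (h : σ * ρ = σ * υ) : ρ = υ := by
  by_contra hne
  have hη := hσ.isIrrChar_tracelessSymSq
  have hσυirr := hσ.isIrrChar_mul hυ hσυ
  have hone : ⟪ρ * υ,1⟫ = 0 := by
    rw [charPairing_mul_left, mul_one, hυ.contragredient,
      hρ.isIrrChar.charPairing_of_ne hυ.isIrrChar hne]
  have hσpair : ⟪ρ * υ,σ⟫ = 0 := by
    rw [charPairing_mul_left, hυ.contragredient, mul_comm, charPairing_comm]
    exact hσυirr.charPairing_eq_zero_of_degree_ne hρ.isIrrChar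
      (by norm_num [hσ.degree, hρ.degree, hυ.degree])
  have hηpair : ⟪ρ * υ,tracelessSymSq σ⟫ = 0 := by
    by_cases hρυ : tracelessSymSq ρ = tracelessSymSq υ
    · rw [← sub_add_cancel (ρ * υ) (tracelessSymSq ρ), map_add, LinearMap.add_apply,
        hρ.isIrrChar_tracelessSymSq.charPairing_of_ne hη hσρ.symm, add_zero]
      exact (hρ.isIrrChar_mul_sub hυ hne hρυ).charPairing_eq_zero_of_degree_ne hη
        (by norm_num [hρ.mul_sub_apply_one hυ, hσ.tracelessSymSq_apply_one])
    · exact (hρ.isIrrChar_mul hυ hρυ).charPairing_eq_zero_of_degree_ne hη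
        (by norm_num [hρ.degree, hυ.degree, hσ.tracelessSymSq_apply_one])
  have hpair : ⟪σ * ρ,σ * υ⟫ = 0 := by
    rw [charPairing_mul_mul, hσ.contragredient, hρ.contragredient, hσ.mul_self_eq, map_add, map_add,
      LinearMap.add_apply, LinearMap.add_apply, charPairing_comm _ (ρ * υ), hηpair,
      charPairing_comm σ, hσpair, charPairing_comm 1, hone, add_zero, add_zero]
  rw [h, hσυirr.charPairing_self] at hpair
  exact one_ne_zero hpair

end IsSelfDualCubic

lemma IsIrrChar.symPowThree_ne_mul [Finite G] [IsPerfect G] {τ τ' : G → ℂ} (hτ : IsIrrChar G τ)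
    (hτ2 : τ 1 = 2) (hτ' : IsIrrChar G τ') (hτ'2 : τ' 1 = 2) : symPowThree τ ≠ τ * τ' := by
  intro h
  have hσ := hτ.isSelfDualCubic_adjointChar hτ2
  have hpair : ⟪τ * symPowThree τ,τ'⟫ = 0 := by
    rw [hτ.mul_symPowThree_eq hτ2, map_add, LinearMap.add_apply,
      hσ.isIrrChar.charPairing_eq_zero_of_degree_ne hτ' (by norm_num [hσ.degree, hτ'2]),
      hσ.isIrrChar_tracelessSymSq.charPairing_eq_zero_of_degree_ne hτ'
        (by norm_num [hσ.tracelessSymSq_apply_one, hτ'2]), add_zero]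
  rw [mul_comm, charPairing_mul_left, hτ.contragredient_eq_of_degree_eq_two hτ2, ← h,
    (hτ.isIrrChar_symPowThree hτ2).charPairing_self] at hpair
  exact one_ne_zero hpair

end SelfDual

/-! ### Product-closed sets of characters -/

section ProductClosed

variable {G : Type} [Group G] {a b θ σ ρ τ χ : G → ℂ} {E T : Finset (G → ℂ)}

/-- Eight times the amount by which the degree of `θ` exceeds `29 / 8`. -/
noncomputable def degreeExcess (θ : G → ℂ) : ℝ := 8 * (θ 1).re - 29

/-- The members of `E` of degree `d`. -/
noncomputable def ofDegree (E : Finset (G → ℂ)) (d : ℂ) : Finset (G → ℂ) := {θ ∈ E | θ 1 = d}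

lemma degreeExcess_of_degree_eq {n : ℕ} (h : θ 1 = n) : degreeExcess θ = 8 * n - 29 := by
  rw [degreeExcess, h, Complex.natCast_re]

lemma mem_ofDegree {d : ℂ} : θ ∈ ofDegree E d ↔ θ ∈ E ∧ θ 1 = d :=
  Finset.mem_filter

lemma disjoint_ofDegree {d e : ℂ} (h : d ≠ e) : Disjoint (ofDegree E d) (ofDegree E e) :=
  Finset.disjoint_left.2 fun _ hd he => h ((mem_ofDegree.1 hd).2.symm.trans (mem_ofDegree.1 he).2)

lemma sum_degreeExcess_ofDegree {n : ℕ} :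
    ∑ θ ∈ ofDegree E n, degreeExcess θ = (ofDegree E n).card * (8 * n - 29) := by
  rw [Finset.sum_congr rfl fun θ hθ => degreeExcess_of_degree_eq (mem_ofDegree.1 hθ).2,
    Finset.sum_const, nsmul_eq_mul]

variable [Finite G]

/-- `E` consists of nontrivial irreducible characters and contains every nontrivial isolated
constituent of a product of two of its members. Its degree excess can be bounded without knowing
which characters of the group it contains. -/
structure IsProductClosed (E : Finset (G → ℂ)) : Prop where
  isIrrChar : ∀ θ ∈ E, IsIrrChar G θ
  ne_one : ∀ θ ∈ E, θ ≠ 1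
  mem_of_isIsolatedConstituent : ∀ a ∈ E, ∀ b ∈ E, ∀ χ, IsIsolatedConstituent (a * b) χ → χ ≠ 1 →
    χ ∈ E

namespace IsProductClosed

lemma mem_of_eq_add (hE : IsProductClosed E) (ha : a ∈ E) (hb : b ∈ E)
    (hχ : IsIrrChar G χ) (h : a * b = χ + ρ) (hχ1 : χ 1 ≠ 1)
    (hρ : ∀ ψ, IsIrrChar G ψ → ψ 1 = χ 1 → ⟪ρ,ψ⟫ = 0) : χ ∈ E :=
  hE.mem_of_isIsolatedConstituent a ha b hb χ (h ▸ hχ.isIsolatedConstituent_add hρ) <| by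
    rintro rfl
    exact hχ1 rfl

lemma mul_mem (hE : IsProductClosed E) (ha : a ∈ E) (hb : b ∈ E)
    (h : IsIrrChar G (a * b)) (h1 : a 1 * b 1 ≠ 1) : a * b ∈ E :=
  hE.mem_of_eq_add ha hb h (add_zero _).symm h1 fun ψ _ _ => by
    rw [map_zero, LinearMap.zero_apply]

variable [IsPerfect G]

lemma exists_degree_eq_natCast (hE : IsProductClosed E) (hθ : θ ∈ E) :
    ∃ n : ℕ, 2 ≤ n ∧ θ 1 = n := by
  obtain ⟨n, hn0, hn⟩ := (hE.isIrrChar θ hθ).exists_degree_eq_natCast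
  refine ⟨n, ?_, hn⟩
  by_contra hlt
  obtain rfl : n = 1 := by lia
  exact hE.ne_one θ hθ ((hE.isIrrChar θ hθ).eq_one_of_degree_eq_one (by exact_mod_cast hn))

lemma filter_degreeExcess_neg (hE : IsProductClosed E) :
    {θ ∈ E | degreeExcess θ < 0} = ofDegree E 2 ∪ ofDegree E 3 := by
  ext θ
  rw [Finset.mem_union, mem_ofDegree, mem_ofDegree, ← and_or_left, Finset.mem_filter]
  refine and_congr_right fun hθ => ?_
  obtain ⟨n, hn2, hn⟩ := hE.exists_degree_eq_natCast hθ
  rw [degreeExcess_of_degree_eq hn, hn, sub_neg]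
  norm_cast
  lia

-- Members of degree two and three have degree excess `-13` and `-5`.
lemma sum_degreeExcess_nonneg (hE : IsProductClosed E) (hT : T ⊆ E)
    (hpos : ∀ θ ∈ T, 0 ≤ degreeExcess θ)
    (hsum : 13 * (ofDegree E 2).card + 5 * (ofDegree E 3).card ≤ ∑ θ ∈ T, degreeExcess θ) :
    0 ≤ ∑ θ ∈ E, degreeExcess θ := by
  have hneg := sum_degreeExcess_ofDegree (E := E) (n := 2)
  have hneg' := sum_degreeExcess_ofDegree (E := E) (n := 3)
  norm_num only at hneg hneg'
  have hrest : ∑ θ ∈ T, degreeExcess θ ≤ ∑ θ ∈ E with ¬degreeExcess θ < 0, degreeExcess θ :=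
    Finset.sum_le_sum_of_subset_of_nonneg
      (fun θ hθ => Finset.mem_filter.2 ⟨hT hθ, (hpos θ hθ).not_gt⟩)
      fun θ hθ _ => not_lt.1 (Finset.mem_filter.1 hθ).2
  rw [← Finset.sum_filter_add_sum_filter_not E (degreeExcess · < 0), hE.filter_degreeExcess_neg,
    Finset.sum_union (disjoint_ofDegree (by norm_num)), hneg, hneg']
  linarith

lemma adjointChar_mem (hE : IsProductClosed E) (hτ : τ ∈ E) (hτ2 : τ 1 = 2) :
    adjointChar τ ∈ E := by
  have hirr := hE.isIrrChar τ hτ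
  have hσ3 := adjointChar_apply_one_of_degree_eq_two hτ2
  refine hE.mem_of_eq_add hτ hτ (hirr.isIrrChar_adjointChar hτ2)
    (hirr.mul_self_eq_of_degree_eq_two hτ2) (by norm_num [hσ3]) fun ψ hψ hψ1 => ?_
  rw [charPairing_comm, hψ.charPairing_one_of_degree_ne (by norm_num [hψ1, hσ3])]

lemma symPowThree_mem (hE : IsProductClosed E) (hτ : τ ∈ E) (hτ2 : τ 1 = 2) :
    symPowThree τ ∈ E := by
  have hirr := hE.isIrrChar τ hτ
  have hχ4 := symPowThree_apply_one hτ2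
  exact hE.mem_of_eq_add hτ (hE.adjointChar_mem hτ hτ2) (hirr.isIrrChar_symPowThree hτ2)
    (sub_add_cancel _ τ).symm (by norm_num [hχ4]) fun ψ hψ hψ1 =>
      hirr.charPairing_eq_zero_of_degree_ne hψ (by norm_num [hψ1, hχ4, hτ2])

lemma tracelessSymSq_mem (hE : IsProductClosed E) (hσE : σ ∈ E) (hσ : IsSelfDualCubic σ) :
    tracelessSymSq σ ∈ E := by
  have hη5 := hσ.tracelessSymSq_apply_one
  refine hE.mem_of_eq_add hσE hσE hσ.isIrrChar_tracelessSymSq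
    (hσ.mul_self_eq.trans (add_assoc _ _ _)) (by norm_num [hη5]) fun ψ hψ hψ1 => ?_
  rw [map_add, LinearMap.add_apply, charPairing_comm 1,
    hψ.charPairing_one_of_degree_ne (by norm_num [hψ1, hη5]),
    hσ.isIrrChar.charPairing_eq_zero_of_degree_ne hψ (by norm_num [hψ1, hη5, hσ.degree]), add_zero]

lemma symPowFive_mem (hE : IsProductClosed E) (hτ : τ ∈ E) (hτ2 : τ 1 = 2) :
    symPowFive τ ∈ E := by
  have hirr := hE.isIrrChar τ hτ
  have hψ6 := symPowFive_apply_one hτ2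
  exact hE.mem_of_eq_add hτ
    (hE.tracelessSymSq_mem (hE.adjointChar_mem hτ hτ2) (hirr.isSelfDualCubic_adjointChar hτ2))
    (hirr.isIrrChar_symPowFive hτ2) (sub_add_cancel _ (symPowThree τ)).symm (by norm_num [hψ6])
    fun ψ hψ hψ1 => (hirr.isIrrChar_symPowThree hτ2).charPairing_eq_zero_of_degree_ne hψ
      (by norm_num [hψ1, hψ6, symPowThree_apply_one hτ2])

lemma exists_compensating_mem (hE : IsProductClosed E) (hθ : θ ∈ E) (hθ3 : θ 1 = 3)
    (hδ : IsIrrChar G (adjointChar θ)) (hb : b ∈ ofDegree E 2 ∪ ofDegree E 3) :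
    ∃ c ∈ E, ⟪θ * b,c⟫ ≠ 0 ∧ -degreeExcess b ≤ degreeExcess c := by
  have hirr := hE.isIrrChar θ hθ
  obtain hb | hb := Finset.mem_union.1 hb <;> obtain ⟨hb, hb1⟩ := mem_ofDegree.1 hb <;>
    have hbirr := hE.isIrrChar b hb
  · have hmul := hirr.isIrrChar_mul_of_isIrrChar_adjointChar hδ hθ3 hbirr hb1
    refine ⟨θ * b, hE.mul_mem hθ hb hmul (by norm_num [hθ3, hb1]), ?_, ?_⟩
    · rw [hmul.charPairing_self]
      exact one_ne_zero
    · norm_num [degreeExcess, hθ3, hb1]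
  · obtain ⟨c, n, hc, hcn, hn⟩ := hirr.exists_isIsolatedConstituent_mul hδ hθ3 hbirr hb1
    refine ⟨c, hE.mem_of_isIsolatedConstituent θ hθ b hb c hc ?_, ?_, ?_⟩
    · rintro rfl
      have : 1 = n := by exact_mod_cast (Pi.one_apply (1 : G)).symm.trans hcn
      lia
    · rw [hc.charPairing_eq_one]
      exact one_ne_zero
    · have : (5 : ℝ) ≤ n := by exact_mod_cast hn
      rw [degreeExcess_of_degree_eq hcn, degreeExcess_of_degree_eq (n := 3) (by exact_mod_cast hb1)]
      push_cast
      linarith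

-- The products of `θ` with the members of degree two and three are pairwise orthogonal, so the
-- constituents that compensate for them are distinct.
lemma sum_degreeExcess_nonneg_of_isIrrChar_adjointChar (hE : IsProductClosed E) (hθ : θ ∈ E)
    (hθ3 : θ 1 = 3) (hδ : IsIrrChar G (adjointChar θ)) : 0 ≤ ∑ θ ∈ E, degreeExcess θ := by
  have hirr := hE.isIrrChar θ hθ
  choose! c hcE hc hcexcess using fun b => hE.exists_compensating_mem hθ hθ3 hδ (b := b)
  set L := ofDegree E 2 ∪ ofDegree E 3 with hL
  have hLE {b : G → ℂ} (hb : b ∈ L) : IsIrrChar G b ∧ ∃ n : ℕ, b 1 = n ∧ n ≤ 3 := by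
    obtain hb | hb := Finset.mem_union.1 hb <;> obtain ⟨hb, hb1⟩ := mem_ofDegree.1 hb
    exacts [⟨hE.isIrrChar b hb, 2, by exact_mod_cast hb1, by lia⟩,
      ⟨hE.isIrrChar b hb, 3, by exact_mod_cast hb1, by lia⟩]
  have hinj : Set.InjOn c L := by
    intro a ha b hb hab
    obtain ⟨hairr, m, hm, hm3⟩ := hLE ha
    obtain ⟨hbirr, n, hn, hn3⟩ := hLE hb
    by_contra hne
    exact (hirr.isChar_mul hairr).charPairing_ne_zero_of_common_constituent (hirr.isChar_mul hbirr)
      (hE.isIrrChar _ (hcE a ha)) (hc a ha) (hab ▸ hc b hb)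
      (hδ.charPairing_mul_mul_eq_zero hθ3 hairr hbirr hm hn hm3 hn3 hne)
  have hneg := sum_degreeExcess_ofDegree (E := E) (n := 2)
  have hneg' := sum_degreeExcess_ofDegree (E := E) (n := 3)
  norm_num only at hneg hneg'
  refine hE.sum_degreeExcess_nonneg (T := L.image c) (Finset.image_subset_iff.2 hcE) ?_ ?_
  · refine Finset.forall_mem_image.2 fun b hb => le_trans ?_ (hcexcess b hb)
    rw [hL, ← hE.filter_degreeExcess_neg] at hb
    exact neg_nonneg.2 (Finset.mem_filter.1 hb).2.le
  · rw [Finset.sum_image hinj]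
    refine le_trans ?_ (Finset.sum_le_sum hcexcess)
    rw [Finset.sum_neg_distrib, hL, Finset.sum_union (disjoint_ofDegree (by norm_num)), hneg, hneg']
    linarith

lemma card_filter_adjointChar_le (hE : IsProductClosed E) (p : (G → ℂ) → Prop) :
    {τ ∈ ofDegree E 2 | p (adjointChar τ)}.card ≤ {ρ ∈ ofDegree E 3 | p ρ}.card := by
  refine Finset.card_le_card_of_injOn adjointChar (fun τ hτ => ?_) fun a ha b hb hab => ?_
  · obtain ⟨hτ, hp⟩ := Finset.mem_filter.1 hτ
    obtain ⟨hτE, hτ2⟩ := mem_ofDegree.1 hτ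
    exact Finset.mem_filter.2 ⟨mem_ofDegree.2 ⟨hE.adjointChar_mem hτE hτ2,
      adjointChar_apply_one_of_degree_eq_two hτ2⟩, hp⟩
  · obtain ⟨haE, ha2⟩ := mem_ofDegree.1 (Finset.mem_filter.1 ha).1
    obtain ⟨hbE, hb2⟩ := mem_ofDegree.1 (Finset.mem_filter.1 hb).1
    exact (hE.isIrrChar a haE).eq_of_adjointChar_eq ha2 (hE.isIrrChar b hbE) hb2 hab

lemma card_filter_tracelessSymSq_eq_le_two (hsd : ∀ ρ ∈ ofDegree E 3, IsSelfDualCubic ρ)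
    (η : G → ℂ) : {ρ ∈ ofDegree E 3 | tracelessSymSq ρ = η}.card ≤ 2 := by
  by_contra! hcard
  obtain ⟨a, b, c, ha, hb, hc, hab, hac, hbc⟩ := Finset.two_lt_card_iff.1 hcard
  rw [Finset.mem_filter] at ha hb hc
  exact (hsd a ha.1).tracelessSymSq_ne_of_ne (hsd b hb.1) (hsd c hc.1) hab hac hbc
    (ha.2.trans hb.2.symm) (ha.2.trans hc.2.symm)

lemma exists_subset_of_isSelfDualCubic (hE : IsProductClosed E) (hσE : σ ∈ E)
    (hσ : IsSelfDualCubic σ) :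
    ∃ T ⊆ E, (∀ θ ∈ T, degreeExcess θ ∈ Set.Ico 0 43) ∧ ∑ θ ∈ T, degreeExcess θ = 11 := by
  have hη : degreeExcess (tracelessSymSq σ) = 11 := by
    norm_num [degreeExcess, hσ.tracelessSymSq_apply_one]
  exact ⟨{tracelessSymSq σ}, Finset.singleton_subset_iff.2 (hE.tracelessSymSq_mem hσE hσ),
    by norm_num [hη], by rw [Finset.sum_singleton, hη]⟩

lemma exists_subset_of_degree_eq_two (hE : IsProductClosed E) (hτE : τ ∈ E) (hτ2 : τ 1 = 2) :
    ∃ T ⊆ E, (∀ θ ∈ T, degreeExcess θ ∈ Set.Ico 0 43) ∧ ∑ θ ∈ T, degreeExcess θ = 30 := by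
  have hσ := (hE.isIrrChar τ hτE).isSelfDualCubic_adjointChar hτ2
  have hη : degreeExcess (tracelessSymSq (adjointChar τ)) = 11 := by
    norm_num [degreeExcess, hσ.tracelessSymSq_apply_one]
  have hψ : degreeExcess (symPowFive τ) = 19 := by
    norm_num [degreeExcess, symPowFive_apply_one hτ2]
  refine ⟨{tracelessSymSq (adjointChar τ), symPowFive τ}, ?_, by norm_num [hη, hψ], ?_⟩
  · simpa [Finset.insert_subset_iff] using
      ⟨hE.tracelessSymSq_mem (hE.adjointChar_mem hτE hτ2) hσ, hE.symPowFive_mem hτE hτ2⟩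
  · rw [Finset.sum_pair (ne_of_apply_ne degreeExcess (by norm_num [hη, hψ])), hη, hψ]
    norm_num

lemma exists_subset_of_degree_eq_two_of_ne {τ' : G → ℂ} (hE : IsProductClosed E) (hτE : τ ∈ E)
    (hτ2 : τ 1 = 2) (hτ'E : τ' ∈ E) (hτ'2 : τ' 1 = 2) (hne : τ ≠ τ') :
    ∃ T ⊆ E, (∀ θ ∈ T, degreeExcess θ ∈ Set.Ico 0 43) ∧ ∑ θ ∈ T, degreeExcess θ = 36 := by
  have hirr := hE.isIrrChar τ hτE
  have hirr' := hE.isIrrChar τ' hτ'E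
  have hσ := hirr.isSelfDualCubic_adjointChar hτ2
  have hη : degreeExcess (tracelessSymSq (adjointChar τ)) = 11 := by
    norm_num [degreeExcess, hσ.tracelessSymSq_apply_one]
  have hψ : degreeExcess (symPowFive τ) = 19 := by
    norm_num [degreeExcess, symPowFive_apply_one hτ2]
  have hχ : degreeExcess (symPowThree τ) = 3 := by
    norm_num [degreeExcess, symPowThree_apply_one hτ2]
  have hmul : degreeExcess (τ * τ') = 3 := by norm_num [degreeExcess, hτ2, hτ'2]
  have hmulE := hE.mul_mem hτE hτ'E
    (hirr.isIrrChar_mul_of_degree_eq_two hτ2 hirr' hτ'2 hne) (by norm_num [hτ2, hτ'2])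
  refine ⟨{symPowThree τ, τ * τ', tracelessSymSq (adjointChar τ), symPowFive τ}, ?_,
    by norm_num [hη, hψ, hχ, hmul], ?_⟩
  · simpa [Finset.insert_subset_iff] using ⟨hE.symPowThree_mem hτE hτ2, hmulE,
      hE.tracelessSymSq_mem (hE.adjointChar_mem hτE hτ2) hσ, hE.symPowFive_mem hτE hτ2⟩
  · have hdeg {θ φ : G → ℂ} (h : degreeExcess θ ≠ degreeExcess φ) : θ ≠ φ := ne_of_apply_ne _ h
    rw [Finset.sum_insert, Finset.sum_insert, Finset.sum_pair (hdeg (by norm_num [hη, hψ])), hχ,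
      hmul, hη, hψ]
    · norm_num
    · simpa using ⟨hdeg (by norm_num [hη, hmul]), hdeg (by norm_num [hψ, hmul])⟩
    · simpa using ⟨hirr.symPowThree_ne_mul hτ2 hirr' hτ'2, hdeg (by norm_num [hη, hχ]),
        hdeg (by norm_num [hψ, hχ])⟩

lemma exists_subset_compensating_fibre (hE : IsProductClosed E)
    (hsd : ∀ ρ ∈ ofDegree E 3, IsSelfDualCubic ρ) (hσ : σ ∈ ofDegree E 3) :
    ∃ T ⊆ E, (∀ θ ∈ T, degreeExcess θ ∈ Set.Ico 0 43) ∧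
      13 * ({τ ∈ ofDegree E 2 | tracelessSymSq (adjointChar τ) = tracelessSymSq σ}.card : ℝ) +
        5 * {ρ ∈ ofDegree E 3 | tracelessSymSq ρ = tracelessSymSq σ}.card
        ≤ ∑ θ ∈ T, degreeExcess θ := by
  have hle := hE.card_filter_adjointChar_le (tracelessSymSq · = tracelessSymSq σ)
  have hcard := card_filter_tracelessSymSq_eq_le_two hsd (tracelessSymSq σ)
  set F := {ρ ∈ ofDegree E 3 | tracelessSymSq ρ = tracelessSymSq σ}
  set B := {τ ∈ ofDegree E 2 | tracelessSymSq (adjointChar τ) = tracelessSymSq σ}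
  have hF : (F.card : ℝ) ≤ 2 := by exact_mod_cast hcard
  have hBE {τ : G → ℂ} (hτ : τ ∈ B) : τ ∈ E ∧ τ 1 = 2 := mem_ofDegree.1 (Finset.mem_filter.1 hτ).1
  obtain h0 | h1 | h2 : B.card = 0 ∨ B.card = 1 ∨ B.card = 2 := by lia
  · obtain ⟨T, hTE, hT, hsum⟩ :=
      hE.exists_subset_of_isSelfDualCubic (mem_ofDegree.1 hσ).1 (hsd σ hσ)
    refine ⟨T, hTE, hT, ?_⟩
    rw [h0, hsum]
    push_cast
    linarith
  · obtain ⟨τ, hτ⟩ := Finset.card_eq_one.1 h1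
    obtain ⟨hτE, hτ2⟩ := hBE (hτ ▸ Finset.mem_singleton_self τ)
    obtain ⟨T, hTE, hT, hsum⟩ := hE.exists_subset_of_degree_eq_two hτE hτ2
    refine ⟨T, hTE, hT, ?_⟩
    rw [h1, hsum]
    push_cast
    linarith
  · obtain ⟨τ, τ', hne, hτ⟩ := Finset.card_eq_two.1 h2
    obtain ⟨hτE, hτ2⟩ := hBE (τ := τ) (by simp [hτ])
    obtain ⟨hτ'E, hτ'2⟩ := hBE (τ := τ') (by simp [hτ])
    obtain ⟨T, hTE, hT, hsum⟩ :=
      hE.exists_subset_of_degree_eq_two_of_ne hτE hτ2 hτ'E hτ'2 hne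
    refine ⟨T, hTE, hT, ?_⟩
    rw [h2, hsum]
    push_cast
    linarith

lemma sum_degreeExcess_nonneg_of_isSelfDualCubic (hE : IsProductClosed E)
    (hsd : ∀ ρ ∈ ofDegree E 3, IsSelfDualCubic ρ) (hσ : σ ∈ ofDegree E 3) :
    0 ≤ ∑ θ ∈ E, degreeExcess θ := by
  obtain ⟨T, hTE, hT, hTsum⟩ := hE.exists_subset_compensating_fibre hsd hσ
  have hσ3 := (hsd σ hσ).degree
  have hCR := hE.card_filter_adjointChar_le (tracelessSymSq · ≠ tracelessSymSq σ)
  set R := {ρ ∈ ofDegree E 3 | tracelessSymSq ρ ≠ tracelessSymSq σ}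
  have hRmem {ρ : G → ℂ} (hρ : ρ ∈ R) :
      ρ ∈ E ∧ IsSelfDualCubic ρ ∧ tracelessSymSq σ ≠ tracelessSymSq ρ := by
    obtain ⟨hρ, hne⟩ := Finset.mem_filter.1 hρ
    exact ⟨(mem_ofDegree.1 hρ).1, hsd ρ hρ, hne.symm⟩
  have hexcess : ∀ ρ ∈ R, degreeExcess (σ * ρ) = 43 := fun ρ hρ => by
    norm_num [degreeExcess, hσ3, (hRmem hρ).2.1.degree]
  have hinj : Set.InjOn (σ * ·) R := fun a ha b hb hab =>
    (hsd σ hσ).mul_injective_of_tracelessSymSq_ne (hRmem ha).2.1 (hRmem hb).2.1 (hRmem ha).2.2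
      (hRmem hb).2.2 hab
  have hdisj : Disjoint T (R.image (σ * ·)) :=
    Finset.disjoint_right.2 <| Finset.forall_mem_image.2 fun ρ hρ hρT =>
      (hT _ hρT).2.ne (hexcess ρ hρ)
  refine hE.sum_degreeExcess_nonneg (T := T ∪ R.image (σ * ·)) ?_ ?_ ?_
  · refine Finset.union_subset hTE (Finset.image_subset_iff.2 fun ρ hρ => ?_)
    obtain ⟨hρE, hρ, hne⟩ := hRmem hρ
    exact hE.mul_mem (mem_ofDegree.1 hσ).1 hρE ((hsd σ hσ).isIrrChar_mul hρ hne)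
      (by norm_num [hσ3, hρ.degree])
  · exact Finset.forall_mem_union.2 ⟨fun θ hθ => (hT θ hθ).1,
      Finset.forall_mem_image.2 fun ρ hρ => by norm_num [hexcess ρ hρ]⟩
  · rw [Finset.sum_union hdisj, Finset.sum_image hinj, Finset.sum_congr rfl hexcess,
      Finset.sum_const, nsmul_eq_mul,
      ← Finset.card_filter_add_card_filter_not (s := ofDegree E 2)
        fun τ => tracelessSymSq (adjointChar τ) = tracelessSymSq σ,
      ← Finset.card_filter_add_card_filter_not (s := ofDegree E 3)
        fun ρ => tracelessSymSq ρ = tracelessSymSq σ]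
    push_cast
    have : ({τ ∈ ofDegree E 2 | ¬tracelessSymSq (adjointChar τ) = tracelessSymSq σ}.card : ℝ) ≤
        R.card := by exact_mod_cast hCR
    linarith [R.card.cast_nonneg (α := ℝ)]

lemma exists_mem_degree_eq_three (hE : IsProductClosed E) (h : ∃ θ ∈ E, θ 1 = 2 ∨ θ 1 = 3) :
    ∃ θ ∈ E, θ 1 = 3 := by
  obtain ⟨θ, hθ, hθ2 | hθ3⟩ := h
  exacts [⟨_, hE.adjointChar_mem hθ hθ2, adjointChar_apply_one_of_degree_eq_two hθ2⟩, ⟨θ, hθ, hθ3⟩]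

theorem sum_degreeExcess_nonneg_of_mem (hE : IsProductClosed E) (hθ : θ ∈ E) (hθ3 : θ 1 = 3) :
    0 ≤ ∑ θ ∈ E, degreeExcess θ := by
  by_cases! hns : ∃ κ ∈ E, κ 1 = 3 ∧ κᵛ ≠ κ
  · obtain ⟨κ, hκ, hκ3, hκns⟩ := hns
    exact hE.sum_degreeExcess_nonneg_of_isIrrChar_adjointChar hκ hκ3
      ((hE.isIrrChar κ hκ).isIrrChar_adjointChar_of_contragredient_ne hκ3 hκns)
  · refine hE.sum_degreeExcess_nonneg_of_isSelfDualCubic (fun ρ hρ => ?_)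
      (mem_ofDegree.2 ⟨hθ, hθ3⟩)
    obtain ⟨hρE, hρ3⟩ := mem_ofDegree.1 hρ
    exact ⟨hE.isIrrChar ρ hρE, hρ3, hns ρ hρE hρ3⟩

end IsProductClosed

end ProductClosed

/-! ### Gallagher's theorem -/

section Gallagher

variable {G : Type} [Group G] {N : Subgroup G} {χ χ' φ ψ μ μ' : G → ℂ}

lemma KerContains.contragredient_mul (hμ : KerContains μ N) (hμ' : KerContains μ' N) :
    KerContains (μᵛ * μ') N := fun n hn => by
  rw [Pi.mul_apply, Pi.mul_apply, contragredient_apply, contragredient_apply, hμ _ (inv_mem hn),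
    hμ' n hn, inv_one]

variable [Finite G]

lemma IsChar.charPairing_one_eq_zero_of_res (hφ : IsChar φ) (h : ⟪res N φ,1⟫ = 0) :
    ⟪φ,1⟫ = 0 := by
  by_contra hne
  have hsub := (hφ.isChar_sub_of_charPairing_ne_zero isIrrChar_one hne).restrict N
  rw [map_sub (res N)] at hsub
  have := (isIrrChar_one.isChar.restrict N).charPairing_eq_zero_of_isChar_sub hsub
    isIrrChar_one.isChar h
  rw [map_one (res N), isIrrChar_one.charPairing_self] at this
  exact one_ne_zero this

lemma IsChar.charPairing_eq_zero_of_kerContains (hφ : IsChar φ) (hψ : IsChar ψ)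
    (hker : KerContains ψ N) (h : ⟪res N φ,1⟫ = 0) : ⟪φ,ψ⟫ = 0 := by
  have hres : res N (φ * ψᵛ) = ψ 1 • res N φ := by
    funext n
    rw [res_apply, Pi.mul_apply, contragredient_apply, hker _ (inv_mem n.2), mul_comm]
    rfl
  have := (hφ.mul hψ.contragredient).charPairing_one_eq_zero_of_res (N := N)
    (by rw [hres, map_smul, LinearMap.smul_apply, h, smul_zero])
  rwa [← charPairing_mul_right, mul_one] at this

lemma IsIrrChar.charPairing_mul_mul_of_res_ne (hχ : IsIrrChar G χ) (hχ' : IsIrrChar G χ')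
    (hres : IsIrrChar N (res N χ)) (hres' : IsIrrChar N (res N χ')) (hne : res N χ ≠ res N χ')
    (hμ : μ ∈ inflatedIrrChars N) (hμ' : μ' ∈ inflatedIrrChars N) : ⟪χ * μ,χ' * μ'⟫ = 0 := by
  obtain ⟨hμ, hker⟩ := mem_inflatedIrrChars.1 hμ
  obtain ⟨hμ', hker'⟩ := mem_inflatedIrrChars.1 hμ'
  rw [charPairing_mul_mul]
  refine (hχ.isChar.mul hχ'.contragredient.isChar).charPairing_eq_zero_of_kerContains
    (hμ.contragredient.isChar.mul hμ'.isChar) (hker.contragredient_mul hker') ?_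
  rw [map_mul (res N), res_contragredient, charPairing_mul_left, contragredient_contragredient,
    mul_one, hres.charPairing_of_ne hres' hne]

lemma IsIrrChar.charPairing_mul_mul_of_isIrrChar_res (hχ : IsIrrChar G χ)
    (hres : IsIrrChar N (res N χ)) (hμ : μ ∈ inflatedIrrChars N) (hμ' : μ' ∈ inflatedIrrChars N) :
    ⟪χ * μ,χ * μ'⟫ = ⟪μ,μ'⟫ := by
  obtain ⟨hμ, hker⟩ := mem_inflatedIrrChars.1 hμ
  obtain ⟨hμ', hker'⟩ := mem_inflatedIrrChars.1 hμ'
  have hadj : ⟪adjointChar χ,μᵛ * μ'⟫ = 0 :=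
    hχ.isChar_adjointChar.charPairing_eq_zero_of_kerContains
      (hμ.contragredient.isChar.mul hμ'.isChar) (hker.contragredient_mul hker')
      hres.charPairing_adjointChar_one
  rw [charPairing_mul_mul, mul_contragredient_eq, map_add, LinearMap.add_apply, hadj, zero_add,
    charPairing_mul_right, contragredient_contragredient, one_mul]

lemma IsIrrChar.isIrrChar_mul_of_isIrrChar_res (hχ : IsIrrChar G χ) (hres : IsIrrChar N (res N χ))
    (hμ : μ ∈ inflatedIrrChars N) : IsIrrChar G (χ * μ) := by
  have hμ' := (mem_inflatedIrrChars.1 hμ).1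
  exact (hχ.isChar_mul hμ').isIrrChar_of_charPairing_self_eq_one
    (by rw [hχ.charPairing_mul_mul_of_isIrrChar_res hres hμ hμ, hμ'.charPairing_self])

lemma IsIrrChar.res_eq_of_mul_eq_mul (hχ : IsIrrChar G χ) (hχ' : IsIrrChar G χ')
    (hres : IsIrrChar N (res N χ)) (hres' : IsIrrChar N (res N χ'))
    (hμ : μ ∈ inflatedIrrChars N) (hμ' : μ' ∈ inflatedIrrChars N) (h : χ * μ = χ' * μ') :
    res N χ = res N χ' := by
  by_contra hne
  have := hχ.charPairing_mul_mul_of_res_ne hχ' hres hres' hne hμ hμ'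
  rw [← h, (hχ.isIrrChar_mul_of_isIrrChar_res hres hμ).charPairing_self] at this
  exact one_ne_zero this

lemma IsIrrChar.eq_of_mul_eq_mul_left (hχ : IsIrrChar G χ) (hres : IsIrrChar N (res N χ))
    (hμ : μ ∈ inflatedIrrChars N) (hμ' : μ' ∈ inflatedIrrChars N) (h : χ * μ = χ * μ') :
    μ = μ' := by
  refine (mem_inflatedIrrChars.1 hμ).1.eq_of_charPairing_ne_zero (mem_inflatedIrrChars.1 hμ').1 ?_
  rw [← hχ.charPairing_mul_mul_of_isIrrChar_res hres hμ hμ', ← h,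
    (hχ.isIrrChar_mul_of_isIrrChar_res hres hμ).charPairing_self]
  exact one_ne_zero

lemma IsIrrChar.not_kerContains_mul (hχ : IsIrrChar G χ) (hres : IsIrrChar N (res N χ))
    (hne : res N χ ≠ 1) (hμ : μ ∈ inflatedIrrChars N) : ¬KerContains (χ * μ) N := fun hker =>
  hne <| hχ.res_eq_of_mul_eq_mul isIrrChar_one hres isIrrChar_one hμ
    (mem_inflatedIrrChars.2 ⟨hχ.isIrrChar_mul_of_isIrrChar_res hres hμ, hker⟩) (one_mul _).symm

lemma IsIrrChar.exists_eq_mul_of_res_eq [N.Normal] (hχ : IsIrrChar G χ) (hχ' : IsIrrChar G χ')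
    (hres : IsIrrChar N (res N χ)) (h : res N χ' = res N χ) :
    ∃ μ ∈ inflatedIrrChars N, χ' = χ * μ := by
  have hsum := sum_degree_mul_charPairing N (χ' * χᵛ)
  rw [map_mul (res N), res_contragredient, h, hres.charPairing_mul_contragredient_one] at hsum
  obtain ⟨μ, hμ, hne⟩ := Finset.exists_ne_zero_of_sum_ne_zero (hsum ▸ one_ne_zero)
  refine ⟨μ, hμ, hχ'.eq_of_charPairing_ne_zero (hχ.isIrrChar_mul_of_isIrrChar_res hres hμ) ?_⟩
  have := right_ne_zero_of_mul hne
  rwa [charPairing_mul_left, contragredient_contragredient] at this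

end Gallagher

/-! ### Characters nontrivial on a perfect normal subgroup -/

section PerfectNormal

variable {G : Type} [Group G] {χ : G → ℂ}

lemma IsIrrChar.degree_eq_of_degreeExcess_neg (hχ : IsIrrChar G χ) (h : degreeExcess χ < 0) :
    χ 1 = 1 ∨ χ 1 = 2 ∨ χ 1 = 3 := by
  obtain ⟨n, hn0, hn⟩ := hχ.exists_degree_eq_natCast
  rw [degreeExcess_of_degree_eq hn, sub_neg] at h
  rw [hn]
  norm_cast at h ⊢
  lia

variable [Finite G]

/-- The irreducible characters of degree greater than one. -/
noncomputable def nonlinearIrrChars (G : Type) [Group G] [Finite G] : Finset (G → ℂ) :=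
  {χ ∈ irrChars G | χ 1 ≠ 1}

lemma mem_nonlinearIrrChars : χ ∈ nonlinearIrrChars G ↔ IsIrrChar G χ ∧ χ 1 ≠ 1 := by
  rw [nonlinearIrrChars, Finset.mem_filter, mem_irrChars]

variable {N : Subgroup G} {μ : G → ℂ} {θ θ₀ : N → ℂ} {e : (N → ℂ) → G → ℂ}

variable (N) in
/-- The nontrivial irreducible characters of `N` that extend to `G`. -/
noncomputable def extendibleIrrChars : Finset (N → ℂ) :=
  {θ ∈ irrChars N | θ ≠ 1 ∧ ∃ χ, IsIrrChar G χ ∧ res N χ = θ}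

lemma mem_extendibleIrrChars :
    θ ∈ extendibleIrrChars N ↔ IsIrrChar N θ ∧ θ ≠ 1 ∧ ∃ χ, IsIrrChar G χ ∧ res N χ = θ := by
  rw [extendibleIrrChars, Finset.mem_filter, mem_irrChars]

/-- `e` chooses an irreducible extension to `G` of every extendible character of `N`. -/
def IsExtensionMap (e : (N → ℂ) → G → ℂ) : Prop :=
  ∀ θ ∈ extendibleIrrChars N, IsIrrChar G (e θ) ∧ res N (e θ) = θ

variable (N) in
lemma exists_isExtensionMap : ∃ e : (N → ℂ) → G → ℂ, IsExtensionMap e := by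
  have hext (θ : N → ℂ) (hθ : θ ∈ extendibleIrrChars N) := (mem_extendibleIrrChars.1 hθ).2.2
  choose! e he using hext
  exact ⟨e, he⟩

namespace IsExtensionMap

lemma isIrrChar_res (he : IsExtensionMap e) (hθ : θ ∈ extendibleIrrChars N) :
    IsIrrChar N (res N (e θ)) := by
  rw [(he θ hθ).2]
  exact (mem_extendibleIrrChars.1 hθ).1

lemma res_ne_one (he : IsExtensionMap e) (hθ : θ ∈ extendibleIrrChars N) : res N (e θ) ≠ 1 := by
  rw [(he θ hθ).2]
  exact (mem_extendibleIrrChars.1 hθ).2.1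

lemma degreeExcess_mul (he : IsExtensionMap e) (hθ : θ ∈ extendibleIrrChars N) {m n : ℕ}
    (hm : θ 1 = m) (hn : μ 1 = n) : degreeExcess (e θ * μ) = 8 * (m * n) - 29 := by
  have : (e θ * μ) 1 = (m * n : ℕ) := by
    rw [Pi.mul_apply, hn, Nat.cast_mul, ← hm, ← congrFun (he θ hθ).2 1, res_apply,
      Subgroup.coe_one]
  rw [degreeExcess_of_degree_eq this, Nat.cast_mul]

lemma injOn_mul (he : IsExtensionMap e) :
    Set.InjOn (fun p : (N → ℂ) × (G → ℂ) => e p.1 * p.2)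
      (extendibleIrrChars N ×ˢ inflatedIrrChars N : Finset _) := by
  rintro ⟨θ, μ⟩ hp ⟨θ', μ'⟩ hp' heq
  obtain ⟨hθ, hμ⟩ := Finset.mem_product.1 hp
  obtain ⟨hθ', hμ'⟩ := Finset.mem_product.1 hp'
  have hres := (he θ hθ).1.res_eq_of_mul_eq_mul (he θ' hθ').1 (he.isIrrChar_res hθ)
    (he.isIrrChar_res hθ') hμ hμ' heq
  obtain rfl : θ = θ' := by rwa [(he θ hθ).2, (he θ' hθ').2] at hres
  exact congrArg (Prod.mk θ) <|
    (he θ hθ).1.eq_of_mul_eq_mul_left (he.isIrrChar_res hθ) hμ hμ' heq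

lemma sum_degreeExcess_mul_of_degree_eq_one (he : IsExtensionMap e) (hμ : μ 1 = 1) :
    ∑ θ ∈ extendibleIrrChars N, degreeExcess (e θ * μ) =
      ∑ θ ∈ extendibleIrrChars N, degreeExcess θ :=
  Finset.sum_congr rfl fun θ hθ => by
    simp only [degreeExcess, Pi.mul_apply, hμ, mul_one, ← congrFun (he θ hθ).2 1, res_apply,
      Subgroup.coe_one]

end IsExtensionMap

variable [IsPerfect N]

lemma IsExtensionMap.degreeExcess_add_sum_nonneg (he : IsExtensionMap e)
    (hE : IsProductClosed (extendibleIrrChars N)) (hθ₀ : θ₀ ∈ extendibleIrrChars N)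
    (hθ₀3 : θ₀ 1 = 3) (hμ : IsIrrChar G μ) (hμ1 : μ 1 ≠ 1) :
    0 ≤ degreeExcess μ + ∑ θ ∈ extendibleIrrChars N, degreeExcess (e θ * μ) := by
  obtain ⟨n, hn0, hn⟩ := hμ.exists_degree_eq_natCast
  have hn2 : (2 : ℝ) ≤ n := by
    rw [hn] at hμ1
    norm_cast at hμ1 ⊢
    lia
  have hnonneg (θ) (hθ : θ ∈ extendibleIrrChars N) : 0 ≤ degreeExcess (e θ * μ) := by
    obtain ⟨m, hm2, hm⟩ := hE.exists_degree_eq_natCast hθ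
    have : (2 : ℝ) ≤ m := by exact_mod_cast hm2
    rw [he.degreeExcess_mul hθ hm hn]
    nlinarith
  have hle := Finset.single_le_sum hnonneg hθ₀
  rw [he.degreeExcess_mul hθ₀ (m := 3) (by exact_mod_cast hθ₀3) hn] at hle
  rw [degreeExcess_of_degree_eq hn]
  push_cast at hle
  linarith

variable [N.Normal]

variable (N) in
omit [IsPerfect N] in
lemma isProductClosed_extendibleIrrChars : IsProductClosed (extendibleIrrChars N) where
  isIrrChar θ hθ := (mem_extendibleIrrChars.1 hθ).1
  ne_one θ hθ := (mem_extendibleIrrChars.1 hθ).2.1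
  mem_of_isIsolatedConstituent := by
    intro θ hθ η hη κ hκ hκ1
    obtain ⟨-, -, χ, hχ, rfl⟩ := mem_extendibleIrrChars.1 hθ
    obtain ⟨-, -, ψ, hψ, rfl⟩ := mem_extendibleIrrChars.1 hη
    rw [← map_mul (res N)] at hκ
    exact mem_extendibleIrrChars.2 ⟨hκ.isIrrChar, hκ1, (hχ.isChar_mul hψ).exists_isIrrChar_res_eq
      hκ.isIrrChar hκ.charPairing_eq_one hκ.charPairing_eq_zero⟩

omit [IsPerfect N] in
lemma IsIrrChar.res_ne_one_of_not_kerContains (hχ : IsIrrChar G χ) (hker : ¬KerContains χ N) :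
    res N χ ≠ 1 := fun h => by
  have := hχ.charPairing_res_one_of_not_kerContains N hker
  rw [h, isIrrChar_one.charPairing_self] at this
  exact one_ne_zero this

lemma IsIrrChar.degree_ne_one_of_not_kerContains (hχ : IsIrrChar G χ) (hker : ¬KerContains χ N) :
    χ 1 ≠ 1 := fun h => by
  have hres1 : res N χ 1 = 1 := h
  refine hχ.res_ne_one_of_not_kerContains hker (IsIrrChar.eq_one_of_degree_eq_one ?_ hres1)
  exact (hχ.isChar.restrict N).isIrrChar_of_degree_lt_eight (d := 1) (by exact_mod_cast hres1)
    one_pos (by lia) (by lia) (by lia) (by lia)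

lemma IsIrrChar.res_mem_extendibleIrrChars (hχ : IsIrrChar G χ) (hker : ¬KerContains χ N)
    (h : χ 1 = 2 ∨ χ 1 = 3) : res N χ ∈ extendibleIrrChars N := by
  have hone := hχ.charPairing_res_one_of_not_kerContains N hker
  refine mem_extendibleIrrChars.2 ⟨?_, hχ.res_ne_one_of_not_kerContains hker, χ, hχ, rfl⟩
  exact h.elim ((hχ.isChar.restrict N).isIrrChar_of_degree_eq_two · hone)
    ((hχ.isChar.restrict N).isIrrChar_of_degree_eq_three · hone)

lemma IsExtensionMap.sum_degreeExcess_mul_le (he : IsExtensionMap e) :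
    ∑ μ ∈ inflatedIrrChars N, ∑ θ ∈ extendibleIrrChars N, degreeExcess (e θ * μ) ≤
      ∑ χ ∈ irrChars G with ¬KerContains χ N, degreeExcess χ := by
  rw [← Finset.sum_product_right' (f := fun θ μ => degreeExcess (e θ * μ)),
    ← Finset.sum_image (g := fun p : (N → ℂ) × (G → ℂ) => e p.1 * p.2) he.injOn_mul]
  refine Finset.sum_le_sum_of_subset_of_nonneg (Finset.image_subset_iff.2 ?_) fun χ hχ hmem => ?_
  · rintro ⟨θ, μ⟩ hp
    obtain ⟨hθ, hμ⟩ := Finset.mem_product.1 hp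
    exact Finset.mem_filter.2 ⟨mem_irrChars.2 <|
      (he θ hθ).1.isIrrChar_mul_of_isIrrChar_res (he.isIrrChar_res hθ) hμ,
      (he θ hθ).1.not_kerContains_mul (he.isIrrChar_res hθ) (he.res_ne_one hθ) hμ⟩
  · obtain ⟨hχ, hker⟩ := Finset.mem_filter.1 hχ
    rw [mem_irrChars] at hχ
    by_contra! hneg
    have hres := hχ.res_mem_extendibleIrrChars hker <|
      (hχ.degree_eq_of_degreeExcess_neg hneg).resolve_left
        (hχ.degree_ne_one_of_not_kerContains hker)
    obtain ⟨μ, hμ, heq⟩ := (he _ hres).1.exists_eq_mul_of_res_eq hχ (he.isIrrChar_res hres)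
      (he _ hres).2.symm
    exact hmem (Finset.mem_image.2 ⟨(_, μ), Finset.mem_product.2 ⟨hres, hμ⟩, heq.symm⟩)

lemma sum_degreeExcess_nonlinearIrrChars :
    ∑ χ ∈ nonlinearIrrChars G, degreeExcess χ =
      ∑ χ ∈ inflatedIrrChars N with χ 1 ≠ 1, degreeExcess χ +
        ∑ χ ∈ irrChars G with ¬KerContains χ N, degreeExcess χ := by
  rw [← Finset.sum_filter_add_sum_filter_not (nonlinearIrrChars G) (KerContains · N)]
  congr 2 <;> ext χ
  · simp only [Finset.mem_filter, mem_nonlinearIrrChars, mem_inflatedIrrChars]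
    tauto
  · simp only [Finset.mem_filter, mem_nonlinearIrrChars, mem_irrChars]
    exact ⟨fun h => ⟨h.1.1, h.2⟩, fun h => ⟨⟨h.1, h.1.degree_ne_one_of_not_kerContains h.2⟩, h.2⟩⟩

theorem sum_degreeExcess_nonneg_of_degree_eq_two_or_three (hχ : IsIrrChar G χ)
    (hker : ¬KerContains χ N) (hdeg : χ 1 = 2 ∨ χ 1 = 3) :
    0 ≤ ∑ χ ∈ nonlinearIrrChars G, degreeExcess χ := by
  have hE := isProductClosed_extendibleIrrChars N
  obtain ⟨e, he⟩ := exists_isExtensionMap N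
  obtain ⟨θ₀, hθ₀, hθ₀3⟩ :=
    hE.exists_mem_degree_eq_three ⟨_, hχ.res_mem_extendibleIrrChars hker hdeg, hdeg⟩
  have hsum (μ) (hμ : μ ∈ inflatedIrrChars N) : 0 ≤ (if μ 1 ≠ 1 then degreeExcess μ else 0) +
      ∑ θ ∈ extendibleIrrChars N, degreeExcess (e θ * μ) := by
    split_ifs with hμ1
    · exact he.degreeExcess_add_sum_nonneg hE hθ₀ hθ₀3 (mem_inflatedIrrChars.1 hμ).1 hμ1
    · rw [zero_add, he.sum_degreeExcess_mul_of_degree_eq_one (not_not.1 hμ1)]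
      exact hE.sum_degreeExcess_nonneg_of_mem hθ₀ hθ₀3
  have := Finset.sum_nonneg hsum
  rw [Finset.sum_add_distrib, ← Finset.sum_filter] at this
  rw [sum_degreeExcess_nonlinearIrrChars (N := N)]
  linarith [he.sum_degreeExcess_mul_le]

end PerfectNormal

/-! ### Averages over large subgroups -/

section Discharging

variable {ι κ : Type*} {A : Finset ι} {M : Finset κ} {b w : ι → ℝ} {d : κ → ℝ} {a : ι → κ → ℝ}
  {r x : ℝ}

lemma max_zero_mul_div_le_mul_mul {b w : ℝ} (hr : 9 ≤ r) (hb : 2 ≤ b) (hw : 0 ≤ w) (hx : 0 ≤ x) :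
    max 0 (29 - 8 * b) * (w * x / (r * b)) ≤ 13 / 36 * x * (b * w) := by
  have hdef : max 0 (29 - 8 * b) ≤ 13 / 4 * b ^ 2 := max_le (by positivity) (by nlinarith)
  rw [mul_div_assoc', div_le_iff₀ (by positivity)]
  calc max 0 (29 - 8 * b) * (w * x) ≤ 13 / 4 * b ^ 2 * (w * x) := by gcongr
    _ = 13 / 36 * x * (b * w) * (9 * b) := by ring
    _ ≤ 13 / 36 * x * (b * w) * (r * b) := by gcongr

lemma max_zero_mul_div_le_mul {b w : ℝ} (hr : 0 < r) (hb : 2 ≤ b) (hw : w = 0 ∨ 1 ≤ w)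
    (hle : w * x ≤ r * b) : max 0 (29 - 8 * b) * (w * x / (r * b)) ≤ 13 / 2 * (b * w) := by
  obtain rfl | hw := hw
  · simp
  have hdef : max 0 (29 - 8 * b) ≤ 13 / 2 * b := max_le (by positivity) (by linarith)
  calc max 0 (29 - 8 * b) * (w * x / (r * b)) ≤ max 0 (29 - 8 * b) * 1 := by
        gcongr
        exact div_le_one_of_le₀ hle (by positivity)
    _ ≤ 13 / 2 * b := by rwa [mul_one]
    _ ≤ 13 / 2 * (b * w) := by nlinarith

lemma sum_max_zero_mul_div_le (hr : 9 ≤ r) (hb : ∀ i ∈ A, 2 ≤ b i)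
    (hw : ∀ i ∈ A, w i = 0 ∨ 1 ≤ w i) (hx : 4 ≤ x) (hle : ∀ i ∈ A, w i * x ≤ r * b i)
    (hsum : ∑ i ∈ A, b i * w i + 2 ≤ x) :
    ∑ i ∈ A, max 0 (29 - 8 * b i) * (w i * x / (r * b i)) ≤ 8 * x - 29 := by
  have hw0 (i) (hi : i ∈ A) : 0 ≤ w i := (hw i hi).elim (·.ge) zero_le_one.trans
  have hsmall := Finset.sum_le_sum fun i hi =>
    max_zero_mul_div_le_mul_mul hr (hb i hi) (hw0 i hi) (by linarith : 0 ≤ x)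
  have hlarge := Finset.sum_le_sum fun i hi =>
    max_zero_mul_div_le_mul (by linarith) (hb i hi) (hw i hi) (hle i hi)
  rw [← Finset.mul_sum] at hsmall hlarge
  rcases le_total x 11 with h | h <;> nlinarith

/-- Each `i` has deficiency `max 0 (29 - 8 * b i)`, which is distributed among the `j ∈ M` in
proportion to `a i j * d j`. -/
lemma sum_add_sum_nonneg_of_discharging (hr : 9 ≤ r) (hb : ∀ i ∈ A, 2 ≤ b i)
    (hd : ∀ j ∈ M, 4 ≤ d j) (ha : ∀ i ∈ A, ∀ j ∈ M, a i j = 0 ∨ 1 ≤ a i j)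
    (hrow : ∀ i ∈ A, ∑ j ∈ M, a i j * d j = r * b i)
    (hcol : ∀ j ∈ M, ∑ i ∈ A, b i * a i j + 2 ≤ d j) :
    0 ≤ ∑ i ∈ A, (8 * b i - 29) + ∑ j ∈ M, (8 * d j - 29) := by
  have ha0 (i) (hi : i ∈ A) (j) (hj : j ∈ M) : 0 ≤ a i j * d j :=
    mul_nonneg ((ha i hi j hj).elim (·.ge) zero_le_one.trans) (by linarith [hd j hj])
  have hload : ∑ j ∈ M, ∑ i ∈ A, max 0 (29 - 8 * b i) * (a i j * d j / (r * b i)) ≤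
      ∑ j ∈ M, (8 * d j - 29) :=
    Finset.sum_le_sum fun j hj => sum_max_zero_mul_div_le hr hb (ha · · j hj) (hd j hj)
      (fun i hi => hrow i hi ▸ Finset.single_le_sum (ha0 i hi) hj) (hcol j hj)
  have htotal : ∑ j ∈ M, ∑ i ∈ A, max 0 (29 - 8 * b i) * (a i j * d j / (r * b i)) =
      ∑ i ∈ A, max 0 (29 - 8 * b i) := by
    rw [Finset.sum_comm]
    refine Finset.sum_congr rfl fun i hi => ?_
    have : r * b i ≠ 0 := (mul_pos (by linarith) (by linarith [hb i hi])).ne'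
    rw [← Finset.mul_sum, ← Finset.sum_div, hrow i hi, div_self this, mul_one]
  have hdef : ∑ i ∈ A, -(8 * b i - 29) ≤ ∑ i ∈ A, max 0 (29 - 8 * b i) :=
    Finset.sum_le_sum fun i _ => (neg_sub _ _).trans_le (le_max_right _ _)
  rw [Finset.sum_neg_distrib] at hdef
  linarith

end Discharging

section Invariants

open Module

lemma trace_eq_finrank_of_finrank_le_add_one {K V : Type*} [Field K] [AddCommGroup V] [Module K V]
    [Module.Finite K V] {f : V →ₗ[K] V} (hdet : LinearMap.det f = 1)
    (h : finrank K V ≤ finrank K f.fixedSubmodule + 1) : LinearMap.trace K V f = finrank K V := by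
  obtain ⟨e, rfl⟩ : ∃ e : V ≃ₗ[K] V, (e : V →ₗ[K] V) = f :=
    ⟨LinearMap.equivOfDetNeZero f (hdet ▸ one_ne_zero), rfl⟩
  have hquot := Submodule.finrank_quotient_add_finrank (e : V →ₗ[K] V).fixedSubmodule
  obtain ⟨φ, v, hφv⟩ : e ∈ LinearEquiv.dilatransvections K V :=
    LinearEquiv.mem_dilatransvections_iff_finrank_quotient.2 (by lia)
  have hid : LinearMap.transvection φ v = LinearMap.id + φ.smulRight v := rfl
  rw [hφv, LinearMap.transvection.det, add_eq_left] at hdet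
  rw [hφv, hid, map_add, LinearMap.trace_id, LinearMap.trace_smulRight, hdet, add_zero]

variable {G : Type} [Group G] [Finite G]

lemma charPairing_res_character_one (D : Subgroup G) (V : FDRep ℂ G) :
    ⟪res D V.character,1⟫ = finrank ℂ (Representation.invariants (V.ρ.comp D.subtype)) := by
  have := Fintype.ofFinite G
  have := invertibleOfNonzero (natCard_cast_ne_zero D)
  rw [charPairing_res_one]
  exact FDRep.average_char_eq_finrank_invariants (FDRep.of (V.ρ.comp D.subtype))

lemma invariants_eq_top_of_finrank_le_add_one {V : Type} [AddCommGroup V] [Module ℂ V]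
    [Module.Finite ℂ V] (ρ : Representation ℂ G V) (hdet : ∀ g, LinearMap.det (ρ g) = 1)
    (h : finrank ℂ V ≤ finrank ℂ ρ.invariants + 1) : ρ.invariants = ⊤ := by
  have := Fintype.ofFinite G
  have := invertibleOfNonzero (natCard_cast_ne_zero G)
  have htrace (g : G) : (FDRep.of ρ).character g = finrank ℂ V := by
    refine trace_eq_finrank_of_finrank_le_add_one (hdet g) (h.trans (Nat.succ_le_succ ?_))
    exact Submodule.finrank_mono fun v hv => LinearMap.mem_fixedSubmodule_iff.2 (hv g)
  have haverage := FDRep.average_char_eq_finrank_invariants (FDRep.of ρ)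
  rw [Finset.sum_congr rfl fun g _ => htrace g, Finset.sum_const, Finset.card_univ,
    ← Nat.card_eq_fintype_card, nsmul_eq_mul, inv_mul_cancel_left₀ (natCard_cast_ne_zero G)]
    at haverage
  exact Submodule.eq_top_of_finrank_eq (by exact_mod_cast haverage.symm)

variable {N D : Subgroup G} {ψ : G → ℂ}

theorem IsIrrChar.charPairing_res_one_add_two_le [IsPerfect N] [N.Normal] (hψ : IsIrrChar G ψ)
    (hker : ¬KerContains ψ N) (hDN : D ≤ N)
    (hmax : ∀ K : Subgroup G, K.Normal → D ≤ K → K ≤ N → K = N) :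
    ⟪res D ψ,1⟫.re + 2 ≤ (ψ 1).re := by
  obtain ⟨V, -, rfl⟩ := hψ.exists_fdRep
  let I := Representation.invariants (V.ρ.comp D.subtype)
  rw [charPairing_res_character_one, V.char_one, Complex.natCast_re, Complex.natCast_re]
  by_contra! hlt
  have htop : I = ⊤ := by
    refine invariants_eq_top_of_finrank_le_add_one _ (fun x => ?_) ?_
    · exact monoidHom_eq_one_of_isPerfect (LinearMap.det.comp (V.ρ.comp N.subtype)) ⟨x, hDN x.2⟩
    · exact Nat.lt_succ_iff.1 (by exact_mod_cast hlt)
  have hN : V.ρ.ker ⊓ N = N := by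
    refine hmax _ inferInstance (le_inf (fun x hx => ?_) hDN) inf_le_right
    refine MonoidHom.mem_ker.2 (LinearMap.ext fun v => ?_)
    exact (htop ▸ Submodule.mem_top : v ∈ I) ⟨x, hx⟩
  exact hker fun n hn => congrArg (LinearMap.trace ℂ V) <|
    (MonoidHom.mem_ker.1 (inf_eq_right.1 hN hn)).trans (map_one V.ρ).symm

end Invariants

section CosetPermChar

variable {G : Type} [Group G] {f h : G → ℂ} {U N : Subgroup G}

/-- The permutation character of `G` on the left cosets of `U`. -/
noncomputable def cosetPermChar (U : Subgroup G) (g : G) : ℂ :=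
  Nat.card (MulAction.fixedBy (G ⧸ U) g)

lemma cosetPermChar_one (U : Subgroup G) : cosetPermChar U 1 = U.index := by
  rw [cosetPermChar, MulAction.fixedBy_one_eq_univ, Nat.card_coe_set_eq, Set.ncard_univ,
    Subgroup.index]

lemma cosetPermChar_mem_classFunctions (U : Subgroup G) : cosetPermChar U ∈ classFunctions G := by
  intro a b
  rw [cosetPermChar, cosetPermChar,
    Nat.card_congr ((MulAction.toPerm b).subtypeEquiv (q := (· ∈ MulAction.fixedBy _ (b * a))) _)]
  intro c
  simp only [MulAction.mem_fixedBy, MulAction.toPerm_apply, mul_smul, smul_left_cancel_iff]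

variable [Finite G]

lemma charPairing_mul_cosetPermChar_one (hf : f ∈ classFunctions G) (U : Subgroup G) :
    ⟪f * cosetPermChar U,1⟫ = ⟪res U f,1⟫ := by
  have := Fintype.ofFinite G
  have hfix (c : G ⧸ U) : ∑ g, (if g • c = c then f g else 0) = ∑ u : U, f u := by
    induction c using QuotientGroup.induction_on with | _ x =>
    rw [sum_subgroup_eq_sum_ite, ← Equiv.sum_comp (MulAut.conj x).toEquiv]
    refine Finset.sum_congr rfl fun g _ => ?_
    have hconj : f (x * g * x⁻¹) = f g := by rw [hf, inv_mul_cancel_left]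
    simp [eq_comm, QuotientGroup.eq, hconj]
  have hsum : ∑ g, f g * cosetPermChar U g = U.index * ∑ u : U, f u := by
    have hcard (g : G) : f g * cosetPermChar U g = ∑ c : G ⧸ U, if g • c = c then f g else 0 := by
      rw [← Finset.sum_filter, Finset.sum_const, nsmul_eq_mul, mul_comm, cosetPermChar,
        Nat.card_eq_fintype_card, Fintype.card_subtype]
      rfl
    simp only [hcard]
    rw [Finset.sum_comm, Finset.sum_congr rfl fun c _ => hfix c, Finset.sum_const, nsmul_eq_mul,
      Finset.card_univ, ← Nat.card_eq_fintype_card, Subgroup.index]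
  have hindex : (Nat.card U : ℂ) * U.index = Nat.card G := by exact_mod_cast U.card_mul_index
  rw [charPairing_res_one, charPairing_apply]
  simp only [Pi.mul_apply, Pi.one_apply, mul_one, hsum]
  have := natCard_cast_ne_zero G
  have := natCard_cast_ne_zero U
  field_simp
  linear_combination (∑ u : U, f u) * hindex

lemma charPairing_mul_cosetPermChar (hf : f ∈ classFunctions G) (hh : h ∈ classFunctions G)
    (U : Subgroup G) : ⟪f * cosetPermChar U,h⟫ = ⟪res U f,res U h⟫ := by
  have hh' : hᵛ ∈ classFunctions G := fun a b => by
    rw [contragredient_apply, contragredient_apply, mul_inv_rev, mul_inv_rev, hh]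
  have hone := charPairing_mul_cosetPermChar_one (mul_mem hf hh') U
  rwa [mul_right_comm, ← charPairing_mul_right, map_mul (res U), res_contragredient,
    ← charPairing_mul_right, mul_one, mul_one] at hone

lemma charPairing_res_one_of_sup_eq_top [N.Normal] (hUN : U ⊔ N = ⊤)
    (hf : ∀ n ∈ N, ∀ g, f (n * g) = f g) : ⟪res U f,1⟫ = ⟪f,1⟫ := by
  have := Fintype.ofFinite G
  have hcoset (g : G) : ∑ u : U, f (g * u) = ∑ u : U, f u := by
    obtain ⟨n, hn, v, hv, rfl⟩ := Subgroup.mem_sup_of_normal_left.1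
      (sup_comm U N ▸ hUN ▸ Subgroup.mem_top g : g ∈ N ⊔ U)
    simp only [mul_assoc, hf n hn]
    exact Equiv.sum_comp (Equiv.mulLeft (⟨v, hv⟩ : U)) fun u => f u
  have hsum : Nat.card G * ∑ u : U, f u = Nat.card U * ∑ g, f g :=
    calc Nat.card G * ∑ u : U, f u = ∑ g : G, ∑ u : U, f (g * u) := by simp [hcoset]
      _ = ∑ u : U, ∑ g : G, f (g * u) := Finset.sum_comm
      _ = ∑ u : U, ∑ g, f g := Finset.sum_congr rfl fun u _ => Equiv.sum_comp (Equiv.mulRight _) f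
      _ = Nat.card U * ∑ g, f g := by simp
  rw [charPairing_res_one, charPairing_apply]
  simp only [Pi.one_apply, mul_one]
  have := natCard_cast_ne_zero G
  have := natCard_cast_ne_zero U
  field_simp
  linear_combination hsum

lemma charPairing_res_of_mem_inflatedIrrChars [N.Normal] (hUN : U ⊔ N = ⊤) {β γ : G → ℂ}
    (hβ : β ∈ inflatedIrrChars N) (hγ : γ ∈ inflatedIrrChars N) :
    ⟪res U β,res U γ⟫ = ⟪β,γ⟫ := by
  obtain ⟨hβ, hβN⟩ := mem_inflatedIrrChars.1 hβ
  obtain ⟨hγ, hγN⟩ := mem_inflatedIrrChars.1 hγ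
  have hγN' : KerContains γᵛ N := fun n hn => by simpa using hγN n⁻¹ (inv_mem hn)
  have hone := charPairing_res_one_of_sup_eq_top (f := β * γᵛ) hUN fun n hn g => by
    rw [Pi.mul_apply, Pi.mul_apply, hβ.apply_mul_of_kerContains N hβN hn,
      hγ.contragredient.apply_mul_of_kerContains N hγN' hn]
  rwa [map_mul (res U), res_contragredient, ← charPairing_mul_right, mul_one,
    ← charPairing_mul_right, mul_one] at hone

variable {ψ β : G → ℂ} [N.Normal]

lemma sum_charPairing_res_mul_degree (hUN : U ⊔ N = ⊤) (hβ : β ∈ inflatedIrrChars N) :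
    ∑ ψ ∈ irrChars G with ¬KerContains ψ N, ⟪res U β,res U ψ⟫ * ψ 1 = (U.index - 1) * β 1 := by
  obtain ⟨hβ', hβN⟩ := mem_inflatedIrrChars.1 hβ
  have hexpand := congrFun (eq_sum_charPairing_smul
    (mul_mem hβ'.isChar.mem_classFunctions (cosetPermChar_mem_classFunctions U))) 1
  have hterm (ψ) (hψ : ψ ∈ irrChars G) :
      (⟪β * cosetPermChar U,ψ⟫ • ψ) 1 = ⟪res U β,res U ψ⟫ * ψ 1 := by
    rw [charPairing_mul_cosetPermChar hβ'.isChar.mem_classFunctions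
      (mem_irrChars.1 hψ).isChar.mem_classFunctions, Pi.smul_apply, smul_eq_mul]
  have hinflated : ∑ ψ ∈ irrChars G with KerContains ψ N, ⟪res U β,res U ψ⟫ * ψ 1 = β 1 := by
    have hmem : β ∈ (irrChars G).filter (KerContains · N) :=
      Finset.mem_filter.2 ⟨mem_irrChars.2 hβ', hβN⟩
    rw [Finset.sum_eq_single_of_mem β hmem fun ψ hψ hne => ?_,
      charPairing_res_of_mem_inflatedIrrChars hUN hβ hβ, hβ'.charPairing_self, one_mul]
    obtain ⟨hψ, hψN⟩ := Finset.mem_filter.1 hψ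
    rw [mem_irrChars] at hψ
    rw [charPairing_res_of_mem_inflatedIrrChars hUN hβ (mem_inflatedIrrChars.2 ⟨hψ, hψN⟩),
      hβ'.charPairing_of_ne hψ hne.symm, zero_mul]
  rw [Finset.sum_apply, Finset.sum_congr rfl hterm,
    ← Finset.sum_filter_add_sum_filter_not _ (KerContains · N), hinflated, Pi.mul_apply,
    cosetPermChar_one] at hexpand
  linear_combination -hexpand

omit [N.Normal] in
lemma natCard_mul_charPairing_res_mul_extendByZero_one (U N : Subgroup G) (f : G → ℂ) :
    Nat.card U * ⟪res U (f * extendByZero (1 : N → ℂ)),1⟫ =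
      Nat.card (U ⊓ N : Subgroup G) * ⟪res (U ⊓ N) f,1⟫ := by
  have := Fintype.ofFinite G
  rw [charPairing_res_one, charPairing_res_one, mul_inv_cancel_left₀ (natCard_cast_ne_zero U),
    mul_inv_cancel_left₀ (natCard_cast_ne_zero _), sum_subgroup_eq_sum_ite,
    sum_subgroup_eq_sum_ite]
  refine Finset.sum_congr rfl fun g _ => ?_
  by_cases hg : g ∈ N
  · simp [Subgroup.mem_inf, hg, extendByZero_coe (1 : N → ℂ) ⟨g, hg⟩]
  · simp [Subgroup.mem_inf, hg, extendByZero_of_notMem]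

omit [Finite G] in
lemma natCard_inf_mul_index_of_sup_eq_top (hUN : U ⊔ N = ⊤) :
    Nat.card (U ⊓ N : Subgroup G) * N.index = Nat.card U := by
  rw [← Subgroup.relIndex_top_right, ← hUN, Subgroup.relIndex_sup_right,
    ← Subgroup.inf_relIndex_left, ← Subgroup.relIndex_bot_left, ← Subgroup.relIndex_bot_left,
    Subgroup.relIndex_mul_relIndex _ _ _ bot_le inf_le_left]

lemma charPairing_res_mul_cosetPermChar_one (hUN : U ⊔ N = ⊤) (hf : f ∈ classFunctions G) :
    ⟪res N (f * cosetPermChar U),1⟫ = ⟪res (U ⊓ N) f,1⟫ := by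
  have hextend : extendByZero (1 : N → ℂ) ∈ classFunctions G :=
    extendByZero_mem_classFunctions fun _ => rfl
  have hG := natCard_mul_charPairing_extendByZero (1 : N → ℂ) (f * cosetPermChar U)ᵛ
  rw [res_contragredient, ← mul_one (f * cosetPermChar U)ᵛ, charPairing_mul_right,
    contragredient_contragredient, ← mul_one (res N (f * cosetPermChar U))ᵛ, charPairing_mul_right,
    contragredient_contragredient, one_mul, ← mul_assoc, mul_comm _ f,
    charPairing_mul_cosetPermChar_one (mul_mem hf hextend)] at hG
  have hU := natCard_mul_charPairing_res_mul_extendByZero_one U N f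
  have hcardU : (Nat.card (U ⊓ N : Subgroup G) * N.index : ℂ) = Nat.card U := by
    exact_mod_cast natCard_inf_mul_index_of_sup_eq_top hUN
  have hcardG : (Nat.card N * N.index : ℂ) = Nat.card G := by exact_mod_cast N.card_mul_index
  have hindex : (N.index : ℂ) ≠ 0 := Nat.cast_ne_zero.2 Subgroup.index_ne_zero_of_finite
  rw [← hcardU] at hU
  rw [← hcardG] at hG
  refine mul_left_cancel₀ (natCard_cast_ne_zero N) (hG.symm.trans ?_)
  have hU' : N.index * ⟪res U (f * extendByZero (1 : N → ℂ)),1⟫ = ⟪res (U ⊓ N) f,1⟫ :=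
    mul_left_cancel₀ (natCard_cast_ne_zero _) (by rw [← mul_assoc, hU])
  rw [mul_assoc, hU']

lemma sum_degree_mul_charPairing_res (hUN : U ⊔ N = ⊤) (hψ : ψ ∈ classFunctions G) :
    ∑ β ∈ inflatedIrrChars N, β 1 * ⟪res U β,res U ψ⟫ = ⟪res (U ⊓ N) ψ,1⟫ := by
  rw [← charPairing_res_mul_cosetPermChar_one hUN hψ, ← sum_degree_mul_charPairing]
  refine Finset.sum_congr rfl fun β hβ => ?_
  rw [charPairing_mul_cosetPermChar hψ (mem_inflatedIrrChars.1 hβ).1.isChar.mem_classFunctions,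
    charPairing_comm]

end CosetPermChar

section LargeIndex

variable {G : Type} [Group G] {N U : Subgroup G} {χ ψ : G → ℂ}

lemma IsChar.re_degree_nonneg (hχ : IsChar χ) : 0 ≤ (χ 1).re := by
  obtain ⟨n, hn⟩ := hχ.exists_degree_eq_natCast
  simp [hn]

lemma IsChar.re_degree_mul (hχ : IsChar χ) (z : ℂ) : (χ 1 * z).re = (χ 1).re * z.re := by
  obtain ⟨n, hn⟩ := hχ.exists_degree_eq_natCast
  rw [hn, ← Complex.ofReal_natCast, Complex.re_ofReal_mul, Complex.ofReal_re]

lemma IsIrrChar.two_le_re_degree (hχ : IsIrrChar G χ) (hone : χ 1 ≠ 1) : 2 ≤ (χ 1).re := by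
  obtain ⟨n, hpos, hn⟩ := hχ.exists_degree_eq_natCast
  rw [hn] at hone
  rw [hn, Complex.natCast_re]
  norm_cast at hone ⊢
  lia

lemma IsIrrChar.four_le_re_degree (hχ : IsIrrChar G χ) (hone : χ 1 ≠ 1) (htwo : χ 1 ≠ 2)
    (hthree : χ 1 ≠ 3) : 4 ≤ (χ 1).re := by
  obtain ⟨n, hpos, hn⟩ := hχ.exists_degree_eq_natCast
  rw [hn] at hone htwo hthree
  rw [hn, Complex.natCast_re]
  norm_cast at hone htwo hthree ⊢
  lia

variable [Finite G]

lemma IsChar.re_charPairing_eq_zero_or_one_le (hχ : IsChar χ) (hψ : IsChar ψ) :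
    ⟪χ,ψ⟫.re = 0 ∨ 1 ≤ ⟪χ,ψ⟫.re := by
  obtain ⟨n, hn⟩ := hχ.exists_charPairing_eq_natCast hψ
  rw [hn, Complex.natCast_re]
  norm_cast
  lia

variable [N.Normal]

lemma sum_re_charPairing_res_mul_re_degree (hUN : U ⊔ N = ⊤) (hχ : χ ∈ inflatedIrrChars N) :
    ∑ ψ ∈ irrChars G with ¬KerContains ψ N, ⟪res U χ,res U ψ⟫.re * (ψ 1).re =
      (U.index - 1) * (χ 1).re := by
  have hsum := congrArg Complex.re (sum_charPairing_res_mul_degree hUN hχ)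
  rw [Complex.re_sum, mul_comm _ (χ 1), (mem_inflatedIrrChars.1 hχ).1.isChar.re_degree_mul,
    mul_comm (χ 1).re, Complex.sub_re, Complex.natCast_re, Complex.one_re] at hsum
  rw [← hsum]
  refine Finset.sum_congr rfl fun ψ hψ => ?_
  rw [mul_comm _ (ψ 1), (mem_irrChars.1 (Finset.mem_filter.1 hψ).1).isChar.re_degree_mul, mul_comm]

lemma sum_re_degree_mul_re_charPairing_res_le (hUN : U ⊔ N = ⊤) (hψ : IsChar ψ) :
    ∑ χ ∈ inflatedIrrChars N with χ 1 ≠ 1, (χ 1).re * ⟪res U χ,res U ψ⟫.re ≤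
      ⟪res (U ⊓ N) ψ,1⟫.re := by
  have hchar {χ} (hχ : χ ∈ inflatedIrrChars N) : IsChar χ := (mem_inflatedIrrChars.1 hχ).1.isChar
  rw [← sum_degree_mul_charPairing_res hUN hψ.mem_classFunctions, Complex.re_sum]
  rw [Finset.sum_congr rfl fun χ hχ => (hchar hχ).re_degree_mul _]
  refine Finset.sum_le_sum_of_subset_of_nonneg (Finset.filter_subset _ _) fun χ hχ _ => ?_
  exact mul_nonneg (hchar hχ).re_degree_nonneg
    ((((hchar hχ).restrict U).re_charPairing_eq_zero_or_one_le (hψ.restrict U)).elim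
      (·.ge) zero_le_one.trans)

theorem sum_degreeExcess_nonneg_of_ten_le_index [IsPerfect N] (hUN : U ⊔ N = ⊤)
    (hindex : 10 ≤ U.index)
    (hmax : ∀ K : Subgroup G, K.Normal → U ⊓ N ≤ K → K ≤ N → K = N)
    (hdeg : ∀ χ, IsIrrChar G χ → ¬KerContains χ N → χ 1 ≠ 2 ∧ χ 1 ≠ 3) :
    0 ≤ ∑ χ ∈ nonlinearIrrChars G, degreeExcess χ := by
  have hinflated {β} (hβ : β ∈ (inflatedIrrChars N).filter (· 1 ≠ 1)) :
      β ∈ inflatedIrrChars N ∧ IsIrrChar G β ∧ β 1 ≠ 1 :=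
    have := Finset.mem_filter.1 hβ
    ⟨this.1, (mem_inflatedIrrChars.1 this.1).1, this.2⟩
  have hker {ψ} (hψ : ψ ∈ (irrChars G).filter (¬KerContains · N)) :
      IsIrrChar G ψ ∧ ¬KerContains ψ N :=
    (Finset.mem_filter.1 hψ).imp_left mem_irrChars.1
  rw [sum_degreeExcess_nonlinearIrrChars (N := N)]
  refine sum_add_sum_nonneg_of_discharging (b := fun β => (β 1).re) (d := fun ψ => (ψ 1).re)
    (a := fun β ψ => ⟪res U β,res U ψ⟫.re) (r := U.index - 1) ?_ (fun β hβ => ?_)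
    (fun ψ hψ => ?_) (fun β hβ ψ hψ => ?_) (fun β hβ => ?_) fun ψ hψ => ?_
  · have : (10 : ℝ) ≤ U.index := by exact_mod_cast hindex
    linarith
  · exact (hinflated hβ).2.1.two_le_re_degree (hinflated hβ).2.2
  · obtain ⟨hψ, hψN⟩ := hker hψ
    obtain ⟨htwo, hthree⟩ := hdeg ψ hψ hψN
    exact hψ.four_le_re_degree (hψ.degree_ne_one_of_not_kerContains hψN) htwo hthree
  · exact ((hinflated hβ).2.1.isChar.restrict U).re_charPairing_eq_zero_or_one_le
      ((hker hψ).1.isChar.restrict U)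
  · exact sum_re_charPairing_res_mul_re_degree hUN (hinflated hβ).1
  · obtain ⟨hψ, hψN⟩ := hker hψ
    linarith [sum_re_degree_mul_re_charPairing_res_le hUN hψ.isChar,
      hψ.charPairing_res_one_add_two_le hψN inf_le_right hmax]

end LargeIndex

/-! ### Sylow numbers of characteristically simple groups -/

section Sylow

open MulAction Subgroup

/-- A nontrivial group without characteristic subgroups other than itself and the trivial one. -/
class IsCharacteristicallySimple (H : Type*) [Group H] : Prop extends Nontrivial H where
  eq_bot_or_eq_top_of_characteristic (K : Subgroup H) : K.Characteristic → K = ⊥ ∨ K = ⊤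

variable {H X : Type*} [Group H] {p q : ℕ}

lemma characteristic_ker_toPermHom_sylow (p : ℕ) :
    (toPermHom H (Sylow p H)).ker.Characteristic := by
  rw [characteristic_iff_map_le]
  rintro (φ : MulAut H) _ ⟨g, hg, rfl⟩
  rw [SetLike.mem_coe, MonoidHom.mem_ker] at hg
  refine MonoidHom.mem_ker.2 (Equiv.ext fun P => ?_)
  have hconj : MulAut.conj (φ g) * φ = φ * MulAut.conj g := by
    ext x
    simp
  have hfix : g • (φ⁻¹ • P) = φ⁻¹ • P := DFunLike.congr_fun hg (φ⁻¹ • P)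
  change φ g • P = P
  rw [Sylow.smul_def] at hfix ⊢
  nth_rw 1 [← smul_inv_smul φ P]
  rw [← mul_smul, hconj, mul_smul, hfix, smul_inv_smul]

lemma characteristic_iSup_sylow (p : ℕ) : (⨆ P : Sylow p H, (P : Subgroup H)).Characteristic := by
  rw [characteristic_iff_map_le]
  intro (φ : MulAut H)
  rw [Subgroup.map_iSup]
  exact iSup_le fun P => le_iSup (fun P : Sylow p H => (P : Subgroup H)) (φ • P)

lemma orbit_eq_univ_of_isPGroup [Finite X] [MulAction H X] [hp : Fact p.Prime] (hH : IsPGroup p H)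
    (hX : Nat.card X = p) {x : X} (hx : x ∉ fixedPoints H X) : orbit H x = Set.univ := by
  obtain ⟨k, hk⟩ := hH.card_orbit x
  refine Set.eq_of_subset_of_ncard_le (Set.subset_univ _) ?_
  rw [Set.ncard_univ, hX, ← Nat.card_coe_set_eq, hk]
  refine Nat.le_self_pow (fun hk0 => hx ?_) p
  rw [hk0, pow_zero] at hk
  rw [← subsingleton_orbit_iff_mem_fixedPoints, ← Set.subsingleton_coe]
  exact (Nat.card_eq_one_iff_unique.1 hk).1

lemma isSolvable_alternatingGroup_of_card_le_four [Fintype X] [DecidableEq X]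
    (hX : Nat.card X ≤ 4) : Group.IsSolvable (alternatingGroup X) := by
  obtain hlt | heq := hX.lt_or_eq
  · have := alternatingGroup.isMulCommutative_of_card_le_three (Nat.lt_succ_iff.1 hlt)
    exact Group.isSolvable_of_comm mul_comm'
  · have := (alternatingGroup.kleinFour_isKleinFour heq).isMulCommutative
    refine ⟨⟨2, ?_⟩⟩
    rw [derivedSeries_succ, derivedSeries_one, ← alternatingGroup.kleinFour_eq_commutator heq,
      commutator_eq_bot_iff_le_centralizer]
    exact le_centralizer _

variable [Finite H]

lemma card_sylow_dvd_card [Fact p.Prime] : Nat.card (Sylow p H) ∣ Nat.card H := by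
  obtain ⟨P⟩ := Sylow.nonempty (p := p) (G := H)
  exact P.card_dvd_index.trans P.index_dvd_card

variable [IsPerfect H]

/-- The action of a perfect group on a finite set is by even permutations. -/
noncomputable def toAlternatingHom (H X : Type*) [Group H] [IsPerfect H] [MulAction H X]
    [Fintype X] : H →* alternatingGroup X :=
  (toPermHom H X).codRestrict _ fun h => Equiv.Perm.mem_alternatingGroup.2 <|
    monoidHom_eq_one_of_isPerfect (Equiv.Perm.sign.comp (toPermHom H X)) h

open scoped IsMulCommutative in
lemma normalizer_sylow_ne_self [Fact p.Prime] (P : Sylow p H) [IsMulCommutative P]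
    (hP : (P : Subgroup H) ≠ ⊥) : normalizer (P : Set H) ≠ P := fun hN => by
  have hNC : normalizer (P : Set H) ≤ centralizer (P : Set H) :=
    hN.trans_le (le_centralizer (P : Subgroup H))
  have hker : (MonoidHom.transferSylow P hNC).ker = ⊤ :=
    eq_top_iff.2 fun x _ => monoidHom_eq_one_of_isPerfect (MonoidHom.transferSylow P hNC) x
  exact hP (isComplement'_top_left.1 (hker ▸ MonoidHom.ker_transferSylow_isComplement' P hNC))

variable [IsCharacteristicallySimple H] [Fact p.Prime]

lemma normalizer_sylow_ne_top (hp : p ∣ Nat.card H) (P : Sylow p H) :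
    normalizer (P : Set H) ≠ ⊤ := fun hN => by
  have hnormal := normalizer_eq_top_iff.1 hN
  obtain hbot | htop := IsCharacteristicallySimple.eq_bot_or_eq_top_of_characteristic _
    (P.characteristic_of_normal hnormal)
  · exact P.ne_bot_of_dvd_card hp hbot
  · exact IsPerfect.not_isNilpotent H
      ((htop ▸ P.2 : IsPGroup p (⊤ : Subgroup H)).of_equiv topEquiv).isNilpotent

lemma ker_toPermHom_sylow_eq_bot (hp : p ∣ Nat.card H) : (toPermHom H (Sylow p H)).ker = ⊥ := by
  refine (IsCharacteristicallySimple.eq_bot_or_eq_top_of_characteristic _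
    (characteristic_ker_toPermHom_sylow p)).resolve_right fun htop => ?_
  obtain ⟨P⟩ := Sylow.nonempty (p := p) (G := H)
  refine normalizer_sylow_ne_top hp P (eq_top_iff.2 fun g _ => ?_)
  rw [← Sylow.smul_eq_iff_mem_normalizer]
  exact DFunLike.congr_fun (MonoidHom.mem_ker.1 (htop ▸ mem_top g)) P

lemma toAlternatingHom_sylow_injective [Fintype (Sylow p H)] (hp : p ∣ Nat.card H) :
    Function.Injective (toAlternatingHom H (Sylow p H)) := by
  rw [toAlternatingHom, MonoidHom.injective_codRestrict, ← MonoidHom.ker_eq_bot_iff]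
  exact ker_toPermHom_sylow_eq_bot hp

lemma five_le_card_sylow (hp : p ∣ Nat.card H) : 5 ≤ Nat.card (Sylow p H) := by
  have := Fintype.ofFinite (Sylow p H)
  by_contra! hlt
  have := isSolvable_alternatingGroup_of_card_le_four (Nat.lt_succ_iff.1 hlt)
  exact IsPerfect.not_isSolvable H
    (Group.isSolvable_of_isSolvable_injective (toAlternatingHom_sylow_injective hp))

lemma two_mul_card_dvd_factorial_card_sylow (hp : p ∣ Nat.card H) :
    2 * Nat.card H ∣ (Nat.card (Sylow p H)).factorial := by
  have := Fintype.ofFinite (Sylow p H)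
  have : Nontrivial (Sylow p H) := Finite.one_lt_card_iff_nontrivial.1 <|
    (by lia : 1 < 5).trans_le (five_le_card_sylow hp)
  rw [Nat.card_eq_fintype_card (α := Sylow p H), ← Fintype.card_perm, ← Nat.card_eq_fintype_card,
    ← two_mul_nat_card_alternatingGroup]
  exact mul_dvd_mul_left 2 (card_dvd_of_injective _ (toAlternatingHom_sylow_injective hp))

lemma dvd_card_sylow_of_card_sylow_eq [Fact q.Prime] (hq : q ∣ Nat.card H)
    (h : Nat.card (Sylow q H) = p) : q ∣ Nat.card (Sylow p H) := by
  have hp : p ∣ Nat.card H := h ▸ card_sylow_dvd_card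
  by_contra hndvd
  obtain ⟨Q⟩ := Sylow.nonempty (p := q) (G := H)
  obtain ⟨P, hP⟩ := Q.2.nonempty_fixed_point_of_prime_not_dvd_card (Sylow p H) hndvd
  rw [sylow_mem_fixedPoints_iff] at hP
  obtain ⟨R, hR⟩ : ∃ R, R ∉ fixedPoints P (Sylow q H) := by
    by_contra! hfix
    refine P.ne_bot_of_dvd_card hp (eq_bot_iff.2 ?_)
    rw [← ker_toPermHom_sylow_eq_bot hq]
    exact fun x hx => MonoidHom.mem_ker.2 (Equiv.ext fun R => hfix R ⟨x, hx⟩)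
  have horbit := orbit_eq_univ_of_isPGroup P.2 h hR
  have hle (S : Sylow q H) : (S : Subgroup H) ≤ normalizer (P : Set H) := by
    obtain ⟨x, rfl⟩ : S ∈ orbit P Q := by
      rw [orbit_eq_iff.2 (horbit ▸ Set.mem_univ Q), horbit]
      trivial
    exact Sylow.smul_le hP ⟨x, le_normalizer x.2⟩
  have htop := (IsCharacteristicallySimple.eq_bot_or_eq_top_of_characteristic _
    (characteristic_iSup_sylow q)).resolve_left fun hbot =>
      Q.ne_bot_of_dvd_card hq (eq_bot_iff.2 (hbot ▸ le_iSup (fun S : Sylow q H => S.1) Q))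
  exact normalizer_sylow_ne_top hp P (eq_top_iff.2 (htop ▸ iSup_le hle))

lemma three_dvd_or_five_dvd_card (htwo : 2 ∣ Nat.card H) (hn : Nat.card (Sylow 2 H) = 7)
    (hn' : Nat.card (Sylow 7 H) = 8) : 3 ∣ Nat.card H ∨ 5 ∣ Nat.card H := by
  by_contra! hndvd
  have : Fact (Nat.Prime 7) := ⟨by norm_num⟩
  have hdvd : Nat.card H ∣ 8 * 7 := by
    have hfact := two_mul_card_dvd_factorial_card_sylow htwo
    have hcop (r) (hr : r.Prime) (h : ¬ r ∣ Nat.card H) : (Nat.card H).Coprime r :=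
      ((Nat.Prime.coprime_iff_not_dvd hr).2 h).symm
    have hthree := hcop 3 (by norm_num) hndvd.1
    have hfive := hcop 5 (by norm_num) hndvd.2
    rw [hn, show Nat.factorial 7 = 2 * (8 * 7 * (3 * 3 * 5)) from rfl,
      mul_dvd_mul_iff_left two_ne_zero] at hfact
    exact ((hthree.mul_right hthree).mul_right hfive).dvd_of_dvd_mul_right hfact
  obtain ⟨P⟩ := Sylow.nonempty (p := 7) (G := H)
  have hP : (P : Subgroup H) ≠ ⊥ := P.ne_bot_of_dvd_card (hn ▸ card_sylow_dvd_card)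
  have hcardN : Nat.card (normalizer (P : Set H)) ∣ 7 := by
    rwa [← (normalizer (P : Set H)).index_mul_card, ← P.card_eq_index_normalizer, hn',
      mul_dvd_mul_iff_left (by norm_num)] at hdvd
  have hcardP : Nat.card P = 7 :=
    ((Nat.dvd_prime Fact.out).1 ((card_dvd_of_le le_normalizer).trans hcardN)).resolve_left
      fun h => hP (card_eq_one.1 h)
  have := (isCyclic_of_prime_card hcardP).isMulCommutative
  refine normalizer_sylow_ne_self P hP (eq_of_le_of_card_ge le_normalizer ?_).symm
  exact (Nat.le_of_dvd (by norm_num) hcardN).trans_eq hcardP.symm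

omit [Fact p.Prime]

lemma prime_and_card_sylow_of_card_sylow_lt_ten
    (hlt : ∀ p, p.Prime → p ∣ Nat.card H → Nat.card (Sylow p H) < 10) (hp : p.Prime)
    (hdvd : p ∣ Nat.card H) :
    (p = 2 ∧ Nat.card (Sylow p H) = 7) ∨ (p = 7 ∧ Nat.card (Sylow p H) = 8) := by
  have hbounds (q) (hq : q.Prime) (hdvd : q ∣ Nat.card H) :
      5 ≤ Nat.card (Sylow q H) ∧ Nat.card (Sylow q H) < 10 ∧
        Nat.card (Sylow q H) % q = 1 % q ∧ Nat.card (Sylow q H) ∣ Nat.card H := by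
    have : Fact q.Prime := ⟨hq⟩
    exact ⟨five_le_card_sylow hdvd, hlt q hq hdvd, card_sylow_modEq_one q H, card_sylow_dvd_card⟩
  have hthree : ¬3 ∣ Nat.card H := fun h => by
    obtain ⟨hge, hle, hmod, hdvd⟩ := hbounds 3 (by norm_num) h
    have hn : Nat.card (Sylow 3 H) = 7 := by lia
    have : Fact (Nat.Prime 7) := ⟨by norm_num⟩
    have hdvd' : 3 ∣ Nat.card (Sylow 7 H) := dvd_card_sylow_of_card_sylow_eq h hn
    have := hbounds 7 (by norm_num) (hn ▸ hdvd)
    lia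
  have hfive : ¬5 ∣ Nat.card H := fun h => by
    obtain ⟨hge, hle, hmod, hdvd⟩ := hbounds 5 (by norm_num) h
    have hn : Nat.card (Sylow 5 H) = 6 := by lia
    exact hthree ((by norm_num : 3 ∣ 6).trans (hn ▸ hdvd))
  obtain ⟨hge, hle, hmod, hndvd⟩ := hbounds p hp hdvd
  have hp8 : p ≤ 8 :=
    (Nat.le_of_dvd (by lia) ((Nat.modEq_iff_dvd' (by lia)).1 hmod.symm)).trans (by lia)
  have hne5 : Nat.card (Sylow p H) ≠ 5 := fun hn => hfive (hn ▸ hndvd)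
  have hne9 : Nat.card (Sylow p H) ≠ 9 := fun hn =>
    hthree ((by norm_num : 3 ∣ 9).trans (hn ▸ hndvd))
  have hp2357 : p = 2 ∨ p = 3 ∨ p = 5 ∨ p = 7 := by
    interval_cases p <;> first | lia | (exfalso; revert hp; decide)
  obtain rfl | rfl | rfl | rfl := hp2357
  · lia
  · exact absurd hdvd hthree
  · exact absurd hdvd hfive
  · lia

theorem exists_ten_le_card_sylow (H : Type*) [Group H] [Finite H] [IsPerfect H]
    [IsCharacteristicallySimple H] :
    ∃ p, p.Prime ∧ p ∣ Nat.card H ∧ 10 ≤ Nat.card (Sylow p H) := by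
  by_contra! hlt
  have hprime := fun p => prime_and_card_sylow_of_card_sylow_lt_ten (p := p) hlt
  have htwo : 2 ∣ Nat.card H → Nat.card (Sylow 2 H) = 7 := fun h => by
    simpa using hprime 2 Nat.prime_two h
  have hseven : 7 ∣ Nat.card H → Nat.card (Sylow 7 H) = 8 := fun h => by
    simpa using hprime 7 (by norm_num) h
  obtain ⟨p, hp, hdvd⟩ := Nat.exists_prime_and_dvd (Finite.one_lt_card (α := H)).ne'
  have : Fact (Nat.Prime 7) := ⟨by norm_num⟩
  obtain ⟨h2, h7⟩ : 2 ∣ Nat.card H ∧ 7 ∣ Nat.card H := by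
    obtain ⟨rfl, hn⟩ | ⟨rfl, hn⟩ := hprime p hp hdvd
    · exact ⟨hdvd, hn ▸ card_sylow_dvd_card⟩
    · exact ⟨(by norm_num : 2 ∣ 8).trans (hn ▸ card_sylow_dvd_card), hdvd⟩
  obtain h3 | h5 := three_dvd_or_five_dvd_card h2 (htwo h2) (hseven h7)
  · simpa using hprime 3 Nat.prime_three h3
  · simpa using hprime 5 Nat.prime_five h5

end Sylow

section Supplements

open Subgroup

variable {G : Type*} [Group G] {M : Subgroup G}

lemma isCharacteristicallySimple_of_minimal_normal [M.Normal] [Nontrivial M]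
    (hmin : ∀ K : Subgroup G, K.Normal → K ≤ M → K = ⊥ ∨ K = M) : IsCharacteristicallySimple M where
  eq_bot_or_eq_top_of_characteristic K _ := by
    obtain h | h := hmin _ (inferInstance : (K.map M.subtype).Normal) (map_subtype_le K)
    · exact .inl ((map_eq_bot_iff_of_injective _ M.subtype_injective).1 h)
    · refine .inr (map_injective M.subtype_injective ?_)
      rw [h, ← MonoidHom.range_eq_map, range_subtype]

variable [Finite G]

lemma index_subgroupOf_le_index (A M : Subgroup G) : (A.subgroupOf M).index ≤ A.index := by
  rw [← relIndex_top_right A]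
  refine relIndex_le_of_le_right le_top ?_
  rw [relIndex_top_right]
  exact index_ne_zero_of_finite

lemma card_sylow_le_index_normalizer_map_subtype {p : ℕ} [Fact p.Prime] (P : Sylow p M) :
    Nat.card (Sylow p M) ≤ (normalizer ((P : Subgroup M).map M.subtype : Set G)).index := by
  have hsub := subgroupOf_normalizer_eq (map_subtype_le (P : Subgroup M))
  rw [subgroupOf, subgroupOf, comap_map_eq_self_of_injective M.subtype_injective] at hsub
  exact P.card_eq_index_normalizer.trans_le
    ((congrArg index hsub.symm).trans_le (index_subgroupOf_le_index _ M))

lemma exists_sup_eq_top_and_inf_ne_bot_of_minimal_normal [M.Normal] [IsPerfect M] (hM : M ≠ ⊥)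
    (hmin : ∀ K : Subgroup G, K.Normal → K ≤ M → K = ⊥ ∨ K = M) :
    ∃ A : Subgroup G, A ⊔ M = ⊤ ∧ A ⊓ M ≠ ⊥ ∧ 10 ≤ A.index := by
  have : Nontrivial M := (nontrivial_iff_ne_bot M).2 hM
  have := isCharacteristicallySimple_of_minimal_normal hmin
  obtain ⟨p, hp, hdvd, hcard⟩ := exists_ten_le_card_sylow M
  have : Fact p.Prime := ⟨hp⟩
  obtain ⟨P⟩ := Sylow.nonempty (p := p) (G := M)
  refine ⟨normalizer ((P : Subgroup M).map M.subtype : Set G), P.normalizer_sup_eq_top,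
    fun hbot => ?_, hcard.trans (card_sylow_le_index_normalizer_map_subtype P)⟩
  refine P.ne_bot_of_dvd_card hdvd ((map_eq_bot_iff_of_injective _ M.subtype_injective).1 ?_)
  exact eq_bot_iff.2 (hbot ▸ le_inf le_normalizer (map_subtype_le _))

theorem exists_sup_eq_top_and_ten_le_index (N : Subgroup G) [N.Normal] [IsPerfect N] (hN : N ≠ ⊥) :
    ∃ U : Subgroup G, U ⊔ N = ⊤ ∧ 10 ≤ U.index ∧
      ∀ K : Subgroup G, K.Normal → U ⊓ N ≤ K → K ≤ N → K = N := by
  obtain ⟨L, ⟨hL, hLN⟩, hLmax⟩ := (Set.toFinite {K : Subgroup G | K.Normal ∧ K < N}).exists_maximal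
    ⟨⊥, inferInstance, bot_lt_iff_ne_bot.2 hN⟩
  have hlift (K : Subgroup G) (hK : K.Normal) (hLK : L ≤ K) (hKN : K ≤ N) : K ≤ L ∨ K = N :=
    or_iff_not_imp_right.2 fun hne => hLmax ⟨hK, hKN.lt_of_ne hne⟩ hLK
  let q := QuotientGroup.mk' L
  have hq : Function.Surjective q := QuotientGroup.mk'_surjective L
  have hker : q.ker = L := QuotientGroup.ker_mk' L
  have hmap (K : Subgroup G) : K.map q = ⊥ ↔ K ≤ L := by rw [Subgroup.map_eq_bot_iff, hker]
  have hcomap : (N.map q).comap q = N := comap_map_eq_self (hker.trans_le hLN.le)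
  have : (N.map q).Normal := Normal.map inferInstance q hq
  have : IsPerfect (N.map q) := IsPerfect.map q
  have hmin (K : Subgroup (G ⧸ L)) (hK : K.Normal) (hKN : K ≤ N.map q) : K = ⊥ ∨ K = N.map q := by
    rw [← map_comap_eq_self_of_surjective hq K, hmap]
    exact (hlift (K.comap q) inferInstance (hker.ge.trans (ker_le_comap q K))
      (hcomap ▸ comap_mono hKN)).imp_right (congrArg (map q))
  obtain ⟨A, hA, hAN, hindex⟩ :=
    exists_sup_eq_top_and_inf_ne_bot_of_minimal_normal (mt (hmap N).1 hLN.not_ge) hmin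
  have hinf : A.comap q ⊓ N = (A ⊓ N.map q).comap q := by rw [comap_inf, hcomap]
  refine ⟨A.comap q, ?_, (index_comap_of_surjective A hq).symm ▸ hindex, fun K hK hle hKN => ?_⟩
  · rw [← hcomap, comap_sup_eq _ _ _ hq, hA, comap_top]
  · rw [hinf] at hle
    have hLK : L ≤ K := (hker.ge.trans (ker_le_comap q _)).trans hle
    refine (hlift K hK hLK hKN).resolve_left fun hKL => hAN ?_
    rw [← map_comap_eq_self_of_surjective hq (A ⊓ N.map q), hmap]
    exact hle.trans hKL

end Supplements

section Solvability

lemma exists_normal_isPerfect_ne_bot {G : Type*} [Group G] [Finite G] (h : ¬Group.IsSolvable G) :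
    ∃ N : Subgroup G, N.Normal ∧ IsPerfect N ∧ N ≠ ⊥ := by
  obtain ⟨_, ⟨n, rfl⟩, hmin⟩ :=
    (Set.toFinite (Set.range (derivedSeries G))).exists_minimal (Set.range_nonempty _)
  refine ⟨derivedSeries G n, inferInstance, Subgroup.isPerfect_iff.2 ?_, fun hbot => h ⟨n, hbot⟩⟩
  have hle := derivedSeries_antitone (G := G) n.le_succ
  exact hle.antisymm (hmin ⟨n + 1, rfl⟩ hle)

variable {G : Type} [Group G]

lemma IsChar.kerContains {N : Subgroup G} {φ : G → ℂ} (hφ : IsChar φ)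
    (h : ∀ χ, IsIrrChar G χ → KerContains χ N) : KerContains φ N := by
  induction hφ using IsChar.induction_on with
  | zero => exact fun _ _ => rfl
  | add χ φ hχ _ ih => exact fun n hn => congrArg₂ (· + ·) (h χ hχ n hn) (ih n hn)

variable [Finite G]

lemma exists_isIrrChar_not_kerContains {N : Subgroup G} (hN : N ≠ ⊥) :
    ∃ χ, IsIrrChar G χ ∧ ¬KerContains χ N := by
  by_contra! h
  obtain ⟨n, hn, hn1⟩ := N.bot_or_exists_ne_one.resolve_left hN
  have hreg := isChar_single_one.kerContains h n hn
  rw [Pi.single_eq_of_ne hn1, Pi.single_eq_same] at hreg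
  exact natCard_cast_ne_zero G hreg.symm

theorem nonlinearIrrChars_nonempty_of_not_isSolvable (h : ¬Group.IsSolvable G) :
    (nonlinearIrrChars G).Nonempty := by
  obtain ⟨N, hnormal, hperf, hN⟩ := exists_normal_isPerfect_ne_bot h
  obtain ⟨χ, hχ, hker⟩ := exists_isIrrChar_not_kerContains hN
  exact ⟨χ, mem_nonlinearIrrChars.2 ⟨hχ, hχ.degree_ne_one_of_not_kerContains hker⟩⟩

theorem sum_degreeExcess_nonneg_of_not_isSolvable (h : ¬Group.IsSolvable G) :
    0 ≤ ∑ χ ∈ nonlinearIrrChars G, degreeExcess χ := by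
  obtain ⟨N, hnormal, hperf, hN⟩ := exists_normal_isPerfect_ne_bot h
  by_cases hdeg : ∃ χ, IsIrrChar G χ ∧ ¬KerContains χ N ∧ (χ 1 = 2 ∨ χ 1 = 3)
  · obtain ⟨χ, hχ, hker, hdeg⟩ := hdeg
    exact sum_degreeExcess_nonneg_of_degree_eq_two_or_three hχ hker hdeg
  · push Not at hdeg
    obtain ⟨U, hUN, hindex, hmax⟩ := exists_sup_eq_top_and_ten_le_index N hN
    exact sum_degreeExcess_nonneg_of_ten_le_index hUN hindex hmax hdeg

lemma mem_nonlinearIrrChars_iff_one_lt_re {χ : G → ℂ} :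
    χ ∈ nonlinearIrrChars G ↔ IsIrrChar G χ ∧ 1 < (χ 1).re := by
  rw [mem_nonlinearIrrChars]
  refine and_congr_right fun hχ => ⟨fun h => ?_, fun h h1 => ?_⟩
  · linarith [hχ.two_le_re_degree h]
  · simp [h1] at h

end Solvability

/-- If `G` is a finite non-abelian group with `acd*(G) < 29/8` (the average degree of the
non-linear irreducible complex characters), then `G` is solvable. -/
theorem stmt9 (G : Type) [Group G] [Fintype G]
    (hnonab : ¬ ∀ a b : G, a * b = b * a)
    (S : Finset (G → ℂ))
    (hS : ∀ χ : G → ℂ, χ ∈ S ↔ (IsIrrChar G χ ∧ 1 < (χ 1).re))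
    (havg : (∑ χ ∈ S, (χ 1).re) / S.card < 29 / 8) :
    IsSolvable G := by
  by_contra hns
  obtain rfl : S = nonlinearIrrChars G :=
    Finset.ext fun χ => (hS χ).trans mem_nonlinearIrrChars_iff_one_lt_re.symm
  have hnonneg := sum_degreeExcess_nonneg_of_not_isSolvable hns
  have hcard : (0 : ℝ) < (nonlinearIrrChars G).card :=
    Nat.cast_pos.2 (nonlinearIrrChars_nonempty_of_not_isSolvable hns).card_pos
  simp only [degreeExcess, Finset.sum_sub_distrib, ← Finset.mul_sum, Finset.sum_const,
    nsmul_eq_mul] at hnonneg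
  rw [div_lt_iff₀ hcard] at havg
  linarith
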